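/- arXiv:0810.1195 — 2 statements merged into one kernel-verified Lean document; each statement's English description precedes it below -/
import Mathlib

section
/- Let E′ > 0 and let φ be a Schwartz function on ℝ. Suppose that for each degeneracy sign s ∈ {+,−} the function G_s(𝓔) := ∫_ℝ conj(χ^𝓔_s(q)) φ(q) dq, defined for real 𝓔, is a Schwartz function on ℝ and admits an extension that is continuous on the closed lower half-plane {Im 𝓔 ≤ 0}, holomorphic on the open lower half-plane {Im 𝓔 < 0}, and lies in the Hardy class from below, i.e. sup_{y<0} ∫_ℝ |G_s(u + iy)|² du < ∞. Then φ admits the discrete resonance expansion φ(q) = Σ_{n=0}^∞ (∫_ℝ conj(f_n^+(q′)) φ(q′) dq′) · f_n^−(q) for every q ∈ ℝ, the series converging pointwise. -/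
open MeasureTheory Filter Complex

/-- Physicists' Hermite polynomials. -/
noncomputable def hermitePoly : ℕ → ℂ → ℂ
  | 0, _ => 1
  | 1, y => 2 * y
  | (n + 2), y => 2 * y * hermitePoly (n + 1) y - 2 * (n + 1) * hermitePoly n y

/-- The generalized (resonance) eigenfunctions `f_n^±` (sign `s = ±1`). -/
noncomputable def fres (E' s : ℝ) (n : ℕ) (q : ℝ) : ℂ :=
  (((E' / Real.pi) ^ ((1 : ℝ) / 4) : ℝ) : ℂ) *
    (((Real.sqrt (2 ^ n * n.factorial) : ℝ) : ℂ))⁻¹ *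
    Complex.exp ((s : ℂ) * Complex.I * (Real.pi : ℂ) / 8) *
    Complex.exp (-(s : ℂ) * Complex.I * ((E' / 2 : ℝ) : ℂ) * (q : ℂ) ^ 2) *
    hermitePoly n (Complex.exp ((s : ℂ) * Complex.I * (Real.pi : ℂ) / 4) *
      ((Real.sqrt E' : ℝ) : ℂ) * (q : ℂ))

/-- The parameter `ν := −i𝓔/E′ − ½`. -/
noncomputable def nuOf (E' e : ℝ) : ℂ := -Complex.I * (e : ℂ) / (E' : ℂ) - 1 / 2

/-- The generalized continuum eigenfunctions `χ^𝓔_±` of the inverted harmonic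
oscillator (degeneracy sign `sgn = ±1`):
`χ^𝓔_±(q) = (E′/2π²)^{1/4} (2πE′)^{−1/2} e^{iπ(2ν+1)/8} e^{iE′q²/2}
∫₀^∞ exp(± e^{−iπ/4} √(2E′) q u − u²/2) u^ν du`. -/
noncomputable def chiE (E' sgn e : ℝ) (q : ℝ) : ℂ :=
  (((E' / (2 * Real.pi ^ 2)) ^ ((1 : ℝ) / 4) : ℝ) : ℂ) *
    ((((Real.sqrt (2 * Real.pi * E'))⁻¹ : ℝ)) : ℂ) *
    Complex.exp (Complex.I * (Real.pi : ℂ) * (2 * nuOf E' e + 1) / 8) *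
    Complex.exp (Complex.I * (E' : ℂ) * (q : ℂ) ^ 2 / 2) *
    ∫ u in Set.Ioi (0 : ℝ),
      Complex.exp ((sgn : ℂ) * Complex.exp (-Complex.I * (Real.pi : ℂ) / 4) *
          ((Real.sqrt (2 * E') : ℝ) : ℂ) * (q : ℂ) * (u : ℂ) - (u : ℂ) ^ 2 / 2) *
        (u : ℂ) ^ (nuOf E' e)


section partOne

lemma hermite_hasDerivAt (n : ℕ) : ∀ y : ℂ, HasDerivAt (hermitePoly n)
    (2 * y * hermitePoly n y - hermitePoly (n + 1) y) y := by
  induction n using Nat.twoStepInduction with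
  | zero =>
    intro y
    have : hermitePoly 0 = fun _ => 1 := by ext; simp [hermitePoly]
    rw [this]
    refine (hasDerivAt_const y (1 : ℂ)).congr_deriv ?_
    simp [hermitePoly]
  | one =>
    intro y
    have : hermitePoly 1 = fun y => 2 * y := by ext; simp [hermitePoly]
    have h := (hasDerivAt_id y).const_mul (2 : ℂ)
    rw [this]
    refine h.congr_deriv ?_
    simp [hermitePoly]
  | more n ih1 ih2 =>
    intro y
    have e : hermitePoly (n + 2) = fun y => 2 * y * hermitePoly (n + 1) y
        - 2 * (n + 1) * hermitePoly n y := by ext; simp [hermitePoly]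
    have h := (((hasDerivAt_id y).const_mul (2 : ℂ)).mul (ih2 y)).sub
      ((ih1 y).const_mul (2 * ((n : ℂ) + 1)))
    have e3 : hermitePoly (n + 2 + 1) y = 2 * y * hermitePoly (n + 2) y
        - 2 * ((n + 1 : ℕ) + 1) * hermitePoly (n + 1) y := by
      rw [hermitePoly]
    have e2 : hermitePoly (n + 2) y = 2 * y * hermitePoly (n + 1) y
        - 2 * (n + 1) * hermitePoly n y := by rw [hermitePoly]
    rw [e]
    refine h.congr_deriv ?_
    simp only [id]
    rw [e3, show n + 1 + 1 = n + 2 from rfl, e2]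
    push_cast
    ring

lemma hermite_continuous (n : ℕ) : Continuous (hermitePoly n) :=
  continuous_iff_continuousAt.2 fun y => (hermite_hasDerivAt n y).continuousAt

lemma gen_iteratedDeriv (x : ℂ) (n : ℕ) :
    iteratedDeriv n (fun w : ℂ => Complex.exp (2 * x * w - w ^ 2)) =
      fun w => hermitePoly n (x - w) * Complex.exp (2 * x * w - w ^ 2) := by
  induction n with
  | zero => ext w; simp [hermitePoly]
  | succ n ih =>
    rw [iteratedDeriv_succ, ih]
    ext w
    have h1 : HasDerivAt (fun w : ℂ => x - w) (-1) w := by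
      simpa using (hasDerivAt_id w).const_sub x
    have h2 := (hermite_hasDerivAt n (x - w)).comp w h1
    have h3 : HasDerivAt (fun w : ℂ => Complex.exp (2 * x * w - w ^ 2))
        (Complex.exp (2 * x * w - w ^ 2) * (2 * x - 2 * w)) w := by
      apply HasDerivAt.cexp
      have := ((hasDerivAt_id w).const_mul (2 * x)).sub ((hasDerivAt_id w).pow 2)
      refine this.congr_deriv ?_
      simp
    have h4 := h2.mul h3
    have := h4.deriv
    simp only [Function.comp_def] at this
    refine Eq.trans ?_ (this.trans ?_)
    · rfl
    · ring

lemma gen_hasSum (x z : ℂ) :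
    HasSum (fun n : ℕ => hermitePoly n x * z ^ n / (n.factorial : ℂ))
      (Complex.exp (2 * x * z - z ^ 2)) := by
  have hd : Differentiable ℂ (fun w : ℂ => Complex.exp (2 * x * w - w ^ 2)) := by fun_prop
  have := Complex.hasSum_taylorSeries_of_entire hd 0 z
  have e : (fun n : ℕ => hermitePoly n x * z ^ n / (n.factorial : ℂ)) = fun n : ℕ =>
      ((n.factorial : ℂ))⁻¹ • (z - 0) ^ n •
        iteratedDeriv n (fun w : ℂ => Complex.exp (2 * x * w - w ^ 2)) 0 := by
    ext n
    rw [gen_iteratedDeriv]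
    simp
    field_simp
  rw [e]
  exact this

lemma chirp_temperate (c : ℝ) :
    Function.HasTemperateGrowth (fun q : ℝ => Complex.exp (Complex.I * c * (q : ℂ) ^ 2)) := by
  have hd : ∀ n, iteratedDeriv n (fun x : ℝ => Complex.exp (Complex.I * (x : ℂ)))
      = fun x : ℝ => Complex.I ^ n * Complex.exp (Complex.I * (x : ℂ)) := by
    intro n
    induction n with
    | zero => ext; simp
    | succ n ih =>
      rw [iteratedDeriv_succ, ih]
      ext x
      have h : HasDerivAt (fun x : ℝ => Complex.I ^ n * Complex.exp (Complex.I * (x : ℂ)))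
          (Complex.I ^ n * (Complex.exp (Complex.I * (x : ℂ)) * Complex.I)) x := by
        apply HasDerivAt.const_mul
        apply HasDerivAt.cexp
        simpa using (Complex.ofRealCLM.hasDerivAt (x := x)).const_mul Complex.I
      rw [h.deriv]; ring
  have h1 : Function.HasTemperateGrowth (fun x : ℝ => Complex.exp (Complex.I * (x : ℂ))) := by
    refine ⟨(contDiff_const.mul Complex.ofRealCLM.contDiff).cexp, fun n => ⟨0, 1, fun x => ?_⟩⟩
    rw [norm_iteratedFDeriv_eq_norm_iteratedDeriv, hd]
    simp [Complex.norm_exp]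
  have h2 : Function.HasTemperateGrowth (fun q : ℝ => c * q ^ 2) :=
    (Function.HasTemperateGrowth.const c).mul (Function.HasTemperateGrowth.id'.pow 2)
  have := h1.comp h2
  convert this using 1
  ext q
  simp [mul_assoc]

end partOne

section partTwo

lemma zero_of_real_zero (D : ℂ → ℂ) (hc : ContinuousOn D {z : ℂ | z.im ≤ 0})
    (hd : DifferentiableOn ℂ D {z : ℂ | z.im < 0}) (h0 : ∀ x : ℝ, D (x : ℂ) = 0) :
    ∀ z : ℂ, z.im < 0 → D z = 0 := by
  intro z hz
  have h0' : ∀ w : ℂ, w.im = 0 → D w = 0 := by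
    intro w hw
    have : w = ((w.re : ℝ) : ℂ) := by apply Complex.ext <;> simp [hw]
    rw [this]; exact h0 _
  set r := -z.im with hr
  have hrpos : 0 < r := by linarith
  let U : Set ℂ := {w | |w.re| < r ∧ |w.im| < r}
  have hUo : IsOpen U :=
    (isOpen_lt Complex.continuous_re.abs continuous_const).inter
      (isOpen_lt Complex.continuous_im.abs continuous_const)
  let K : Set ℂ := {w | |w.re| ≤ r ∧ |w.im| ≤ r}
  have hKc : IsClosed K :=
    (isClosed_le Complex.continuous_re.abs continuous_const).inter
      (isClosed_le Complex.continuous_im.abs continuous_const)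
  have hUK : U ⊆ K := fun w hw => ⟨hw.1.le, hw.2.le⟩
  have hcl : closure U ⊆ K := hKc.closure_subset_iff.2 hUK
  have hbd : Bornology.IsBounded U := by
    refine (Metric.isBounded_closedBall (x := (0 : ℂ)) (r := r + r)).subset fun w hw => ?_
    simp only [Metric.mem_closedBall, dist_zero_right]
    exact (Complex.norm_le_abs_re_add_abs_im w).trans (add_le_add hw.1.le hw.2.le)
  let P : ℂ → ℂ := fun w => D (z + w) * D (z + Complex.I * w) * D (z - w) * D (z - Complex.I * w)
  have hP : DiffContOnCl ℂ P U := by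
    constructor
    · refine ((DifferentiableOn.mul ?_ ?_).mul ?_).mul ?_
      all_goals
        refine hd.comp (by fun_prop) fun w hw => ?_
        have h1 := abs_lt.1 hw.1
        have h2 := abs_lt.1 hw.2
        simp
        linarith
    · refine ((ContinuousOn.mul ?_ ?_).mul ?_).mul ?_
      all_goals
        refine hc.comp (by fun_prop) fun w hw => ?_
        have h1 := abs_le.1 (hcl hw).1
        have h2 := abs_le.1 (hcl hw).2
        simp
        linarith
  have hfr : ∀ w ∈ frontier U, ‖P w‖ ≤ 0 := by
    intro w hw
    have hwK := hcl (frontier_subset_closure hw)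
    have hwU : w ∉ U := by
      rw [hUo.frontier_eq] at hw; exact hw.2
    have h1 := abs_le.1 hwK.1
    have h2 := abs_le.1 hwK.2
    have : P w = 0 := by
      have : |w.re| = r ∨ |w.im| = r := by
        by_contra hcon
        push Not at hcon
        exact hwU ⟨lt_of_le_of_ne hwK.1 hcon.1, lt_of_le_of_ne hwK.2 hcon.2⟩
      simp only [P]
      rcases this with h | h
      · rcases (abs_eq hrpos.le).1 h with h | h
        · rw [h0' (z + Complex.I * w) (by simp [h, hr])]; simp
        · rw [h0' (z - Complex.I * w) (by simp [h, hr])]; simp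
      · rcases (abs_eq hrpos.le).1 h with h | h
        · rw [h0' (z + w) (by simp [h, hr])]; simp
        · rw [h0' (z - w) (by simp [h, hr])]; simp
    simp [this]
  have h := Complex.norm_le_of_forall_mem_frontier_norm_le hbd hP hfr
    (subset_closure (show (0 : ℂ) ∈ U from ⟨by simpa using hrpos, by simpa using hrpos⟩))
  have : P 0 = 0 := norm_le_zero_iff.1 h
  simpa [P] using this

end partTwo

section partThree

/-- Continuous functions with rapid decay at `+∞`. -/
def RapidAtTop (f : ℝ → ℂ) : Prop :=
  Continuous f ∧ ∀ a : ℝ, 0 < a → f =O[atTop] (fun t : ℝ => t ^ (-a))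

lemma RapidAtTop.schwartz (g : SchwartzMap ℝ ℂ) : RapidAtTop g := by
  refine ⟨g.continuous, fun a _ => ?_⟩
  have h := (g.isBigO_cocompact_rpow (-a)).mono atTop_le_cocompact
  refine h.congr' EventuallyEq.rfl ?_
  filter_upwards [eventually_ge_atTop 0] with t ht
  rw [Real.norm_of_nonneg ht]

lemma RapidAtTop.isBigO_zero {f : ℝ → ℂ} (hf : RapidAtTop f) :
    f =O[nhdsWithin 0 (Set.Ioi 0)] (fun t : ℝ => t ^ (-(0:ℝ))) := by
  simp only [neg_zero, Real.rpow_zero]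
  exact (hf.1.continuousAt.tendsto.isBigO_one ℝ).mono nhdsWithin_le_nhds

lemma RapidAtTop.mellinConvergent {f : ℝ → ℂ} (hf : RapidAtTop f) {s : ℂ} (hs : 0 < s.re) :
    MellinConvergent f s :=
  mellinConvergent_of_isBigO_rpow (a := s.re + 1) (b := 0)
    (hf.1.locallyIntegrable.locallyIntegrableOn _)
    (hf.2 _ (by linarith)) (by linarith) hf.isBigO_zero hs

lemma RapidAtTop.mellin_differentiableAt {f : ℝ → ℂ} (hf : RapidAtTop f) {s : ℂ}
    (hs : 0 < s.re) : DifferentiableAt ℂ (mellin f) s :=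
  mellin_differentiableAt_of_isBigO_rpow (a := s.re + 1) (b := 0)
    (hf.1.locallyIntegrable.locallyIntegrableOn _)
    (hf.2 _ (by linarith)) (by linarith) hf.isBigO_zero hs

lemma RapidAtTop.mellin_deriv {f f' : ℝ → ℂ} (hf : RapidAtTop f) (hf' : RapidAtTop f')
    (hd : ∀ t, HasDerivAt f (f' t) t) {s : ℂ} (hs : 0 < s.re) :
    mellin f' (s + 1) = - s * mellin f s := by
  have hs0 : s ≠ 0 := by rintro rfl; simp at hs
  have c1 := hf.mellinConvergent hs
  have c2 := hf'.mellinConvergent (s := s + 1) (by simp; linarith)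
  unfold MellinConvergent at c1 c2
  have key := integral_Ioi_of_hasDerivAt_of_tendsto (a := 0) (m := 0)
    (f := fun t : ℝ => (t : ℂ) ^ s * f t)
    (f' := fun t : ℝ => s * ((t : ℂ) ^ (s - 1) • f t) + (t : ℂ) ^ (s + 1 - 1) • f' t)
    ?_ ?_ ?_ ?_
  · rw [integral_add (c1.const_mul s) c2, integral_const_mul] at key
    simp only [mellin]
    simp [hs0] at key ⊢
    linear_combination key
  · refine ContinuousAt.continuousWithinAt ?_
    refine ContinuousAt.mul ?_ hf.1.continuousAt
    exact Complex.continuousAt_ofReal_cpow_const 0 s (Or.inl hs)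
  · intro x hx
    have h1 : HasDerivAt (fun t : ℝ => (t : ℂ) ^ s) (s * (x : ℂ) ^ (s - 1)) x := by
      have := (hasDerivAt_id (x : ℂ)).cpow_const (c := s)
        (by simpa using hx)
      simpa using this.comp_ofReal
    refine (h1.mul (hd x)).congr_deriv ?_
    simp
    ring
  · exact (c1.const_mul s).add c2
  · have hb := (hf.2 (s.re + 1) (by linarith))
    have hb2 : (fun t : ℝ => (t : ℂ) ^ s) =O[atTop] (fun t : ℝ => t ^ s.re) := by
      refine Asymptotics.IsBigO.of_bound 1 ?_
      filter_upwards [eventually_gt_atTop 0] with t ht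
      rw [Complex.norm_cpow_eq_rpow_re_of_pos ht, Real.norm_of_nonneg (by positivity), one_mul]
    refine (hb2.mul hb).trans_tendsto ?_
    have : Tendsto (fun t : ℝ => t ^ (-(1:ℝ))) atTop (nhds 0) := tendsto_rpow_neg_atTop one_pos
    refine this.congr' ?_
    filter_upwards [eventually_gt_atTop 0] with t ht
    rw [← Real.rpow_add ht]
    congr 1; ring

lemma RapidAtTop.norm_mellin_le {f : ℝ → ℂ} (σ τ : ℝ) :
    ‖mellin f ((σ : ℂ) + τ * Complex.I)‖ ≤ ∫ t in Set.Ioi (0:ℝ), t ^ (σ - 1) * ‖f t‖ := by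
  refine (norm_integral_le_integral_norm _).trans_eq ?_
  refine setIntegral_congr_fun measurableSet_Ioi fun t ht => ?_
  simp only [norm_smul]
  rw [Complex.norm_cpow_eq_rpow_re_of_pos ht]
  simp

lemma RapidAtTop.continuous_mellin_vertical {f : ℝ → ℂ} (hf : RapidAtTop f) {σ : ℝ} (hσ : 0 < σ) :
    Continuous (fun τ : ℝ => mellin f ((σ : ℂ) + τ * Complex.I)) := by
  refine continuous_iff_continuousAt.2 fun τ => ?_
  have h1 : ContinuousAt (mellin f) ((σ : ℂ) + τ * Complex.I) :=
    (hf.mellin_differentiableAt (by simpa using hσ)).continuousAt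
  exact ContinuousAt.comp (f := fun τ : ℝ => (σ : ℂ) + τ * Complex.I) h1 (by fun_prop)

lemma inv_normSq_le {σ : ℝ} (hσ : 1 ≤ σ) (τ : ℝ) :
    (‖(σ : ℂ) + τ * Complex.I‖ ^ 2)⁻¹ ≤ (1 + τ ^ 2)⁻¹ := by
  have : ‖(σ : ℂ) + τ * Complex.I‖ ^ 2 = σ ^ 2 + τ ^ 2 := by
    rw [Complex.sq_norm, Complex.normSq_add_mul_I]
  rw [this]
  gcongr
  nlinarith

lemma mellin_sq_integrable (g : SchwartzMap ℝ ℂ) {σ : ℝ} (hσ : 1 ≤ σ) :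
    Integrable (fun τ : ℝ => ‖mellin g ((σ : ℂ) + τ * Complex.I)‖ ^ 2) := by
  have hg := RapidAtTop.schwartz g
  have hg' := RapidAtTop.schwartz (SchwartzMap.derivCLM ℝ ℂ g)
  set K := ∫ t in Set.Ioi (0:ℝ), t ^ ((σ + 1) - 1) * ‖SchwartzMap.derivCLM ℝ ℂ g t‖ with hK
  refine (integrable_inv_one_add_sq.const_mul (K ^ 2)).mono'
    ((hg.continuous_mellin_vertical (by linarith)).norm.pow 2).aestronglyMeasurable ?_
  refine Eventually.of_forall fun τ => ?_
  set s : ℂ := (σ : ℂ) + τ * Complex.I with hs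
  have hre : s.re = σ := by simp [hs]
  have hs0 : s ≠ 0 := by intro h; rw [h] at hre; simp at hre; linarith
  have h := hg.mellin_deriv hg' (fun t => g.hasDerivAt t) (s := s) (by rw [hre]; linarith)
  have hb := RapidAtTop.norm_mellin_le (f := SchwartzMap.derivCLM ℝ ℂ g) (σ + 1) τ
  rw [← hK, show (((σ + 1 : ℝ) : ℂ) + τ * Complex.I) = s + 1 by rw [hs]; push_cast; ring, h] at hb
  rw [norm_mul, norm_neg] at hb
  have hpos : 0 < ‖s‖ := norm_pos_iff.2 hs0
  have h2 : ‖mellin g s‖ ≤ K * ‖s‖⁻¹ := by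
    rw [← div_eq_mul_inv, le_div_iff₀ hpos]; linarith
  rw [Real.norm_of_nonneg (by positivity)]
  calc ‖mellin g s‖ ^ 2 ≤ (K * ‖s‖⁻¹) ^ 2 := by gcongr
    _ = K ^ 2 * (‖s‖ ^ 2)⁻¹ := by rw [mul_pow, inv_pow]
    _ ≤ K ^ 2 * (1 + τ ^ 2)⁻¹ := by
      gcongr ?_ * ?_
      exact inv_normSq_le hσ τ

lemma tail_hasDerivAt (g : SchwartzMap ℝ ℂ) (t : ℝ) :
    HasDerivAt (fun t => ∫ x in Set.Ioi t, g x) (-g t) t := by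
  have e : (fun t => ∫ x in Set.Ioi t, g x) =
      fun t => (∫ x in Set.Ioi 0, g x) - ∫ x in (0:ℝ)..t, g x := by
    ext t
    rw [← intervalIntegral.integral_Ioi_sub_Ioi' (a := 0) (b := t) g.integrable.integrableOn
      g.integrable.integrableOn]
    ring
  rw [e]
  have := intervalIntegral.integral_hasDerivAt_right (a := 0) (b := t)
    (g.integrable.intervalIntegrable) (g.continuous.stronglyMeasurableAtFilter _ _)
    g.continuous.continuousAt
  simpa using this.const_sub (∫ x in Set.Ioi 0, g x)

lemma tail_rapid (g : SchwartzMap ℝ ℂ) : RapidAtTop (fun t => ∫ x in Set.Ioi t, g x) := by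
  refine ⟨continuous_iff_continuousAt.2 fun t => (tail_hasDerivAt g t).continuousAt, ?_⟩
  intro a ha
  obtain ⟨C, hC⟩ := ((RapidAtTop.schwartz g).2 (a + 1) (by linarith)).bound
  obtain ⟨T, hT⟩ := eventually_atTop.1 hC
  refine Asymptotics.IsBigO.of_bound (C / a) ?_
  filter_upwards [eventually_gt_atTop 0, eventually_ge_atTop T] with t ht htT
  have hi := (integrableOn_Ioi_rpow_of_lt (a := -(a + 1)) (by linarith) ht).const_mul C
  refine (norm_integral_le_of_norm_le hi ?_).trans_eq ?_
  · refine (ae_restrict_iff' measurableSet_Ioi).2 (Eventually.of_forall fun x hx => ?_)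
    have hx' : t < x := hx
    refine (hT x (by linarith)).trans_eq ?_
    rw [Real.norm_of_nonneg (Real.rpow_nonneg (by linarith) _)]
  · rw [integral_const_mul, integral_Ioi_rpow_of_lt (by linarith) ht,
      Real.norm_of_nonneg (Real.rpow_nonneg ht.le _)]
    rw [show -(a + 1) + 1 = -a by ring]
    field_simp

lemma support_of_mellin_bound (g : SchwartzMap ℝ ℂ) (C : ℝ)
    (hC : ∀ σ : ℝ, 2 ≤ σ → ∫ τ : ℝ, ‖mellin g ((σ : ℂ) + τ * Complex.I)‖ ^ 2 ≤ C) :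
    ∀ t : ℝ, 1 < t → g t = 0 := by
  set h : ℝ → ℂ := fun t => ∫ x in Set.Ioi t, g x with hh
  have hr : RapidAtTop h := tail_rapid g
  have hg := RapidAtTop.schwartz g
  have hgn : RapidAtTop (fun t => - g t) := ⟨hg.1.neg, fun a ha => (hg.2 a ha).neg_left⟩
  have hm : ∀ s : ℂ, 0 < s.re → mellin h s = mellin g (s + 1) / s := by
    intro s hs
    have hs0 : s ≠ 0 := by rintro rfl; simp at hs
    have e := hr.mellin_deriv hgn (tail_hasDerivAt g) hs
    have e2 : mellin (fun t => - g t) (s + 1) = - mellin g (s + 1) := by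
      simp [mellin, integral_neg]
    rw [e2] at e
    field_simp
    linear_combination e
  have hbound : ∀ σ : ℝ, 1 ≤ σ → ∀ τ : ℝ, ‖mellin h ((σ : ℂ) + τ * Complex.I)‖ ≤
      ‖mellin g (((σ + 1 : ℝ) : ℂ) + τ * Complex.I)‖ ^ 2 + (1 + τ ^ 2)⁻¹ := by
    intro σ hσ τ
    rw [hm _ (by simp; linarith)]
    rw [show (σ : ℂ) + τ * Complex.I + 1 = ((σ + 1 : ℝ) : ℂ) + τ * Complex.I by push_cast; ring]
    rw [norm_div]
    refine le_trans ?_ (add_le_add le_rfl (inv_normSq_le hσ τ))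
    rw [← inv_pow, div_eq_mul_inv]
    nlinarith [sq_nonneg (‖mellin g (((σ + 1 : ℝ) : ℂ) + τ * Complex.I)‖
      - ‖(σ : ℂ) + τ * Complex.I‖⁻¹),
      sq_nonneg (‖mellin g (((σ + 1 : ℝ) : ℂ) + τ * Complex.I)‖), sq_nonneg
      (‖(σ : ℂ) + τ * Complex.I‖⁻¹)]
  have hIntg : ∀ σ : ℝ, 1 ≤ σ → Integrable (fun τ : ℝ =>
      ‖mellin g (((σ + 1 : ℝ) : ℂ) + τ * Complex.I)‖ ^ 2 + (1 + τ ^ 2)⁻¹) := fun σ hσ =>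
    (mellin_sq_integrable g (by linarith)).add integrable_inv_one_add_sq
  have hV : ∀ σ : ℝ, 1 ≤ σ → VerticalIntegrable (mellin h) σ := by
    intro σ hσ
    exact (hIntg σ hσ).mono' (hr.continuous_mellin_vertical (by linarith)).aestronglyMeasurable
      (Eventually.of_forall (hbound σ hσ))
  have hfin : ∀ t : ℝ, 0 < t → ∀ σ : ℝ, 1 ≤ σ → ‖h t‖ ≤ t ^ (-σ) * (C + Real.pi) := by
    intro t ht σ hσ
    rw [← mellinInv_mellin_eq σ h ht (hr.mellinConvergent (by simp; linarith)) (hV σ hσ)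
      hr.1.continuousAt]
    unfold mellinInv
    rw [norm_smul]
    have h1 : ‖(1 / (2 * Real.pi) : ℝ)‖ ≤ 1 := by
      rw [Real.norm_of_nonneg (by positivity), div_le_one (by positivity)]
      nlinarith [Real.pi_gt_three]
    have h2 : ‖∫ y : ℝ, (t : ℂ) ^ (-((σ : ℂ) + y * Complex.I)) •
        mellin h ((σ : ℂ) + y * Complex.I)‖ ≤ t ^ (-σ) * (C + Real.pi) := by
      refine (norm_integral_le_of_norm_le ((hIntg σ hσ).const_mul (t ^ (-σ)))
        (Eventually.of_forall fun y => ?_)).trans ?_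
      · rw [norm_smul, Complex.norm_cpow_eq_rpow_re_of_pos ht]
        have : (-((σ : ℂ) + y * Complex.I)).re = -σ := by simp
        rw [this]
        gcongr
        exact hbound σ hσ y
      · rw [integral_const_mul, integral_add (mellin_sq_integrable g (by linarith))
          integrable_inv_one_add_sq, integral_univ_inv_one_add_sq]
        gcongr
        exact hC _ (by linarith)
    calc _ ≤ 1 * _ := mul_le_mul h1 h2 (norm_nonneg _) zero_le_one
      _ = _ := one_mul _
  have hz : ∀ t : ℝ, 1 < t → h t = 0 := by
    intro t ht
    have hl : Tendsto (fun σ : ℝ => t ^ (-σ) * (C + Real.pi)) atTop (nhds (0 * (C + Real.pi))) :=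
      ((tendsto_rpow_atBot_of_base_gt_one t ht).comp tendsto_neg_atTop_atBot).mul_const _
    rw [zero_mul] at hl
    have := ge_of_tendsto hl ((eventually_ge_atTop 1).mono (hfin t (by linarith)))
    exact norm_le_zero_iff.1 this
  intro t ht
  have h1 : HasDerivAt h (-g t) t := tail_hasDerivAt g t
  have h2 : HasDerivAt h 0 t := by
    refine (hasDerivAt_const t (0:ℂ)).congr_of_eventuallyEq ?_
    filter_upwards [lt_mem_nhds ht] with x hx using hz x hx
  have := h1.unique h2
  simpa using this

end partThree

section partFour

/-- The parabolic cylinder type integral. -/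
noncomputable def PhiI (S β a : ℂ) : ℂ :=
  ∫ u in Set.Ioi (0 : ℝ), Complex.exp (β * u - a * (u : ℂ) ^ 2 / 2) * (u : ℂ) ^ (S - 1)

lemma gauss_real_integrable (B c p : ℝ) (hc : 0 < c) (hp : 0 < p) :
    IntegrableOn (fun u : ℝ => Real.exp (B * u - c * u ^ 2 / 2) * u ^ (p - 1)) (Set.Ioi 0) := by
  have h := (integrableOn_rpow_mul_exp_neg_mul_sq (b := c / 4) (by linarith)
    (s := p - 1) (by linarith)).const_mul (Real.exp (B ^ 2 / c))
  refine h.mono' ?_ ?_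
  · refine ContinuousOn.aestronglyMeasurable ?_ measurableSet_Ioi
    refine ContinuousOn.mul (by fun_prop) ?_
    exact ContinuousOn.rpow_const continuousOn_id fun x hx => Or.inl (ne_of_gt hx)
  · refine (ae_restrict_iff' measurableSet_Ioi).2 (Eventually.of_forall fun u hu => ?_)
    have hu' : 0 < u := hu
    rw [Real.norm_of_nonneg (by positivity)]
    have : Real.exp (B * u - c * u ^ 2 / 2) ≤
        Real.exp (B ^ 2 / c) * Real.exp (-(c / 4) * u ^ 2) := by
      rw [← Real.exp_add]
      apply Real.exp_le_exp.2
      have : B ^ 2 / c + -(c / 4) * u ^ 2 - (B * u - c * u ^ 2 / 2)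
          = (B - c * u / 2) ^ 2 / c := by field_simp; ring
      have h2 : 0 ≤ (B - c * u / 2) ^ 2 / c := by positivity
      linarith
    calc _ ≤ (Real.exp (B ^ 2 / c) * Real.exp (-(c / 4) * u ^ 2)) * u ^ (p - 1) := by gcongr
      _ = _ := by ring

lemma gauss_norm (β a S : ℂ) {u : ℝ} (hu : 0 < u) :
    ‖Complex.exp (β * u - a * (u : ℂ) ^ 2 / 2) * (u : ℂ) ^ (S - 1)‖ =
      Real.exp (β.re * u - a.re * u ^ 2 / 2) * u ^ (S.re - 1) := by
  rw [norm_mul, Complex.norm_exp, Complex.norm_cpow_eq_rpow_re_of_pos hu]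
  have : (β * u - a * (u : ℂ) ^ 2 / 2).re = β.re * u - a.re * u ^ 2 / 2 := by
    have : a * (u : ℂ) ^ 2 / 2 = a * ((u ^ 2 / 2 : ℝ) : ℂ) := by push_cast; ring
    rw [this, Complex.sub_re, Complex.re_mul_ofReal, Complex.re_mul_ofReal]; ring
  rw [this]; simp

lemma gauss_meas (β a S : ℂ) : ContinuousOn
    (fun u : ℝ => Complex.exp (β * u - a * (u : ℂ) ^ 2 / 2) * (u : ℂ) ^ (S - 1)) (Set.Ioi 0) := by
  refine ContinuousOn.mul (by fun_prop) ?_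
  intro x hx
  exact (Complex.continuousAt_ofReal_cpow_const x (S - 1)
    (Or.inr (ne_of_gt hx))).continuousWithinAt

lemma gauss_integrable (β a S : ℂ) (ha : 0 < a.re) (hS : 0 < S.re) :
    IntegrableOn (fun u : ℝ => Complex.exp (β * u - a * (u : ℂ) ^ 2 / 2) * (u : ℂ) ^ (S - 1))
      (Set.Ioi 0) := by
  refine (gauss_real_integrable β.re a.re S.re ha hS).mono'
    ((gauss_meas β a S).aestronglyMeasurable measurableSet_Ioi) ?_
  exact (ae_restrict_iff' measurableSet_Ioi).2
    (Eventually.of_forall fun u hu => (gauss_norm β a S hu).le)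

lemma gauss_rapid (a : ℂ) (ha : 0 < a.re) :
    RapidAtTop (fun u : ℝ => Complex.exp (0 * u - a * (u : ℂ) ^ 2 / 2)) := by
  refine ⟨by fun_prop, fun p hp => ?_⟩
  have h := (cexp_neg_quadratic_isLittleO_rpow_atTop (a := -(a / 2)) (by simpa using ha) 0
    (-p)).isBigO
  refine h.congr_left fun u => ?_
  congr 1; ring

lemma gauss_rapid_mul (a : ℂ) (ha : 0 < a.re) :
    RapidAtTop (fun u : ℝ => -a * u * Complex.exp (0 * u - a * (u : ℂ) ^ 2 / 2)) := by
  refine ⟨by fun_prop, fun p hp => ?_⟩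
  have h := (gauss_rapid a ha).2 (p + 1) (by linarith)
  have h1 : (fun u : ℝ => -a * (u : ℂ)) =O[atTop] (fun u : ℝ => u) := by
    refine Asymptotics.IsBigO.of_bound ‖a‖ (Eventually.of_forall fun u => ?_)
    simp
  refine (h1.mul h).congr' EventuallyEq.rfl ?_
  filter_upwards [eventually_gt_atTop 0] with u hu
  rw [show -p = 1 + -(p + 1) by ring, Real.rpow_add hu, Real.rpow_one]

lemma PhiI_eq_mellin (z a : ℂ) :
    PhiI z 0 a = mellin (fun u : ℝ => Complex.exp (0 * u - a * (u : ℂ) ^ 2 / 2)) z := by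
  unfold PhiI mellin
  congr 1
  ext u
  rw [smul_eq_mul, mul_comm]

lemma PhiI_recur (z a : ℂ) (ha : 0 < a.re) (hz : 0 < z.re) :
    a * PhiI (z + 2) 0 a = z * PhiI z 0 a := by
  have h := (gauss_rapid a ha).mellin_deriv (gauss_rapid_mul a ha) (s := z) (fun t => by
    have h0 : HasDerivAt (fun w : ℂ => 0 * w - a * w ^ 2 / 2) (-a * t) (t : ℂ) := by
      have h1 := ((hasDerivAt_id (t:ℂ)).const_mul 0).sub
        ((((hasDerivAt_id (t:ℂ)).pow 2).const_mul a).div_const 2)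
      refine h1.congr_deriv ?_
      simp; ring
    refine (h0.cexp.comp_ofReal).congr_deriv ?_
    ring) hz
  rw [PhiI_eq_mellin z a]
  have e : mellin (fun u : ℝ => -a * u * Complex.exp (0 * u - a * (u : ℂ) ^ 2 / 2)) (z + 1) =
      -a * PhiI (z + 2) 0 a := by
    unfold PhiI mellin
    rw [← integral_const_mul]
    refine setIntegral_congr_fun measurableSet_Ioi fun u hu => ?_
    have hu' : (u : ℂ) ≠ 0 := by simpa using (ne_of_gt hu)
    rw [show z + 2 - 1 = (z + 1 - 1) + 1 by ring, Complex.cpow_add _ _ hu', Complex.cpow_one,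
      smul_eq_mul]
    ring
  rw [e] at h
  linear_combination -h

lemma PhiI_hasDerivAt (z a : ℂ) (ha : 0 < a.re) (hz : 0 < z.re) :
    HasDerivAt (fun a => PhiI z 0 a) (-(1 / 2) * PhiI (z + 2) 0 a) a := by
  have key := hasDerivAt_integral_of_dominated_loc_of_deriv_le (x₀ := a) (𝕜 := ℂ)
    (μ := volume.restrict (Set.Ioi (0:ℝ)))
    (s := {b : ℂ | a.re / 2 < b.re})
    (F := fun (b : ℂ) (u : ℝ) =>
      Complex.exp (0 * u - b * (u : ℂ) ^ 2 / 2) * (u : ℂ) ^ (z - 1))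
    (F' := fun (b : ℂ) (u : ℝ) =>
      -(1/2) * (Complex.exp (0 * u - b * (u : ℂ) ^ 2 / 2) * (u : ℂ) ^ (z + 2 - 1)))
    (bound := fun u : ℝ => Real.exp (0 * u - (a.re / 2) * u ^ 2 / 2) * u ^ ((z.re + 2) - 1))
    ?_ ?_ ?_ ?_ ?_ ?_ ?_
  · have := key.2
    rw [integral_const_mul] at this
    exact this
  · exact (isOpen_lt continuous_const Complex.continuous_re).mem_nhds (by
      show a.re / 2 < a.re; linarith)
  · exact Eventually.of_forall fun b =>
      (gauss_meas 0 b z).aestronglyMeasurable measurableSet_Ioi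
  · exact gauss_integrable 0 a z ha hz
  · exact (gauss_integrable 0 a (z + 2) ha (by simp; linarith)).aestronglyMeasurable.const_mul _
  · refine (ae_restrict_iff' measurableSet_Ioi).2 (Eventually.of_forall fun u hu b hb => ?_)
    have hu' : 0 < u := hu
    have hb' : a.re / 2 < b.re := hb
    rw [norm_mul, gauss_norm _ _ _ hu']
    have e1 : ‖(-(1/2) : ℂ)‖ ≤ 1 := by simp; norm_num
    have e2 : (z + 2).re = z.re + 2 := by simp
    rw [e2, Complex.zero_re]
    refine (mul_le_of_le_one_left (by positivity) e1).trans ?_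
    gcongr
  · exact gauss_real_integrable 0 (a.re / 2) (z.re + 2) (by linarith) (by linarith)
  · refine (ae_restrict_iff' measurableSet_Ioi).2 (Eventually.of_forall fun u hu b hb => ?_)
    have hu' : (u : ℂ) ≠ 0 := by simpa using (ne_of_gt hu)
    have h0 : HasDerivAt (fun w : ℂ => 0 * (u:ℂ) - w * (u:ℂ) ^ 2 / 2) (-((u:ℂ) ^ 2 / 2)) b := by
      have h1 := (((hasDerivAt_id b).mul_const ((u:ℂ) ^ 2)).div_const 2).const_sub (0 * (u:ℂ))
      refine h1.congr_deriv ?_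
      ring
    refine (h0.cexp.mul_const _).congr_deriv ?_
    rw [show z + 2 - 1 = (z - 1) + (2:ℕ) by push_cast; ring, Complex.cpow_add _ _ hu',
      Complex.cpow_natCast]
    ring

lemma PhiI_zero_scale (z a : ℂ) (ha : 0 < a.re) (hz : 0 < z.re) :
    a ^ (z / 2) * PhiI z 0 a = PhiI z 0 1 := by
  have hd : ∀ b ∈ {b : ℂ | 0 < b.re},
      HasDerivAt (fun b : ℂ => b ^ (z / 2) * PhiI z 0 b) 0 b := by
    intro b hb
    have hb' : 0 < b.re := hb
    have hb0 : b ≠ 0 := by rintro rfl; simp at hb'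
    have h1 := (hasDerivAt_id b).cpow_const (c := z / 2) (Or.inl hb')
    refine (h1.mul (PhiI_hasDerivAt z b hb' hz)).congr_deriv ?_
    have hr := PhiI_recur z b hb' hz
    simp only [id]
    rw [Complex.cpow_sub _ _ hb0, Complex.cpow_one]
    field_simp
    linear_combination (-(b ^ (z / 2))) * hr
  obtain ⟨k, hk⟩ := (isOpen_lt continuous_const Complex.continuous_re
    : IsOpen {b : ℂ | 0 < b.re}).exists_is_const_of_deriv_eq_zero
    (convex_halfSpace_re_gt 0).isPreconnected
    (fun b hb => (hd b hb).differentiableAt.differentiableWithinAt) (fun b hb => (hd b hb).deriv)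
  have h1 := hk a ha
  have h2 := hk 1 (by simp)
  simp only [Complex.one_cpow, one_mul] at h1 h2
  rw [h1, h2]

lemma PhiI_zero_rot (z : ℂ) (hz : 0 < z.re) (θ : ℝ) (hθ : 0 ≤ θ) (hθ' : θ < Real.pi / 4) :
    PhiI z 0 (Complex.exp (2 * θ * Complex.I)) = Complex.exp (-(θ * Complex.I) * z) * PhiI z 0 1 := by
  have hre : 0 < (Complex.exp (2 * θ * Complex.I)).re := by
    rw [show (2 * θ * Complex.I : ℂ) = ((2 * θ : ℝ) : ℂ) * Complex.I by push_cast; ring,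
      Complex.exp_ofReal_mul_I_re]
    exact Real.cos_pos_of_mem_Ioo ⟨by linarith [Real.pi_pos], by linarith⟩
  have h := PhiI_zero_scale z _ hre hz
  have hlog : Complex.log (Complex.exp (2 * θ * Complex.I)) = 2 * θ * Complex.I := by
    have him : (2 * θ * Complex.I : ℂ).im = 2 * θ := by simp
    apply Complex.log_exp
    · rw [him]; linarith [Real.pi_pos]
    · rw [him]; linarith [Real.pi_pos]
  rw [Complex.cpow_def_of_ne_zero (Complex.exp_ne_zero _), hlog] at h
  rw [← h, ← mul_assoc, ← Complex.exp_add]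
  rw [show -(θ * Complex.I) * z + 2 * θ * Complex.I * (z / 2) = 0 by ring, Complex.exp_zero,
    one_mul]

lemma PhiI_hasSum (S β a : ℂ) (ha : 0 < a.re) (hS : 0 < S.re) :
    HasSum (fun n : ℕ => β ^ n / (n.factorial : ℂ) * PhiI (S + n) 0 a) (PhiI S β a) := by
  have e : ∀ n : ℕ, β ^ n / (n.factorial : ℂ) * PhiI (S + n) 0 a =
      ∫ u in Set.Ioi (0:ℝ), (β * u) ^ n / (n.factorial : ℂ) *
        (Complex.exp (0 * u - a * (u : ℂ) ^ 2 / 2) * (u : ℂ) ^ (S - 1)) := by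
    intro n
    unfold PhiI
    rw [← integral_const_mul]
    refine setIntegral_congr_fun measurableSet_Ioi fun u hu => ?_
    have hu' : (u : ℂ) ≠ 0 := by simpa using (ne_of_gt hu)
    rw [show S + n - 1 = (S - 1) + n by ring, Complex.cpow_add _ _ hu', Complex.cpow_natCast]
    ring
  simp_rw [e]
  have hsum : ∀ w : ℂ, HasSum (fun n : ℕ => w ^ n / (n.factorial : ℂ)) (Complex.exp w) := by
    intro w
    rw [Complex.exp_eq_exp_ℂ]
    exact NormedSpace.expSeries_div_hasSum_exp w
  have hsumr : ∀ w : ℝ, HasSum (fun n : ℕ => w ^ n / (n.factorial : ℝ)) (Real.exp w) := by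
    intro w
    rw [Real.exp_eq_exp_ℝ]
    exact NormedSpace.expSeries_div_hasSum_exp w
  unfold PhiI
  refine hasSum_integral_of_dominated_convergence
    (fun n u => (‖β‖ * u) ^ n / (n.factorial : ℝ) *
      (Real.exp (0 * u - a.re * u ^ 2 / 2) * u ^ (S.re - 1))) ?_ ?_ ?_ ?_ ?_
  · intro n
    refine ContinuousOn.aestronglyMeasurable ?_ measurableSet_Ioi
    exact ContinuousOn.mul (by fun_prop) (gauss_meas 0 a S)
  · intro n
    refine (ae_restrict_iff' measurableSet_Ioi).2 (Eventually.of_forall fun u hu => ?_)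
    have hu' : 0 < u := hu
    rw [norm_mul, gauss_norm _ _ _ hu]
    simp [abs_of_pos hu']
  · refine (ae_restrict_iff' measurableSet_Ioi).2 (Eventually.of_forall fun u hu => ?_)
    exact (hsumr _).summable.mul_right _
  · have := gauss_real_integrable ‖β‖ a.re S.re ha hS
    refine this.congr_fun (fun u hu => ?_) measurableSet_Ioi
    simp only
    rw [tsum_mul_right, (hsumr _).tsum_eq, ← mul_assoc, ← Real.exp_add]
    congr 2; ring
  · refine (ae_restrict_iff' measurableSet_Ioi).2 (Eventually.of_forall fun u hu => ?_)
    have := (hsum (β * u)).mul_right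
      (Complex.exp (0 * u - a * (u : ℂ) ^ 2 / 2) * (u : ℂ) ^ (S - 1))
    rw [← mul_assoc, ← Complex.exp_add] at this
    rw [show β * (u:ℂ) + (0 * u - a * (u : ℂ) ^ 2 / 2) = β * u - a * (u : ℂ) ^ 2 / 2 by ring] at this
    exact this

lemma PhiI_rot (S β : ℂ) (hS : 0 < S.re) (θ : ℝ) (hθ : 0 ≤ θ) (hθ' : θ < Real.pi / 4) :
    PhiI S β (Complex.exp (2 * θ * Complex.I)) =
      Complex.exp (-(θ * Complex.I) * S) * PhiI S (β * Complex.exp (-(θ * Complex.I))) 1 := by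
  have hre : 0 < (Complex.exp (2 * θ * Complex.I)).re := by
    rw [show (2 * θ * Complex.I : ℂ) = ((2 * θ : ℝ) : ℂ) * Complex.I by push_cast; ring,
      Complex.exp_ofReal_mul_I_re]
    exact Real.cos_pos_of_mem_Ioo ⟨by linarith [Real.pi_pos], by linarith⟩
  have h1 := PhiI_hasSum S β _ hre hS
  have h2 := (PhiI_hasSum S (β * Complex.exp (-(θ * Complex.I))) 1 (by simp) hS).mul_left
    (Complex.exp (-(θ * Complex.I) * S))
  refine h1.unique ?_
  have e : (fun n : ℕ => β ^ n / (n.factorial : ℂ) *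
      PhiI (S + n) 0 (Complex.exp (2 * θ * Complex.I))) =
      fun n : ℕ => Complex.exp (-(θ * Complex.I) * S) *
        ((β * Complex.exp (-(θ * Complex.I))) ^ n / (n.factorial : ℂ) * PhiI (S + n) 0 1) := by
    ext n
    rw [PhiI_zero_rot (S + n) (by simp; positivity) θ hθ hθ', mul_add, Complex.exp_add, mul_pow,
      ← Complex.exp_nat_mul, mul_comm (n : ℂ)]
    ring
  rw [e]
  exact h2

end partFour

section partFive

lemma gauss_integrableOn_one (β a S : ℂ) (ha : 0 < a.re) :
    IntegrableOn (fun u : ℝ => Complex.exp (β * u - a * (u : ℂ) ^ 2 / 2) * (u : ℂ) ^ (S - 1))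
      (Set.Ioi 1) := by
  have hsub : Set.Ioi (1:ℝ) ⊆ Set.Ioi 0 := Set.Ioi_subset_Ioi zero_le_one
  refine ((gauss_real_integrable β.re a.re (|S.re| + 1) ha (by positivity)).mono_set hsub).mono'
    (((gauss_meas β a S).mono hsub).aestronglyMeasurable measurableSet_Ioi) ?_
  refine (ae_restrict_iff' measurableSet_Ioi).2 (Eventually.of_forall fun u hu => ?_)
  have hu' : (1:ℝ) < u := hu
  rw [gauss_norm β a S (by linarith)]
  gcongr
  · linarith
  · linarith [le_abs_self S.re]

lemma PhiI_bound (S a : ℂ) (b : ℝ) (ha : 0 < a.re) (ha1 : ‖a‖ = 1) (hS : S.re = 1 / 2) :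
    ‖PhiI S (Complex.I * b) a‖ ≤ 3 + 2 * (|b| + ‖S - 2‖) := by
  have hi := gauss_integrable (Complex.I * b) a S ha (by rw [hS]; norm_num)
  have hre : (Complex.I * (b:ℂ)).re = 0 := by simp
  have hnorm : ∀ T : ℂ, ∀ u : ℝ, 0 < u →
      ‖Complex.exp (Complex.I * b * u - a * (u : ℂ) ^ 2 / 2) * (u : ℂ) ^ (T - 1)‖
        ≤ u ^ (T.re - 1) := by
    intro T u hu
    rw [gauss_norm _ _ _ hu, hre]
    refine mul_le_of_le_one_left (by positivity) ?_
    apply Real.exp_le_one_iff.2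
    have : 0 ≤ a.re * u ^ 2 / 2 := by positivity
    linarith
  have hsplit : PhiI S (Complex.I * b) a =
      (∫ u in Set.Ioc (0:ℝ) 1,
        Complex.exp (Complex.I * b * u - a * (u : ℂ) ^ 2 / 2) * (u : ℂ) ^ (S - 1)) +
      ∫ u in Set.Ioi (1:ℝ),
        Complex.exp (Complex.I * b * u - a * (u : ℂ) ^ 2 / 2) * (u : ℂ) ^ (S - 1) := by
    unfold PhiI
    rw [← Set.Ioc_union_Ioi_eq_Ioi (zero_le_one (α := ℝ))]
    refine setIntegral_union ?_ measurableSet_Ioi (hi.mono_set Set.Ioc_subset_Ioi_self)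
      (hi.mono_set (Set.Ioi_subset_Ioi zero_le_one))
    exact Set.disjoint_left.2 fun x hx hx' => not_lt.2 hx.2 hx'
  have h1 : ‖∫ u in Set.Ioc (0:ℝ) 1,
        Complex.exp (Complex.I * b * u - a * (u : ℂ) ^ 2 / 2) * (u : ℂ) ^ (S - 1)‖ ≤ 2 := by
    have hIntg : IntegrableOn (fun u : ℝ => u ^ (S.re - 1)) (Set.Ioc 0 1) := by
      have := intervalIntegral.intervalIntegrable_rpow' (a := 0) (b := 1) (r := S.re - 1)
        (by rw [hS]; norm_num)
      rwa [intervalIntegrable_iff_integrableOn_Ioc_of_le zero_le_one] at this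
    refine (norm_integral_le_of_norm_le hIntg ?_).trans ?_
    · refine (ae_restrict_iff' measurableSet_Ioc).2 (Eventually.of_forall fun u hu => ?_)
      exact hnorm S u hu.1
    · rw [← intervalIntegral.integral_of_le zero_le_one, integral_rpow (by left; rw [hS]; norm_num),
        hS]
      norm_num
  have hW : ∀ T : ℂ, T.re ≤ -1/2 → ‖∫ u in Set.Ioi (1:ℝ),
        Complex.exp (Complex.I * b * u - a * (u : ℂ) ^ 2 / 2) * (u : ℂ) ^ (T - 1)‖ ≤ 2 := by
    intro T hT
    have hIntg : IntegrableOn (fun u : ℝ => u ^ (-(3/2) : ℝ)) (Set.Ioi 1) :=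
      integrableOn_Ioi_rpow_of_lt (by norm_num) one_pos
    refine (norm_integral_le_of_norm_le hIntg ?_).trans ?_
    · refine (ae_restrict_iff' measurableSet_Ioi).2 (Eventually.of_forall fun u hu => ?_)
      have hu' : (1:ℝ) < u := hu
      refine (hnorm T u (by linarith)).trans ?_
      exact Real.rpow_le_rpow_of_exponent_le hu'.le (by linarith)
    · rw [integral_Ioi_rpow_of_lt (by norm_num) one_pos]
      norm_num
  have i0 := gauss_integrableOn_one (Complex.I * b) a S ha
  have i1 := gauss_integrableOn_one (Complex.I * b) a (S - 1) ha
  have i2 := gauss_integrableOn_one (Complex.I * b) a (S - 2) ha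
  have key := integral_Ioi_of_hasDerivAt_of_tendsto (a := (1:ℝ)) (m := (0:ℂ))
    (f := fun u : ℝ =>
      Complex.exp (Complex.I * b * u - a * (u : ℂ) ^ 2 / 2) * (u : ℂ) ^ (S - 1 - 1))
    (f' := fun u : ℝ =>
      -a * (Complex.exp (Complex.I * b * u - a * (u : ℂ) ^ 2 / 2) * (u : ℂ) ^ (S - 1)) +
      (Complex.I * b * (Complex.exp (Complex.I * b * u - a * (u : ℂ) ^ 2 / 2) *
        (u : ℂ) ^ (S - 1 - 1)) +
      (S - 2) * (Complex.exp (Complex.I * b * u - a * (u : ℂ) ^ 2 / 2) *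
        (u : ℂ) ^ (S - 2 - 1))))
    ?_ ?_ ?_ ?_
  · replace key := (integral_add (i0.const_mul (-a)) ((i1.const_mul (Complex.I * b)).add
      (i2.const_mul (S - 2)))).symm.trans key
    simp only [Pi.add_apply] at key
    rw [integral_add (i1.const_mul _) (i2.const_mul _), integral_const_mul, integral_const_mul,
      integral_const_mul] at key
    have n1 := hW (S - 1) (by simp [hS]; norm_num)
    have n2 := hW (S - 2) (by simp [hS]; norm_num)
    have n3 := hnorm (S - 1) 1 one_pos
    rw [Real.one_rpow] at n3
    rw [hsplit]
    refine (norm_add_le _ _).trans ?_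
    set J0 := ∫ u in Set.Ioi (1:ℝ),
        Complex.exp (Complex.I * b * u - a * (u : ℂ) ^ 2 / 2) * (u : ℂ) ^ (S - 1)
    set J1 := ∫ u in Set.Ioi (1:ℝ),
        Complex.exp (Complex.I * b * u - a * (u : ℂ) ^ 2 / 2) * (u : ℂ) ^ (S - 1 - 1)
    set J2 := ∫ u in Set.Ioi (1:ℝ),
        Complex.exp (Complex.I * b * u - a * (u : ℂ) ^ 2 / 2) * (u : ℂ) ^ (S - 2 - 1)
    set W1 := Complex.exp (Complex.I * b * (1:ℝ) - a * ((1:ℝ) : ℂ) ^ 2 / 2) *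
      ((1:ℝ) : ℂ) ^ (S - 1 - 1)
    have e : a * J0 = W1 + (Complex.I * b * J1 + (S - 2) * J2) := by
      linear_combination -key
    have e' : ‖J0‖ = ‖W1 + (Complex.I * b * J1 + (S - 2) * J2)‖ := by
      rw [← e, norm_mul, ha1, one_mul]
    have e2 : ‖Complex.I * b * J1‖ ≤ |b| * 2 := by
      rw [norm_mul, norm_mul, Complex.norm_I, one_mul, Complex.norm_real, Real.norm_eq_abs]
      gcongr
    have e3 : ‖(S - 2) * J2‖ ≤ ‖S - 2‖ * 2 := by
      rw [norm_mul]; gcongr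
    have e4 := norm_add_le W1 (Complex.I * b * J1 + (S - 2) * J2)
    have e5 := norm_add_le (Complex.I * b * J1) ((S - 2) * J2)
    linarith
  · exact (((gauss_meas (Complex.I * b) a (S - 1)).continuousAt
      (Ioi_mem_nhds one_pos)).continuousWithinAt)
  · intro u hu
    have hu0 : (u:ℝ) ≠ 0 := by have : (1:ℝ) < u := hu; linarith
    have hu1 : 0 < u := by have : (1:ℝ) < u := hu; linarith
    have hu' : (u : ℂ) ≠ 0 := by simpa using hu0
    have h0 : HasDerivAt (fun w : ℂ => Complex.I * b * w - a * w ^ 2 / 2)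
        (Complex.I * b - a * u) (u : ℂ) := by
      have h1 := ((hasDerivAt_id (u:ℂ)).const_mul (Complex.I * b)).sub
        ((((hasDerivAt_id (u:ℂ)).pow 2).const_mul a).div_const 2)
      refine h1.congr_deriv ?_
      simp; ring
    have h2 := (hasDerivAt_id (u : ℂ)).cpow_const (c := S - 1 - 1)
      (by simpa using hu1)
    refine (h0.cexp.mul h2).comp_ofReal.congr_deriv ?_
    simp only [id]
    rw [show S - 1 = (S - 2 - 1) + (2:ℕ) by push_cast; ring, Complex.cpow_add _ _ hu',
      Complex.cpow_natCast]
    rw [show S - 2 - 1 + (2:ℕ) - 1 = (S - 2 - 1) + 1 by push_cast; ring,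
      Complex.cpow_add _ _ hu', Complex.cpow_one]
    rw [show S - 2 - 1 + 1 - 1 = (S - 2 - 1) by ring]
    ring
  · exact (i0.const_mul _).add ((i1.const_mul _).add (i2.const_mul _))
  · rw [tendsto_zero_iff_norm_tendsto_zero]
    have ht : Tendsto (fun u : ℝ => u ^ (-(3/2) : ℝ)) atTop (nhds 0) :=
      tendsto_rpow_neg_atTop (by norm_num)
    refine squeeze_zero' (Eventually.of_forall fun u => norm_nonneg _) ?_ ht
    filter_upwards [eventually_gt_atTop 0] with u hu
    refine (hnorm (S - 1) u hu).trans (le_of_eq ?_)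
    congr 1
    simp [hS]; norm_num

end partFive

section partSix

lemma PhiI_continuous (S : ℂ) (hS : 0 < S.re) : Continuous (fun β : ℂ => PhiI S β 1) := by
  rw [continuous_iff_continuousAt]
  intro β₀
  unfold PhiI
  refine continuousAt_of_dominated
    (bound := fun u : ℝ => Real.exp ((‖β₀‖ + 1) * u - 1 * u ^ 2 / 2) * u ^ (S.re - 1)) ?_ ?_ ?_ ?_
  · exact Eventually.of_forall fun β =>
      (gauss_meas β 1 S).aestronglyMeasurable measurableSet_Ioi
  · filter_upwards [Metric.ball_mem_nhds β₀ one_pos] with β hβ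
    refine (ae_restrict_iff' measurableSet_Ioi).2 (Eventually.of_forall fun u hu => ?_)
    have hu' : 0 < u := hu
    rw [gauss_norm _ _ _ hu', Complex.one_re]
    have h1 : β.re ≤ ‖β₀‖ + 1 := by
      have h2 := Complex.re_le_norm β
      have h3 : ‖β - β₀‖ < 1 := by simpa [dist_eq_norm] using hβ
      have h4 := norm_sub_norm_le β β₀
      linarith
    gcongr
  · exact gauss_real_integrable _ _ _ one_pos hS
  · refine (ae_restrict_iff' measurableSet_Ioi).2 (Eventually.of_forall fun u hu => ?_)
    fun_prop

lemma exp_two_re (θ : ℝ) (hθ : 0 ≤ θ) (hθ' : θ < Real.pi / 4) :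
    0 < (Complex.exp (2 * θ * Complex.I)).re := by
  rw [show (2 * θ * Complex.I : ℂ) = ((2 * θ : ℝ) : ℂ) * Complex.I by push_cast; ring,
    Complex.exp_ofReal_mul_I_re]
  exact Real.cos_pos_of_mem_Ioo ⟨by linarith [Real.pi_pos], by linarith⟩

lemma exp_two_norm (θ : ℝ) : ‖Complex.exp (2 * θ * Complex.I)‖ = 1 := by
  rw [show (2 * θ * Complex.I : ℂ) = ((2 * θ : ℝ) : ℂ) * Complex.I by push_cast; ring,
    Complex.norm_exp_ofReal_mul_I]

lemma chi_fubini (f : SchwartzMap ℝ ℂ) (k : ℝ) (S a : ℂ) (hS : 0 < S.re) (ha : 0 < a.re) :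
    ∫ t in Set.Ioi (0:ℝ), Complex.exp (0 * t - a * (t:ℂ) ^ 2 / 2) * (t : ℂ) ^ (S - 1) *
      (∫ q : ℝ, Complex.exp (Complex.I * k * q * t) * f q) =
    ∫ q : ℝ, f q * PhiI S (Complex.I * ((k * q : ℝ) : ℂ)) a := by
  have hprod : Integrable (fun p : ℝ × ℝ => Complex.exp (Complex.I * k * p.2 * p.1) *
      ((Complex.exp (0 * (p.1:ℂ) - a * (p.1:ℂ) ^ 2 / 2) * (p.1 : ℂ) ^ (S - 1)) * f p.2))
      ((volume.restrict (Set.Ioi (0:ℝ))).prod volume) := by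
    have h := (gauss_integrable 0 a S ha hS).mul_prod (f.integrable (μ := volume))
    refine h.bdd_mul (c := 1) ?_ ?_
    · exact Continuous.aestronglyMeasurable (by fun_prop)
    · refine Eventually.of_forall fun p => ?_
      rw [show Complex.I * k * p.2 * p.1 = ((k * p.2 * p.1 : ℝ) : ℂ) * Complex.I by
        push_cast; ring, Complex.norm_exp_ofReal_mul_I]
  have hs := integral_integral_swap (f := fun (t q : ℝ) => Complex.exp (Complex.I * k * q * t) *
      ((Complex.exp (0 * (t:ℂ) - a * (t:ℂ) ^ 2 / 2) * (t : ℂ) ^ (S - 1)) * f q)) hprod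
  have e1 : ∀ t : ℝ, Complex.exp (0 * t - a * (t:ℂ) ^ 2 / 2) * (t : ℂ) ^ (S - 1) *
      (∫ q : ℝ, Complex.exp (Complex.I * k * q * t) * f q) =
      ∫ q : ℝ, Complex.exp (Complex.I * k * q * t) *
      ((Complex.exp (0 * (t:ℂ) - a * (t:ℂ) ^ 2 / 2) * (t : ℂ) ^ (S - 1)) * f q) := by
    intro t
    rw [← integral_const_mul]
    congr 1
    ext q
    ring
  simp_rw [e1]
  rw [hs]
  congr 1
  ext q
  unfold PhiI
  rw [← integral_const_mul]
  congr 1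
  ext t
  rw [show Complex.I * ((k * q : ℝ) : ℂ) * (t:ℂ) - a * (t:ℂ) ^ 2 / 2 =
    Complex.I * k * q * t + (0 * (t:ℂ) - a * (t:ℂ) ^ 2 / 2) by push_cast; ring, Complex.exp_add]
  ring

lemma chi_identity (f : SchwartzMap ℝ ℂ) (k : ℝ) (S : ℂ) (hS : S.re = 1 / 2) (F : ℝ → ℂ)
    (hF : RapidAtTop F) (hFe : ∀ t, F t = ∫ q : ℝ, Complex.exp (Complex.I * k * q * t) * f q) :
    ∫ q : ℝ, f q * PhiI S (Complex.exp (Real.pi / 4 * Complex.I) * ((k * q : ℝ) : ℂ)) 1 =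
    Complex.exp (Real.pi / 4 * Complex.I * S) *
      mellin (fun t : ℝ => Complex.exp (-Complex.I * (t:ℂ) ^ 2 / 2) * F t) S := by
  have hS0 : 0 < S.re := by rw [hS]; norm_num
  have hev : ∀ᶠ θ in nhdsWithin (Real.pi / 4) (Set.Iio (Real.pi / 4)),
      0 ≤ θ ∧ θ < Real.pi / 4 := by
    have h1 : ∀ᶠ θ in nhds (Real.pi / 4), (0:ℝ) < θ := lt_mem_nhds (by positivity)
    filter_upwards [nhdsWithin_le_nhds h1, self_mem_nhdsWithin] with θ h h'
    exact ⟨h.le, h'⟩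
  have hlim1 : Tendsto (fun θ : ℝ => ∫ t in Set.Ioi (0:ℝ),
      Complex.exp (0 * t - Complex.exp (2 * θ * Complex.I) * (t:ℂ) ^ 2 / 2) *
        (t : ℂ) ^ (S - 1) * F t) (nhdsWithin (Real.pi / 4) (Set.Iio (Real.pi / 4)))
      (nhds (mellin (fun t : ℝ => Complex.exp (-Complex.I * (t:ℂ) ^ 2 / 2) * F t) S)) := by
    unfold mellin
    refine tendsto_integral_filter_of_dominated_convergence
      (fun t : ℝ => ‖(t : ℂ) ^ (S - 1) • F t‖) ?_ ?_ ?_ ?_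
    · refine Eventually.of_forall fun θ => ?_
      refine ContinuousOn.aestronglyMeasurable ?_ measurableSet_Ioi
      exact (gauss_meas 0 _ S).mul hF.1.continuousOn
    · filter_upwards [hev] with θ hθ
      refine (ae_restrict_iff' measurableSet_Ioi).2 (Eventually.of_forall fun t ht => ?_)
      rw [mul_assoc, norm_mul, smul_eq_mul]
      refine mul_le_of_le_one_left (norm_nonneg _) ?_
      rw [Complex.norm_exp]
      apply Real.exp_le_one_iff.2
      have hre := exp_two_re θ hθ.1 hθ.2
      have : (0 * (t:ℂ) - Complex.exp (2 * θ * Complex.I) * (t:ℂ) ^ 2 / 2).re =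
          -((Complex.exp (2 * θ * Complex.I)).re * (t ^ 2 / 2)) := by
        rw [show 0 * (t:ℂ) - Complex.exp (2 * θ * Complex.I) * (t:ℂ) ^ 2 / 2 =
          -(Complex.exp (2 * θ * Complex.I) * ((t ^ 2 / 2 : ℝ) : ℂ)) by push_cast; ring,
          Complex.neg_re, Complex.re_mul_ofReal]
      rw [this]
      have : 0 ≤ (Complex.exp (2 * θ * Complex.I)).re * (t ^ 2 / 2) := by positivity
      linarith
    · exact (hF.mellinConvergent hS0).norm
    · refine Eventually.of_forall fun t => ?_
      have hc : Continuous (fun θ : ℝ =>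
        Complex.exp (0 * t - Complex.exp (2 * θ * Complex.I) * (t:ℂ) ^ 2 / 2) *
        (t : ℂ) ^ (S - 1) * F t) := by fun_prop
      have h := (hc.tendsto (Real.pi / 4)).mono_left
        (nhdsWithin_le_nhds (s := Set.Iio (Real.pi / 4)))
      have e : (2 * ((Real.pi / 4 : ℝ) : ℂ) * Complex.I) = Real.pi / 2 * Complex.I := by
        push_cast; ring
      rw [e, Complex.exp_pi_div_two_mul_I] at h
      rw [smul_eq_mul, show (t : ℂ) ^ (S - 1) * (Complex.exp (-Complex.I * (t:ℂ) ^ 2 / 2) * F t) =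
        Complex.exp (0 * t - Complex.I * (t:ℂ) ^ 2 / 2) * (t : ℂ) ^ (S - 1) * F t by
          rw [show 0 * (t:ℂ) - Complex.I * (t:ℂ) ^ 2 / 2 = -Complex.I * (t:ℂ) ^ 2 / 2 by ring]
          ring]
      exact h
  have hcont := PhiI_continuous S hS0
  have hlim2 : Tendsto (fun θ : ℝ => ∫ q : ℝ, f q * (Complex.exp (-(θ * Complex.I) * S) *
      PhiI S (Complex.I * ((k * q : ℝ) : ℂ) * Complex.exp (-(θ * Complex.I))) 1))
      (nhdsWithin (Real.pi / 4) (Set.Iio (Real.pi / 4)))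
      (nhds (∫ q : ℝ, f q * (Complex.exp (-((Real.pi / 4 : ℝ) * Complex.I) * S) *
      PhiI S (Complex.I * ((k * q : ℝ) : ℂ) *
        Complex.exp (-((Real.pi / 4 : ℝ) * Complex.I))) 1))) := by
    refine tendsto_integral_filter_of_dominated_convergence
      (fun q : ℝ => ‖f q‖ * (3 + 2 * (|k * q| + ‖S - 2‖))) ?_ ?_ ?_ ?_
    · refine Eventually.of_forall fun θ => ?_
      have hf := f.continuous
      have : Continuous (fun q : ℝ =>
        PhiI S (Complex.I * ((k * q : ℝ) : ℂ) * Complex.exp (-(θ * Complex.I))) 1) :=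
        hcont.comp (by fun_prop)
      exact Continuous.aestronglyMeasurable (by fun_prop)
    · filter_upwards [hev] with θ hθ
      refine Eventually.of_forall fun q => ?_
      rw [norm_mul, ← PhiI_rot S _ hS0 θ hθ.1 hθ.2]
      gcongr
      exact PhiI_bound S _ _ (exp_two_re θ hθ.1 hθ.2) (exp_two_norm θ) hS
    · have h1 := (f.integrable (μ := volume)).norm
      have h2 := f.integrable_pow_mul volume 1
      have : (fun q : ℝ => ‖f q‖ * (3 + 2 * (|k * q| + ‖S - 2‖))) =
          fun q : ℝ => (3 + 2 * ‖S - 2‖) * ‖f q‖ + (2 * |k|) * (‖q‖ ^ 1 * ‖f q‖) := by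
        ext q
        rw [abs_mul, Real.norm_eq_abs]; ring
      rw [this]
      exact (h1.const_mul _).add (h2.const_mul _)
    · refine Eventually.of_forall fun q => ?_
      have : Continuous (fun θ : ℝ =>
        PhiI S (Complex.I * ((k * q : ℝ) : ℂ) * Complex.exp (-(θ * Complex.I))) 1) :=
        hcont.comp (by fun_prop)
      have hc : Continuous (fun θ : ℝ => f q * (Complex.exp (-(θ * Complex.I) * S) *
        PhiI S (Complex.I * ((k * q : ℝ) : ℂ) * Complex.exp (-(θ * Complex.I))) 1)) := by
        fun_prop
      exact (hc.tendsto (Real.pi / 4)).mono_left nhdsWithin_le_nhds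
  have heq := tendsto_nhds_unique (hlim1.congr' ?_) hlim2
  · rw [heq, ← integral_const_mul]
    congr 1
    ext q
    have e1 : Complex.I * ((k * q : ℝ) : ℂ) * Complex.exp (-((Real.pi / 4 : ℝ) * Complex.I)) =
        Complex.exp (Real.pi / 4 * Complex.I) * ((k * q : ℝ) : ℂ) := by
      have : Complex.exp (Real.pi / 4 * Complex.I) =
          Complex.I * Complex.exp (-((Real.pi / 4 : ℝ) * Complex.I)) := by
        nth_rewrite 2 [← Complex.exp_pi_div_two_mul_I]
        rw [← Complex.exp_add]
        congr 1; push_cast; ring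
      rw [this]; ring
    have e2 : Complex.exp (Real.pi / 4 * Complex.I * S) *
        Complex.exp (-((Real.pi / 4 : ℝ) * Complex.I) * S) = 1 := by
      rw [← Complex.exp_add, ← Complex.exp_zero]
      congr 1; push_cast; ring
    rw [e1]
    linear_combination (-(f q * PhiI S (Complex.exp (Real.pi / 4 * Complex.I) *
      ((k * q : ℝ) : ℂ)) 1)) * e2
  · filter_upwards [hev] with θ hθ
    have h := chi_fubini f k S _ hS0 (exp_two_re θ hθ.1 hθ.2)
    simp_rw [← hFe] at h
    rw [h]
    congr 1
    ext q
    rw [PhiI_rot S _ hS0 θ hθ.1 hθ.2]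

end partSix

section partSeven

open FourierTransform in
lemma fourier_scaled (f : SchwartzMap ℝ ℂ) (k t : ℝ) :
    (∫ q : ℝ, Complex.exp (Complex.I * k * q * t) * f q) = 𝓕⁻ f (k / (2 * Real.pi) * t) := by
  rw [SchwartzMap.fourierInv_coe, Real.fourierInv_eq']
  congr 1
  ext q
  rw [smul_eq_mul]
  congr 2
  simp only [RCLike.inner_apply, conj_trivial]
  push_cast
  have : (Real.pi : ℂ) ≠ 0 := by exact_mod_cast Real.pi_ne_zero
  field_simp

open FourierTransform in
lemma exists_scaled (f : SchwartzMap ℝ ℂ) (k : ℝ) (hk : k ≠ 0) :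
    ∃ F : SchwartzMap ℝ ℂ, ∀ t : ℝ,
      F t = ∫ q : ℝ, Complex.exp (Complex.I * k * q * t) * f q := by
  have hk' : k / (2 * Real.pi) ≠ 0 := by positivity
  refine ⟨SchwartzMap.compCLMOfContinuousLinearEquiv ℂ
    (ContinuousLinearEquiv.unitsEquivAut ℝ (Units.mk0 _ hk')) (𝓕⁻ f), fun t => ?_⟩
  rw [fourier_scaled]
  simp [mul_comm]

lemma exists_chirp (f : SchwartzMap ℝ ℂ) (c : ℝ) :
    ∃ g : SchwartzMap ℝ ℂ, ∀ t : ℝ, g t = Complex.exp (Complex.I * c * (t:ℂ) ^ 2) * f t := by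
  refine ⟨SchwartzMap.smulLeftCLM ℂ
    (fun t : ℝ => Complex.exp (Complex.I * c * (t:ℂ) ^ 2)) f, fun t => ?_⟩
  rw [SchwartzMap.smulLeftCLM_apply_apply (chirp_temperate c), smul_eq_mul]

lemma conj_chi (E' s e q : ℝ) :
    (starRingEnd ℂ) (chiE E' s e q) =
      (((E' / (2 * Real.pi ^ 2)) ^ ((1 : ℝ) / 4) : ℝ) : ℂ) *
      ((((Real.sqrt (2 * Real.pi * E'))⁻¹ : ℝ)) : ℂ) *
      Complex.exp (Real.pi * e / (4 * E')) *
      Complex.exp (Complex.I * ((-(E' / 2) : ℝ) : ℂ) * (q : ℂ) ^ 2) *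
      PhiI (1 / 2 + Complex.I * e / E') (Complex.exp (Real.pi / 4 * Complex.I) *
        ((s * Real.sqrt (2 * E') * q : ℝ) : ℂ)) 1 := by
  unfold chiE
  rw [map_mul, map_mul, map_mul, map_mul, Complex.conj_ofReal, Complex.conj_ofReal,
    ← Complex.exp_conj, ← Complex.exp_conj, ← integral_conj]
  congr 1
  · congr 1
    · congr 2
      simp [nuOf, map_ofNat]
      ring_nf
      simp [map_ofNat]
      ring
    · congr 1
      simp [map_ofNat]
      ring
  · unfold PhiI
    refine setIntegral_congr_fun measurableSet_Ioi fun u hu => ?_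
    have hu' : (0:ℝ) < u := hu
    have harg : ((u : ℝ) : ℂ).arg ≠ Real.pi := by
      rw [Complex.arg_ofReal_of_nonneg hu'.le]; exact Real.pi_pos.ne
    rw [map_mul, ← Complex.exp_conj]
    congr 1
    · congr 1
      simp only [map_sub, map_mul, map_div₀, map_pow, Complex.conj_ofReal, ← Complex.exp_conj,
        map_neg, Complex.conj_I, map_ofNat]
      push_cast
      rw [show - -Complex.I * (Real.pi:ℂ) / 4 = Real.pi / 4 * Complex.I by ring]
      ring
    · have h := Complex.conj_cpow (u : ℂ) ((starRingEnd ℂ) (nuOf E' e)) harg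
      rw [Complex.conj_ofReal, Complex.conj_conj] at h
      rw [← h]
      congr 1
      simp [nuOf, map_ofNat]
      ring

/-- The normalisation constant. -/
noncomputable def chiConst (E' : ℝ) : ℂ :=
  (((E' / (2 * Real.pi ^ 2)) ^ ((1 : ℝ) / 4) : ℝ) : ℂ) *
      ((((Real.sqrt (2 * Real.pi * E'))⁻¹ : ℝ)) : ℂ) * Complex.exp (Real.pi / 8 * Complex.I)

lemma chiConst_ne (E' : ℝ) (hE' : 0 < E') : chiConst E' ≠ 0 := by
  unfold chiConst
  have h1 : 0 < (E' / (2 * Real.pi ^ 2)) ^ ((1 : ℝ) / 4) := by positivity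
  have h2 : 0 < (Real.sqrt (2 * Real.pi * E'))⁻¹ := by positivity
  refine mul_ne_zero (mul_ne_zero ?_ ?_) (Complex.exp_ne_zero _)
  · exact_mod_cast h1.ne'
  · exact_mod_cast h2.ne'

lemma G_identity (E' : ℝ) (hE' : 0 < E') (φ f g F : SchwartzMap ℝ ℂ) (s : ℝ)
    (hf : ∀ q : ℝ, f q = Complex.exp (Complex.I * ((-(E' / 2) : ℝ) : ℂ) * (q : ℂ) ^ 2) * φ q)
    (hF : ∀ t : ℝ, F t =
      ∫ q : ℝ, Complex.exp (Complex.I * ((s * Real.sqrt (2 * E') : ℝ) : ℂ) * q * t) * f q)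
    (hg : ∀ t : ℝ, g t = Complex.exp (Complex.I * ((-(1 / 2) : ℝ) : ℂ) * (t : ℂ) ^ 2) * F t)
    (e : ℝ) :
    (∫ q : ℝ, (starRingEnd ℂ) (chiE E' s e q) * φ q) =
      chiConst E' * mellin g (1 / 2 + Complex.I * e / E') := by
  have hE0 : (E' : ℂ) ≠ 0 := by exact_mod_cast hE'.ne'
  have hSre : (1 / 2 + Complex.I * e / E' : ℂ).re = 1 / 2 := by
    rw [show (1 / 2 + Complex.I * e / E' : ℂ) = ((1/2 : ℝ) : ℂ) + ((e / E' : ℝ) : ℂ) * Complex.I by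
      push_cast; ring]
    simp
  have key := chi_identity f (s * Real.sqrt (2 * E')) (1 / 2 + Complex.I * e / E') hSre F
    (RapidAtTop.schwartz F) hF
  have hgm : (fun t : ℝ => Complex.exp (-Complex.I * (t:ℂ) ^ 2 / 2) * F t) = g := by
    ext t
    rw [hg]
    congr 2
    push_cast; ring
  rw [hgm] at key
  have e1 : ∀ q : ℝ, (starRingEnd ℂ) (chiE E' s e q) * φ q =
      ((((E' / (2 * Real.pi ^ 2)) ^ ((1 : ℝ) / 4) : ℝ) : ℂ) *
      ((((Real.sqrt (2 * Real.pi * E'))⁻¹ : ℝ)) : ℂ) *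
      Complex.exp (Real.pi * e / (4 * E'))) * (f q *
      PhiI (1 / 2 + Complex.I * e / E') (Complex.exp (Real.pi / 4 * Complex.I) *
        ((s * Real.sqrt (2 * E') * q : ℝ) : ℂ)) 1) := by
    intro q
    rw [conj_chi, hf]; ring
  simp_rw [e1]
  rw [integral_const_mul, key]
  unfold chiConst
  have e2 : Complex.exp (Real.pi / 8 * Complex.I) = Complex.exp (Real.pi * e / (4 * E')) *
      Complex.exp (Real.pi / 4 * Complex.I * (1 / 2 + Complex.I * e / E')) := by
    rw [← Complex.exp_add]
    congr 1
    field_simp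
    ring_nf
    simp
  rw [e2]
  ring

lemma hardy_support (E' : ℝ) (hE' : 0 < E') (g : SchwartzMap ℝ ℂ) (G : ℂ → ℂ)
    (hG : ∀ e : ℝ, G (e : ℂ) = chiConst E' * mellin g (1 / 2 + Complex.I * e / E'))
    (hc : ContinuousOn G {z : ℂ | z.im ≤ 0})
    (hd : DifferentiableOn ℂ G {z : ℂ | z.im < 0}) (C : ℝ)
    (hC : ∀ y : ℝ, y < 0 → (∫ u : ℝ, ‖G ((u : ℂ) + Complex.I * (y : ℂ))‖ ^ 2) ≤ C) :
    ∀ t : ℝ, 1 < t → g t = 0 := by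
  have hE0 : (E' : ℂ) ≠ 0 := by exact_mod_cast hE'.ne'
  have hre : ∀ z : ℂ, (1 / 2 + Complex.I * z / E').re = 1 / 2 - z.im / E' := by
    intro z
    rw [Complex.add_re, Complex.div_ofReal_re]
    simp
    ring
  have hmd : ∀ z : ℂ, z.im ≤ 0 →
      DifferentiableAt ℂ (fun z => chiConst E' * mellin g (1 / 2 + Complex.I * z / E')) z := by
    intro z hz
    have h1 : 0 < (1 / 2 + Complex.I * z / E').re := by
      rw [hre]
      have : z.im / E' ≤ 0 := div_nonpos_of_nonpos_of_nonneg hz hE'.le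
      linarith
    have h2 := (RapidAtTop.schwartz g).mellin_differentiableAt h1
    have h3 : DifferentiableAt ℂ (fun z : ℂ => 1 / 2 + Complex.I * z / E') z := by fun_prop
    exact (h2.comp z h3).const_mul _
  have hzero := zero_of_real_zero
    (fun z => G z - chiConst E' * mellin g (1 / 2 + Complex.I * z / E'))
    (hc.sub fun z hz => (hmd z hz).continuousAt.continuousWithinAt)
    (hd.sub fun z hz => (hmd z (le_of_lt hz)).differentiableWithinAt)
    (fun e => by simp only [hG, sub_self])
  have hcc := norm_pos_iff.2 (chiConst_ne E' hE')
  refine support_of_mellin_bound g (C / (E' * ‖chiConst E'‖ ^ 2)) fun σ hσ => ?_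
  have hy : -(E' * (σ - 1 / 2)) < 0 := by
    have : 0 < E' * (σ - 1 / 2) := mul_pos hE' (by linarith)
    linarith
  have h := hC _ hy
  have e1 : ∀ u : ℝ, ‖G ((u : ℂ) + Complex.I * ((-(E' * (σ - 1 / 2)) : ℝ) : ℂ))‖ ^ 2 =
      ‖chiConst E'‖ ^ 2 * ‖mellin g ((σ : ℂ) + ((E'⁻¹ * u : ℝ) : ℂ) * Complex.I)‖ ^ 2 := by
    intro u
    have h0 := sub_eq_zero.1 (hzero ((u : ℂ) + Complex.I * ((-(E' * (σ - 1 / 2)) : ℝ) : ℂ))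
      (by simpa using hy))
    rw [h0, norm_mul, mul_pow]
    congr 4
    push_cast
    field_simp
    ring_nf
    simp
  simp_rw [e1] at h
  rw [integral_const_mul, Measure.integral_comp_mul_left
    (fun τ : ℝ => ‖mellin g ((σ : ℂ) + (τ : ℂ) * Complex.I)‖ ^ 2)] at h
  rw [le_div_iff₀ (by positivity)]
  rw [inv_inv, abs_of_pos hE', smul_eq_mul] at h
  linarith

end partSeven

section partEight

/-- The scaled inverse Fourier transform. -/
noncomputable def scF (κ : ℝ) (f : SchwartzMap ℝ ℂ) (t : ℝ) : ℂ :=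
  ∫ q : ℝ, Complex.exp (Complex.I * κ * q * t) * f q

open FourierTransform in
lemma scF_inversion (f : SchwartzMap ℝ ℂ) (κ : ℝ) (hκ : 0 < κ) (q : ℝ) :
    f q = ((κ / (2 * Real.pi) : ℝ) : ℂ) *
      ∫ t : ℝ, Complex.exp (Complex.I * (-(κ * q) : ℝ) * t) * scF κ f t := by
  have hβ : 0 < κ / (2 * Real.pi) := by positivity
  have h : f q = 𝓕 (𝓕⁻ f) q := by rw [FourierTransform.fourier_fourierInv_eq]
  rw [SchwartzMap.fourier_coe, Real.fourier_real_eq_integral_exp_smul] at h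
  have hs := Measure.integral_comp_mul_left
    (fun v : ℝ => Complex.exp (((-2 * Real.pi * v * q : ℝ) : ℂ) * Complex.I) • (𝓕⁻ f) v)
    (κ / (2 * Real.pi))
  rw [← h] at hs
  have e : ∀ t : ℝ, Complex.exp (Complex.I * (-(κ * q) : ℝ) * t) * scF κ f t =
      Complex.exp (((-2 * Real.pi * (κ / (2 * Real.pi) * t) * q : ℝ) : ℂ) * Complex.I) •
        (𝓕⁻ f) (κ / (2 * Real.pi) * t) := by
    intro t
    unfold scF
    rw [fourier_scaled, smul_eq_mul]
    congr 2
    push_cast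
    have : (Real.pi : ℂ) ≠ 0 := by exact_mod_cast Real.pi_ne_zero
    field_simp
  simp_rw [e]
  rw [hs, abs_of_pos (by positivity), Complex.real_smul, ← mul_assoc, ← Complex.ofReal_mul,
    mul_inv_cancel₀ hβ.ne']
  simp

lemma scF_schwartz (f : SchwartzMap ℝ ℂ) (κ : ℝ) (hκ : 0 < κ) :
    ∃ F : SchwartzMap ℝ ℂ, scF κ f = F := by
  obtain ⟨F, hF⟩ := exists_scaled f κ hκ.ne'
  exact ⟨F, funext fun t => (hF t).symm⟩

lemma gauss_parseval (f : SchwartzMap ℝ ℂ) (κ : ℝ) (hκ : 0 < κ) (b : ℂ) (hb : 0 < b.re) :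
    ∫ q : ℝ, Complex.exp (-b * (q:ℂ) ^ 2) * f q = ((κ / (2 * Real.pi) : ℝ) : ℂ) *
      ((Real.pi / b) ^ (1 / 2 : ℂ) *
        ∫ t : ℝ, Complex.exp (-((κ * t : ℝ):ℂ) ^ 2 / (4 * b)) * scF κ f t) := by
  obtain ⟨F, hF⟩ := scF_schwartz f κ hκ
  have h1 : ∀ q : ℝ, Complex.exp (-b * (q:ℂ) ^ 2) * f q = ((κ / (2 * Real.pi) : ℝ) : ℂ) *
      ∫ t : ℝ, Complex.exp (Complex.I * (-(κ * q) : ℝ) * t) *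
        (Complex.exp (-b * (q:ℂ) ^ 2) * F t) := by
    intro q
    rw [scF_inversion f κ hκ q, hF, mul_left_comm, ← integral_const_mul]
    congr 2
    ext t
    ring
  simp_rw [h1]
  rw [integral_const_mul]
  congr 1
  have hprod : Integrable (fun p : ℝ × ℝ => Complex.exp (Complex.I * (-(κ * p.1) : ℝ) * p.2) *
      (Complex.exp (-b * (p.1:ℂ) ^ 2) * F p.2)) (volume.prod volume) := by
    have h := (integrable_cexp_neg_mul_sq hb).mul_prod (F.integrable (μ := volume))
    refine h.bdd_mul (c := 1) ?_ ?_
    · exact Continuous.aestronglyMeasurable (by fun_prop)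
    · refine Eventually.of_forall fun p => ?_
      rw [show Complex.I * (-(κ * p.1) : ℝ) * p.2 = ((-(κ * p.1) * p.2 : ℝ) : ℂ) * Complex.I by
        push_cast; ring, Complex.norm_exp_ofReal_mul_I]
  rw [integral_integral_swap (f := fun (q t : ℝ) => Complex.exp (Complex.I * (-(κ * q) : ℝ) * t) *
      (Complex.exp (-b * (q:ℂ) ^ 2) * F t)) hprod, ← integral_const_mul]
  congr 1
  ext t
  have hg := fourierIntegral_gaussian hb (((-(κ * t) : ℝ)) : ℂ)
  rw [hF]
  have e : ∀ q : ℝ, Complex.exp (Complex.I * (-(κ * q) : ℝ) * t) *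
      (Complex.exp (-b * (q:ℂ) ^ 2) * F t) =
      F t * (Complex.exp (Complex.I * ((-(κ * t) : ℝ) : ℂ) * q) *
        Complex.exp (-b * (q:ℂ) ^ 2)) := by
    intro q
    rw [show Complex.I * (-(κ * q) : ℝ) * (t:ℂ) = Complex.I * ((-(κ * t) : ℝ) : ℂ) * q by
      push_cast; ring]
    ring
  simp_rw [e]
  rw [integral_const_mul, hg]
  rw [show (((-(κ * t) : ℝ)) : ℂ) ^ 2 = ((κ * t : ℝ):ℂ) ^ 2 by push_cast; ring]
  ring

lemma chirp_parseval (E' : ℝ) (hE' : 0 < E') (f : SchwartzMap ℝ ℂ) :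
    ∫ q : ℝ, Complex.exp (Complex.I * E' * (q:ℂ) ^ 2) * f q =
      ((Real.sqrt (2 * E') / (2 * Real.pi) : ℝ) : ℂ) *
      ((Real.pi / (-Complex.I * E')) ^ (1 / 2 : ℂ) *
        ∫ t : ℝ, Complex.exp (-Complex.I * (t:ℂ) ^ 2 / 2) * scF (Real.sqrt (2 * E')) f t) := by
  have hκ : 0 < Real.sqrt (2 * E') := by positivity
  have hE0 : (E' : ℂ) ≠ 0 := by exact_mod_cast hE'.ne'
  have hb0 : (-Complex.I * E' : ℂ) ≠ 0 := by simp [hE'.ne']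
  obtain ⟨F, hF⟩ := scF_schwartz f _ hκ
  have hbt : Tendsto (fun ε : ℝ => (ε : ℂ) - Complex.I * E') (nhdsWithin 0 (Set.Ioi 0))
      (nhds (-Complex.I * E')) := by
    have hc : Continuous (fun ε : ℝ => (ε : ℂ) - Complex.I * E') := by fun_prop
    have := (hc.tendsto 0).mono_left (nhdsWithin_le_nhds (s := Set.Ioi (0:ℝ)))
    simpa using this
  have hre : ∀ ε : ℝ, ((ε : ℂ) - Complex.I * E').re = ε := by intro ε; simp
  have hl : Tendsto (fun ε : ℝ => ∫ q : ℝ, Complex.exp (-((ε : ℂ) - Complex.I * E') * (q:ℂ) ^ 2)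
      * f q) (nhdsWithin 0 (Set.Ioi 0))
      (nhds (∫ q : ℝ, Complex.exp (Complex.I * E' * (q:ℂ) ^ 2) * f q)) := by
    refine tendsto_integral_filter_of_dominated_convergence (fun q => ‖f q‖) ?_ ?_ ?_ ?_
    · refine Eventually.of_forall fun ε => ?_
      have := f.continuous
      exact Continuous.aestronglyMeasurable (by fun_prop)
    · filter_upwards [self_mem_nhdsWithin] with ε hε
      have hε' : 0 < ε := hε
      refine Eventually.of_forall fun q => ?_
      rw [norm_mul]
      refine mul_le_of_le_one_left (norm_nonneg _) ?_
      rw [Complex.norm_exp, ← Complex.ofReal_pow, Complex.re_mul_ofReal, Complex.neg_re, hre]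
      apply Real.exp_le_one_iff.2
      have : 0 ≤ ε * q ^ 2 := by positivity
      linarith
    · exact f.integrable.norm
    · refine Eventually.of_forall fun q => ?_
      have h1 : Continuous (fun b : ℂ => Complex.exp (-b * (q:ℂ) ^ 2) * f q) := by fun_prop
      have h2 := (h1.tendsto _).comp hbt
      rw [show - (-Complex.I * (E':ℂ)) = Complex.I * E' by ring] at h2
      exact h2
  have hr : Tendsto (fun ε : ℝ => ∫ t : ℝ, Complex.exp (-((Real.sqrt (2 * E') * t : ℝ):ℂ) ^ 2 /
      (4 * ((ε : ℂ) - Complex.I * E'))) * F t) (nhdsWithin 0 (Set.Ioi 0))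
      (nhds (∫ t : ℝ, Complex.exp (-Complex.I * (t:ℂ) ^ 2 / 2) * F t)) := by
    refine tendsto_integral_filter_of_dominated_convergence (fun q => ‖F q‖) ?_ ?_ ?_ ?_
    · refine Eventually.of_forall fun ε => ?_
      have := F.continuous
      exact Continuous.aestronglyMeasurable (by fun_prop)
    · filter_upwards [self_mem_nhdsWithin] with ε hε
      have hε' : 0 < ε := hε
      refine Eventually.of_forall fun t => ?_
      rw [norm_mul]
      refine mul_le_of_le_one_left (norm_nonneg _) ?_
      rw [Complex.norm_exp]
      apply Real.exp_le_one_iff.2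
      rw [show -((Real.sqrt (2 * E') * t : ℝ):ℂ) ^ 2 / (4 * ((ε : ℂ) - Complex.I * E')) =
        -(((ε : ℂ) - Complex.I * E')⁻¹ * (((Real.sqrt (2 * E') * t) ^ 2 / 4 : ℝ) : ℂ)) by
          push_cast; rw [neg_div, div_eq_mul_inv, mul_inv]; ring, Complex.neg_re,
          Complex.re_mul_ofReal, Complex.inv_re, hre]
      have : 0 ≤ ε / Complex.normSq ((ε : ℂ) - Complex.I * E') *
        ((Real.sqrt (2 * E') * t) ^ 2 / 4) :=
        mul_nonneg (div_nonneg hε'.le (Complex.normSq_nonneg _)) (by positivity)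
      linarith
    · exact F.integrable.norm
    · refine Eventually.of_forall fun t => ?_
      have h1 : ContinuousAt (fun b : ℂ => Complex.exp (-((Real.sqrt (2 * E') * t : ℝ):ℂ) ^ 2 /
        (4 * b)) * F t) (-Complex.I * E') := by
        have : (4 * (-Complex.I * E') : ℂ) ≠ 0 := mul_ne_zero (by norm_num) hb0
        fun_prop (disch := assumption)
      have h2 := h1.tendsto.comp hbt
      have e : -((Real.sqrt (2 * E') * t : ℝ):ℂ) ^ 2 / (4 * (-Complex.I * E')) =
          -Complex.I * (t:ℂ) ^ 2 / 2 := by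
        rw [← Complex.ofReal_pow, mul_pow, Real.sq_sqrt (by positivity)]
        push_cast
        field_simp
        ring_nf
        simp
      rw [e] at h2
      exact h2
  have hp : Tendsto (fun ε : ℝ => (Real.pi / ((ε : ℂ) - Complex.I * E')) ^ (1 / 2 : ℂ))
      (nhdsWithin 0 (Set.Ioi 0)) (nhds ((Real.pi / (-Complex.I * E')) ^ (1 / 2 : ℂ))) := by
    have h1 : ContinuousAt (fun b : ℂ => (Real.pi / b) ^ (1 / 2 : ℂ)) (-Complex.I * E') := by
      refine ContinuousAt.cpow (by fun_prop (disch := assumption)) continuousAt_const ?_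
      right
      rw [show (Real.pi : ℂ) / (-Complex.I * E') = ((Real.pi / E' : ℝ) : ℂ) * Complex.I by
        push_cast; field_simp; ring_nf; simp]
      have : 0 < Real.pi / E' := by positivity
      simp [hE'.ne', Real.pi_ne_zero]
    exact h1.tendsto.comp hbt
  refine tendsto_nhds_unique hl ?_
  rw [hF]
  refine ((hp.mul hr).const_mul _).congr' ?_
  filter_upwards [self_mem_nhdsWithin] with ε hε
  rw [gauss_parseval f _ hκ _ (by rw [hre]; exact hε), hF]

end partEight

section partNine

/-- The scaling `e^{-iπ/4} √E`. -/
noncomputable def alph (E' : ℝ) : ℂ :=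
  Complex.exp (-(Real.pi / 4 * Complex.I)) * ((Real.sqrt E' : ℝ) : ℂ)

/-- The rotated variable `e^{-iπ/4} t / √2`. -/
noncomputable def zrot (t : ℝ) : ℂ :=
  Complex.exp (-(Real.pi / 4 * Complex.I)) * ((t / Real.sqrt 2 : ℝ) : ℂ)

lemma rot_sq : Complex.exp (-(Real.pi / 4 * Complex.I)) ^ 2 = -Complex.I := by
  rw [← Complex.exp_nat_mul, show ((2:ℕ):ℂ) * -(Real.pi / 4 * Complex.I) =
    -(Real.pi / 2 * Complex.I) by push_cast; ring, Complex.exp_neg, Complex.exp_pi_div_two_mul_I,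
    Complex.inv_I]

lemma alph_sq (E' : ℝ) (hE' : 0 < E') : alph E' ^ 2 = -Complex.I * E' := by
  unfold alph
  rw [mul_pow, rot_sq, ← Complex.ofReal_pow, Real.sq_sqrt hE'.le]

lemma alph_ne (E' : ℝ) (hE' : 0 < E') : alph E' ≠ 0 := by
  intro h
  have := alph_sq E' hE'
  rw [h] at this
  simp [hE'.ne'] at this

lemma zrot_sq (t : ℝ) : zrot t ^ 2 = -Complex.I * (t:ℂ) ^ 2 / 2 := by
  unfold zrot
  rw [mul_pow, rot_sq, ← Complex.ofReal_pow, div_pow, Real.sq_sqrt (by norm_num)]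
  push_cast; ring

lemma alph_zrot (E' : ℝ) (hE' : 0 < E') (t : ℝ) :
    2 * alph E' * zrot t = -Complex.I * ((Real.sqrt (2 * E') : ℝ) : ℂ) * t := by
  unfold alph zrot
  have h2 : (Real.sqrt 2) ≠ 0 := by positivity
  have e : (Real.sqrt (2 * E')) * t = 2 * (Real.sqrt E' * (t / Real.sqrt 2)) := by
    rw [Real.sqrt_mul (by norm_num)]
    field_simp
    rw [Real.sq_sqrt (by norm_num)]
    ring
  have e' : ((Real.sqrt (2 * E') : ℝ) : ℂ) * t =
      2 * (((Real.sqrt E' : ℝ) : ℂ) * ((t / Real.sqrt 2 : ℝ) : ℂ)) := by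
    exact_mod_cast e
  rw [mul_assoc (-Complex.I), e', ← rot_sq]
  ring

lemma zrot_norm_le (t : ℝ) (ht : |t| ≤ 1) : ‖zrot t‖ ≤ 1 := by
  have h : ‖zrot t‖ ^ 2 ≤ 1 := by
    rw [← norm_pow, zrot_sq, norm_div, norm_mul, norm_neg, Complex.norm_I, ← Complex.ofReal_pow,
      Complex.norm_real, Real.norm_eq_abs, abs_pow]
    have : |t| ^ 2 ≤ 1 := pow_le_one₀ (abs_nonneg _) ht
    simp only [Complex.norm_ofNat]
    linarith
  nlinarith [norm_nonneg (zrot t)]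

lemma hermite_temperate (α : ℂ) (n : ℕ) :
    Function.HasTemperateGrowth (fun q : ℝ => hermitePoly n (α * q)) := by
  have hlin : Function.HasTemperateGrowth (fun q : ℝ => 2 * (α * (q:ℂ))) := by
    have := (Function.HasTemperateGrowth.const (E := ℝ) (2 * α)).mul
      Complex.ofRealCLM.hasTemperateGrowth
    have e : (fun q : ℝ => 2 * (α * (q:ℂ))) = (fun _ : ℝ => 2 * α) * Complex.ofReal := by
      ext q; simp [mul_assoc]
    rw [e]; exact this
  induction n using Nat.twoStepInduction with
  | zero => simpa [hermitePoly] using Function.HasTemperateGrowth.const (E := ℝ) (1:ℂ)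
  | one => simpa [hermitePoly] using hlin
  | more n h1 h2 =>
    have := (hlin.mul h2).sub
      ((Function.HasTemperateGrowth.const (E := ℝ) (2 * (n + 1) : ℂ)).mul h1)
    have e : (fun q : ℝ => hermitePoly (n + 2) (α * q)) =
        (fun q : ℝ => 2 * (α * (q:ℂ))) * (fun q : ℝ => hermitePoly (n + 1) (α * q)) -
        (fun _ : ℝ => (2 * (n + 1) : ℂ)) * (fun q : ℝ => hermitePoly n (α * q)) := by
      ext q; simp [hermitePoly]
    rw [e]; exact this

lemma hermite_conj (n : ℕ) (y : ℂ) :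
    (starRingEnd ℂ) (hermitePoly n y) = hermitePoly n ((starRingEnd ℂ) y) := by
  induction n using Nat.twoStepInduction with
  | zero => simp [hermitePoly]
  | one => simp [hermitePoly, map_ofNat]
  | more n h1 h2 => simp [hermitePoly, h1, h2, map_ofNat]

lemma hermite_integrable (E' : ℝ) (α : ℂ) (n : ℕ) (f : SchwartzMap ℝ ℂ) :
    Integrable (fun q : ℝ => Complex.exp (Complex.I * E' * (q:ℂ) ^ 2) * hermitePoly n (α * q) *
      f q) := by
  have ht := (chirp_temperate E').mul (hermite_temperate α n)
  have h := (SchwartzMap.smulLeftCLM ℂ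
    ((fun q : ℝ => Complex.exp (Complex.I * E' * (q:ℂ) ^ 2)) *
      fun q : ℝ => hermitePoly n (α * q)) f).integrable (μ := volume)
  refine h.congr (Eventually.of_forall fun q => ?_)
  rw [SchwartzMap.smulLeftCLM_apply_apply ht, smul_eq_mul, Pi.mul_apply]

lemma hermite_ibp (E' : ℝ) (hE' : 0 < E') (n : ℕ) (f : SchwartzMap ℝ ℂ) :
    alph E' * ∫ q : ℝ, Complex.exp (Complex.I * E' * (q:ℂ) ^ 2) *
      hermitePoly (n + 1) (alph E' * q) * f q =
    ∫ q : ℝ, Complex.exp (Complex.I * E' * (q:ℂ) ^ 2) *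
      hermitePoly n (alph E' * q) * SchwartzMap.derivCLM ℝ ℂ f q := by
  have hd : ∀ q : ℝ, HasDerivAt (fun q : ℝ => Complex.exp (Complex.I * E' * (q:ℂ) ^ 2) *
      hermitePoly n (alph E' * q)) (-alph E' * (Complex.exp (Complex.I * E' * (q:ℂ) ^ 2) *
      hermitePoly (n + 1) (alph E' * q))) q := by
    intro q
    have h0 : HasDerivAt (fun w : ℂ => Complex.I * E' * w ^ 2) (Complex.I * E' * (2 * q)) (q:ℂ) := by
      refine (((hasDerivAt_id (q:ℂ)).pow 2).const_mul (Complex.I * E')).congr_deriv ?_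
      simp
    have h1 : HasDerivAt (fun w : ℂ => alph E' * w) (alph E') (q:ℂ) := by
      simpa using (hasDerivAt_id (q:ℂ)).const_mul (alph E')
    have h2 := HasDerivAt.comp (q:ℂ) (hermite_hasDerivAt n (alph E' * q)) h1
    refine ((h0.cexp.mul h2).comp_ofReal).congr_deriv ?_
    simp only [Function.comp]
    linear_combination (2 * (q:ℂ) * Complex.exp (Complex.I * E' * (q:ℂ) ^ 2) *
      hermitePoly n (alph E' * q)) * alph_sq E' hE'
  have h := integral_mul_deriv_eq_deriv_mul_of_integrable
    (u := fun q : ℝ => Complex.exp (Complex.I * E' * (q:ℂ) ^ 2) * hermitePoly n (alph E' * q))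
    (v := fun q => f q) (u' := fun q : ℝ => -alph E' * (Complex.exp (Complex.I * E' * (q:ℂ) ^ 2) *
      hermitePoly (n + 1) (alph E' * q))) (v' := fun q => SchwartzMap.derivCLM ℝ ℂ f q)
    (fun q _ => hd q) (fun q _ => by simpa using f.hasDerivAt q)
    (hermite_integrable E' (alph E') n _)
    (by
      have := (hermite_integrable E' (alph E') (n + 1) f).const_mul (-alph E')
      refine this.congr (Eventually.of_forall fun q => ?_)
      simp only [Pi.mul_apply]; ring)
    (hermite_integrable E' (alph E') n f)
  rw [h, ← integral_neg, ← integral_const_mul]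
  congr 1
  ext q
  ring

lemma scF_deriv (κ : ℝ) (f : SchwartzMap ℝ ℂ) (t : ℝ) :
    scF κ (SchwartzMap.derivCLM ℝ ℂ f) t = -Complex.I * κ * t * scF κ f t := by
  unfold scF
  have hnorm : ∀ q : ℝ, ‖Complex.exp (Complex.I * κ * q * t)‖ ≤ 1 := by
    intro q
    rw [show Complex.I * κ * q * t = ((κ * q * t : ℝ) : ℂ) * Complex.I by
      push_cast; ring, Complex.norm_exp_ofReal_mul_I]
  have hIntg : ∀ g : SchwartzMap ℝ ℂ,
      Integrable (fun q : ℝ => Complex.exp (Complex.I * κ * q * t) * g q) := by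
    intro g
    exact g.integrable.bdd_mul (c := 1) (Continuous.aestronglyMeasurable (by fun_prop))
      (Eventually.of_forall hnorm)
  have hd : ∀ q : ℝ, HasDerivAt (fun q : ℝ => Complex.exp (Complex.I * κ * q * t))
      (Complex.I * κ * t * Complex.exp (Complex.I * κ * q * t)) q := by
    intro q
    have h0 : HasDerivAt (fun w : ℂ => Complex.I * κ * w * t) (Complex.I * κ * t) (q:ℂ) := by
      simpa using ((hasDerivAt_id (q:ℂ)).const_mul (Complex.I * κ)).mul_const (t:ℂ)
    refine h0.cexp.comp_ofReal.congr_deriv ?_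
    ring
  have h := integral_mul_deriv_eq_deriv_mul_of_integrable
    (u := fun q : ℝ => Complex.exp (Complex.I * κ * q * t))
    (v := fun q => f q) (u' := fun q : ℝ => Complex.I * κ * t * Complex.exp (Complex.I * κ * q * t))
    (v' := fun q => SchwartzMap.derivCLM ℝ ℂ f q)
    (fun q _ => hd q) (fun q _ => by simpa using f.hasDerivAt q)
    (hIntg _)
    (by
      have := (hIntg f).const_mul (Complex.I * κ * t)
      refine this.congr (Eventually.of_forall fun q => ?_)
      simp only [Pi.mul_apply]; ring)
    (hIntg f)
  rw [h, ← integral_neg, ← integral_const_mul]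
  congr 1
  ext q
  ring

lemma hermite_parseval (E' : ℝ) (hE' : 0 < E') (n : ℕ) : ∀ f : SchwartzMap ℝ ℂ,
    ∫ q : ℝ, Complex.exp (Complex.I * E' * (q:ℂ) ^ 2) * hermitePoly n (alph E' * q) * f q =
      ((Real.sqrt (2 * E') / (2 * Real.pi) : ℝ) : ℂ) *
      (Real.pi / (-Complex.I * E')) ^ (1 / 2 : ℂ) * 2 ^ n *
        ∫ t : ℝ, zrot t ^ n *
          (Complex.exp (-Complex.I * (t:ℂ) ^ 2 / 2) * scF (Real.sqrt (2 * E')) f t) := by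
  induction n with
  | zero =>
    intro f
    have := chirp_parseval E' hE' f
    simp only [hermitePoly, mul_one, pow_zero, one_mul]
    rw [this]; ring
  | succ n ih =>
    intro f
    have hα := alph_ne E' hE'
    apply mul_left_cancel₀ hα
    rw [hermite_ibp E' hE', ih]
    have e : ∀ t : ℝ, zrot t ^ n * (Complex.exp (-Complex.I * (t:ℂ) ^ 2 / 2) *
        scF (Real.sqrt (2 * E')) (SchwartzMap.derivCLM ℝ ℂ f) t) =
        (2 * alph E') * (zrot t ^ (n + 1) * (Complex.exp (-Complex.I * (t:ℂ) ^ 2 / 2) *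
        scF (Real.sqrt (2 * E')) f t)) := by
      intro t
      rw [scF_deriv, ← alph_zrot E' hE']
      ring
    simp_rw [e]
    rw [integral_const_mul]
    ring

end partNine

section partTen

lemma cpow_half_const (E' : ℝ) (hE' : 0 < E') :
    ((Real.pi : ℂ) / (-Complex.I * E')) ^ (1 / 2 : ℂ) =
      ((Real.sqrt (Real.pi / E') : ℝ) : ℂ) * Complex.exp (Real.pi / 4 * Complex.I) := by
  have hE0 : (E' : ℂ) ≠ 0 := by exact_mod_cast hE'.ne'
  have hp : 0 < Real.pi / E' := by positivity
  have hlog : Complex.log Complex.I = Real.pi / 2 * Complex.I := Complex.log_I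
  have hne : ((Real.pi / E' : ℝ) : ℂ) ≠ 0 := by exact_mod_cast hp.ne'
  rw [show (Real.pi : ℂ) / (-Complex.I * E') = ((Real.pi / E' : ℝ) : ℂ) * Complex.I by
        push_cast; field_simp; ring_nf; simp,
    Complex.cpow_def_of_ne_zero (mul_ne_zero hne Complex.I_ne_zero),
    Complex.log_ofReal_mul hp Complex.I_ne_zero, hlog, add_mul, Complex.exp_add]
  congr 1
  · rw [Real.sqrt_eq_rpow, Real.rpow_def_of_pos hp]
    push_cast
    rfl
  · congr 1; ring

lemma fres_neg (E' : ℝ) (n : ℕ) (q : ℝ) :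
    fres E' (-1) n q = (((E' / Real.pi) ^ ((1 : ℝ) / 4) : ℝ) : ℂ) *
    (((Real.sqrt (2 ^ n * n.factorial) : ℝ) : ℂ))⁻¹ *
    Complex.exp (-(Real.pi / 8 * Complex.I)) *
    Complex.exp (Complex.I * ((E' / 2 : ℝ) : ℂ) * (q : ℂ) ^ 2) *
    hermitePoly n (alph E' * q) := by
  unfold fres alph
  have h1 : (((-1 : ℝ) : ℂ) * Complex.I * (Real.pi : ℂ) / 8) = -(Real.pi / 8 * Complex.I) := by
    push_cast; ring
  have h2 : (-((-1 : ℝ) : ℂ) * Complex.I * ((E' / 2 : ℝ) : ℂ) * (q : ℂ) ^ 2) =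
      Complex.I * ((E' / 2 : ℝ) : ℂ) * (q : ℂ) ^ 2 := by
    push_cast; ring
  have h3 : (((-1 : ℝ) : ℂ) * Complex.I * (Real.pi : ℂ) / 4) = -(Real.pi / 4 * Complex.I) := by
    push_cast; ring
  rw [h1, h2, h3]

lemma fres_conj (E' : ℝ) (n : ℕ) (q : ℝ) :
    (starRingEnd ℂ) (fres E' 1 n q) = fres E' (-1) n q := by
  unfold fres
  rw [map_mul, map_mul, map_mul, map_mul, hermite_conj, ← Complex.exp_conj, ← Complex.exp_conj,
    map_inv₀, Complex.conj_ofReal, Complex.conj_ofReal]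
  have h1 : (starRingEnd ℂ) (((1 : ℝ) : ℂ) * Complex.I * (Real.pi : ℂ) / 8) =
      ((-1 : ℝ) : ℂ) * Complex.I * (Real.pi : ℂ) / 8 := by
    simp [map_ofNat]
  have h2 : (starRingEnd ℂ) (-((1 : ℝ) : ℂ) * Complex.I * ((E' / 2 : ℝ) : ℂ) * (q : ℂ) ^ 2) =
      -((-1 : ℝ) : ℂ) * Complex.I * ((E' / 2 : ℝ) : ℂ) * (q : ℂ) ^ 2 := by
    simp [map_ofNat]
  have h3 : (starRingEnd ℂ) (((1 : ℝ) : ℂ) * Complex.I * (Real.pi : ℂ) / 4) =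
      ((-1 : ℝ) : ℂ) * Complex.I * (Real.pi : ℂ) / 4 := by
    simp [map_ofNat]
  rw [h1, h2, map_mul, map_mul, ← Complex.exp_conj, Complex.conj_ofReal, Complex.conj_ofReal, h3]

lemma expansion_hasSum (E' : ℝ) (hE' : 0 < E') (f g : SchwartzMap ℝ ℂ)
    (hg : ∀ t : ℝ, g t = Complex.exp (-Complex.I * (t : ℂ) ^ 2 / 2) *
      scF (Real.sqrt (2 * E')) f t)
    (hs : ∀ t : ℝ, 1 < |t| → g t = 0) (q : ℝ) :
    HasSum (fun n : ℕ => ((Real.sqrt (2 * E') / (2 * Real.pi) : ℝ) : ℂ) *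
      (hermitePoly n (alph E' * q) / (n.factorial : ℂ) * ∫ t : ℝ, zrot t ^ n * g t)) (f q) := by
  have hκ : 0 < Real.sqrt (2 * E') := by positivity
  rw [scF_inversion f _ hκ q]
  refine HasSum.mul_left _ ?_
  have e1 : ∀ t : ℝ, Complex.exp (Complex.I * (-(Real.sqrt (2 * E') * q) : ℝ) * t) *
      scF (Real.sqrt (2 * E')) f t =
      Complex.exp (2 * (alph E' * q) * zrot t - zrot t ^ 2) * g t := by
    intro t
    rw [hg, ← mul_assoc, ← Complex.exp_add]
    congr 2
    have h := alph_zrot E' hE' t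
    rw [zrot_sq]
    push_cast
    linear_combination (-(q:ℂ)) * h
  simp_rw [e1, ← integral_const_mul]
  have hsum := (gen_hasSum (alph E' * q) 1).summable.norm
  have hzc : Continuous zrot := by unfold zrot; fun_prop
  have hgc := g.continuous
  refine hasSum_integral_of_dominated_convergence
    (fun n t => ‖hermitePoly n (alph E' * q) * 1 ^ n / (n.factorial : ℂ)‖ * ‖g t‖) ?_ ?_ ?_ ?_ ?_
  · intro n
    exact Continuous.aestronglyMeasurable (by fun_prop)
  · intro n
    refine Eventually.of_forall fun t => ?_
    by_cases ht : 1 < |t|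
    · simp [hs t ht]
    · have hz := zrot_norm_le t (not_lt.1 ht)
      rw [norm_mul, norm_mul, norm_pow, one_pow, mul_one]
      gcongr
      exact mul_le_of_le_one_left (norm_nonneg _) (pow_le_one₀ (norm_nonneg _) hz)
  · exact Eventually.of_forall fun t => hsum.mul_right _
  · simp_rw [tsum_mul_right]
    exact g.integrable.norm.const_mul _
  · refine Eventually.of_forall fun t => ?_
    have h := (gen_hasSum (alph E' * q) (zrot t)).mul_right (g t)
    refine h.congr_fun ?_
    intro n
    ring

lemma scF_neg (κ : ℝ) (f : SchwartzMap ℝ ℂ) (t : ℝ) :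
    (∫ q : ℝ, Complex.exp (Complex.I * ((-1 * κ : ℝ) : ℂ) * q * t) * f q) = scF κ f (-t) := by
  unfold scF
  congr 1
  ext q
  congr 2
  push_cast; ring

end partTen

/-- if for each degeneracy sign the continuum coefficient
function `G_s(𝓔) = ⟨χ^𝓔_s, φ⟩` is Schwartz on `ℝ` and extends to a Hardy-class
function on the lower half-plane, then `φ` admits the pointwise-convergent
discrete resonance expansion `φ = Σ_n ⟨f_n^+, φ⟩ f_n^−`. -/
theorem resonance_expansion_of_hardy (E' : ℝ) (hE' : 0 < E')
    (φ : SchwartzMap ℝ ℂ)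
    (hG : ∀ sgn : ℝ, sgn = 1 ∨ sgn = -1 → ∃ G : ℂ → ℂ,
      (∀ e : ℝ, G (e : ℂ) = ∫ q : ℝ, (starRingEnd ℂ) (chiE E' sgn e q) * φ q) ∧
      (∃ ψ : SchwartzMap ℝ ℂ, ∀ u : ℝ, ψ u = G (u : ℂ)) ∧
      ContinuousOn G {z : ℂ | z.im ≤ 0} ∧
      DifferentiableOn ℂ G {z : ℂ | z.im < 0} ∧
      (∃ C : ℝ, ∀ y : ℝ, y < 0 →
        (∫ u : ℝ, ‖G ((u : ℂ) + Complex.I * (y : ℂ))‖ ^ 2) ≤ C)) :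
    ∀ q : ℝ,
      Filter.Tendsto
        (fun N : ℕ => ∑ n ∈ Finset.range N,
          (∫ q' : ℝ, (starRingEnd ℂ) (fres E' 1 n q') * φ q') * fres E' (-1) n q)
        Filter.atTop (nhds (φ q)) := by
  intro q
  have hκ : 0 < Real.sqrt (2 * E') := by positivity
  obtain ⟨f, hf⟩ := exists_chirp φ (-(E' / 2))
  obtain ⟨F, hF⟩ := scF_schwartz f _ hκ
  obtain ⟨g, hg⟩ := exists_chirp F (-(1 / 2))
  obtain ⟨F₂, hF₂⟩ := exists_scaled f (-1 * Real.sqrt (2 * E')) (by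
    rw [neg_one_mul]; exact neg_ne_zero.2 hκ.ne')
  obtain ⟨g₂, hg₂⟩ := exists_chirp F₂ (-(1 / 2))
  have hpos : ∀ t : ℝ, 1 < t → g t = 0 := by
    obtain ⟨G, hG1, -, hc, hd, C, hC⟩ := hG 1 (Or.inl rfl)
    refine hardy_support E' hE' g G (fun e => ?_) hc hd C hC
    rw [hG1]
    refine G_identity E' hE' φ f g F 1 hf (fun t => ?_) hg e
    rw [one_mul, ← hF, scF]
  have hneg : ∀ t : ℝ, 1 < t → g₂ t = 0 := by
    obtain ⟨G, hG1, -, hc, hd, C, hC⟩ := hG (-1) (Or.inr rfl)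
    refine hardy_support E' hE' g₂ G (fun e => ?_) hc hd C hC
    rw [hG1]
    exact G_identity E' hE' φ f g₂ F₂ (-1) hf hF₂ hg₂ e
  have hrel : ∀ t : ℝ, g₂ t = g (-t) := by
    intro t
    rw [hg₂, hg, hF₂, scF_neg, hF]
    push_cast
    rw [neg_sq]
  have hs : ∀ t : ℝ, 1 < |t| → g t = 0 := by
    intro t ht
    rcases lt_abs.1 ht with h | h
    · exact hpos t h
    · have := hneg (-t) h
      rwa [hrel, neg_neg] at this
  have hg' : ∀ t : ℝ, g t = Complex.exp (-Complex.I * (t : ℂ) ^ 2 / 2) *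
      scF (Real.sqrt (2 * E')) f t := by
    intro t
    rw [hg, hF]
    congr 2
    push_cast; ring
  have hsum := (expansion_hasSum E' hE' f g hg' hs q).mul_left
    (Complex.exp (Complex.I * ((E' / 2 : ℝ) : ℂ) * (q : ℂ) ^ 2))
  have hφ : ∀ x : ℝ, φ x = Complex.exp (Complex.I * ((E' / 2 : ℝ) : ℂ) * (x : ℂ) ^ 2) * f x := by
    intro x
    rw [hf, ← mul_assoc, ← Complex.exp_add]
    rw [show Complex.I * ((E' / 2 : ℝ) : ℂ) * (x : ℂ) ^ 2 +
      Complex.I * ((-(E' / 2) : ℝ) : ℂ) * (x : ℂ) ^ 2 = 0 by push_cast; ring]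
    simp
  rw [← hφ] at hsum
  refine hsum.tendsto_sum_nat.congr fun N => Finset.sum_congr rfl fun n _ => ?_
  have hcoef : (∫ q' : ℝ, (starRingEnd ℂ) (fres E' 1 n q') * φ q') =
      (((E' / Real.pi) ^ ((1 : ℝ) / 4) : ℝ) : ℂ) *
      (((Real.sqrt (2 ^ n * n.factorial) : ℝ) : ℂ))⁻¹ *
      Complex.exp (-(Real.pi / 8 * Complex.I)) *
      (((Real.sqrt (2 * E') / (2 * Real.pi) : ℝ) : ℂ) *
      (Real.pi / (-Complex.I * E')) ^ (1 / 2 : ℂ) * 2 ^ n * ∫ t : ℝ, zrot t ^ n * g t) := by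
    have hp := hermite_parseval E' hE' n f
    simp_rw [← hg'] at hp
    rw [← hp, ← integral_const_mul]
    congr 1
    ext x
    rw [fres_conj, fres_neg, hφ]
    have : Complex.exp (Complex.I * E' * (x:ℂ) ^ 2) =
        Complex.exp (Complex.I * ((E' / 2 : ℝ) : ℂ) * (x : ℂ) ^ 2) *
        Complex.exp (Complex.I * ((E' / 2 : ℝ) : ℂ) * (x : ℂ) ^ 2) := by
      rw [← Complex.exp_add]; congr 1; push_cast; ring
    rw [this]
    ring
  rw [hcoef, fres_neg, cpow_half_const E' hE']
  have c1 : (((E' / Real.pi) ^ ((1 : ℝ) / 4) : ℝ) : ℂ) * (((E' / Real.pi) ^ ((1 : ℝ) / 4) : ℝ) : ℂ) *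
      ((Real.sqrt (Real.pi / E') : ℝ) : ℂ) = 1 := by
    have hp : 0 < E' / Real.pi := by positivity
    have : (E' / Real.pi) ^ ((1 : ℝ) / 4) * (E' / Real.pi) ^ ((1 : ℝ) / 4) *
        Real.sqrt (Real.pi / E') = 1 := by
      rw [← Real.rpow_add hp, show (1:ℝ) / 4 + 1 / 4 = 1 / 2 by norm_num, ← Real.sqrt_eq_rpow,
        ← Real.sqrt_mul hp.le, show E' / Real.pi * (Real.pi / E') = 1 by
          have := Real.pi_ne_zero; field_simp, Real.sqrt_one]
    exact_mod_cast this
  have c2 : Complex.exp (-(Real.pi / 8 * Complex.I)) * Complex.exp (-(Real.pi / 8 * Complex.I)) *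
      Complex.exp (Real.pi / 4 * Complex.I) = 1 := by
    rw [← Complex.exp_add, ← Complex.exp_add, ← Complex.exp_zero]
    congr 1; ring
  have c3 : (((Real.sqrt (2 ^ n * n.factorial) : ℝ) : ℂ))⁻¹ *
      (((Real.sqrt (2 ^ n * n.factorial) : ℝ) : ℂ))⁻¹ * 2 ^ n = (n.factorial : ℂ)⁻¹ := by
    have h0 : (0:ℝ) ≤ 2 ^ n * n.factorial := by positivity
    rw [← mul_inv, ← Complex.ofReal_mul, Real.mul_self_sqrt h0]
    have : (n.factorial : ℂ) ≠ 0 := by exact_mod_cast n.factorial_ne_zero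
    push_cast
    field_simp
  set a1 := (((E' / Real.pi) ^ ((1 : ℝ) / 4) : ℝ) : ℂ)
  set a2 := ((Real.sqrt (Real.pi / E') : ℝ) : ℂ)
  set b1 := Complex.exp (-(Real.pi / 8 * Complex.I))
  set b2 := Complex.exp (Real.pi / 4 * Complex.I)
  set d1 := (((Real.sqrt (2 ^ n * n.factorial) : ℝ) : ℂ))⁻¹
  set μ := ∫ t : ℝ, zrot t ^ n * g t
  set β := ((Real.sqrt (2 * E') / (2 * Real.pi) : ℝ) : ℂ)
  set X := Complex.exp (Complex.I * ((E' / 2 : ℝ) : ℂ) * (q : ℂ) ^ 2)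
  set H := hermitePoly n (alph E' * q)
  calc X * (β * (H / (n.factorial : ℂ) * μ))
      = X * β * H * μ * (n.factorial : ℂ)⁻¹ := by ring
    _ = (a1 * a1 * a2) * (b1 * b1 * b2) * (d1 * d1 * 2 ^ n) * (X * β * H * μ) := by
        rw [c1, c2, c3]; ring
    _ = _ := by ring
end

section
/- Let α ≥ ½, E′ > 0, and let φ be a Schwartz function on ℝ with Hermite coefficients a_n := ∫_ℝ ψ_n(q) φ(q) dq. Then φ belongs to the Gel'fand–Shilov space S^α_α(ℝ) if and only if the sequence (a_n) has ultrafast falloff, i.e. there exists κ > 0 such that Σ_{n=0}^∞ |a_n|² e^{2Ω(κ√n)} < ∞, where Ω(y) := sup_{m∈ℕ₀} log(y^m m^{−αm}) for y > 0 (with the convention 0⁰ := 1). -/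
open MeasureTheory Filter Complex

/-- Physicists' Hermite polynomials (real version). -/
noncomputable def hermitePolyR : ℕ → ℝ → ℝ
  | 0, _ => 1
  | 1, y => 2 * y
  | (n + 2), y => 2 * y * hermitePolyR (n + 1) y - 2 * (n + 1) * hermitePolyR n y

/-- The `L²`-normalized Hermite (harmonic-oscillator) functions
`ψ_n(q) = (E′/π)^{1/4} (2ⁿ n!)^{−1/2} e^{−E′q²/2} H_n(√(E′) q)`. -/
noncomputable def hermiteFn (E' : ℝ) (n : ℕ) (q : ℝ) : ℝ :=
  (E' / Real.pi) ^ ((1 : ℝ) / 4) * (Real.sqrt (2 ^ n * n.factorial))⁻¹ *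
    Real.exp (-(E' * q ^ 2) / 2) * hermitePolyR n (Real.sqrt E' * q)

/-- Membership in the Gel'fand–Shilov space `S^α_α(ℝ)`. -/
def GelfandShilov (α : ℝ) (φ : ℝ → ℂ) : Prop :=
  ContDiff ℝ (⊤ : ℕ∞) φ ∧ ∃ C > (0 : ℝ), ∃ M > (0 : ℝ), ∀ n m : ℕ, ∀ x : ℝ,
    ‖((x : ℂ)) ^ m * iteratedDeriv n φ x‖
      ≤ C * M ^ (n + m) * (n : ℝ) ^ (α * (n : ℝ)) * (m : ℝ) ^ (α * (m : ℝ))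

/-- `Ω(y) := sup_{m∈ℕ₀} log(y^m m^{−αm})`. -/
noncomputable def Omega (α y : ℝ) : ℝ :=
  ⨆ m : ℕ, Real.log (y ^ m * (m : ℝ) ^ (-(α * (m : ℝ))))

namespace GS

open scoped SchwartzMap ContDiff

lemma hpoly_deriv (n : ℕ) : (∀ y, HasDerivAt (hermitePolyR n) (2 * n * hermitePolyR (n - 1) y) y) ∧
    (∀ y, HasDerivAt (hermitePolyR (n + 1)) (2 * ((n : ℝ) + 1) * hermitePolyR n y) y) := by
  induction n with
  | zero =>
    have h0 : hermitePolyR 0 = fun _ => 1 := by ext y; simp [hermitePolyR]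
    have h1 : hermitePolyR 1 = fun y => 2 * y := by ext y; simp [hermitePolyR]
    refine ⟨fun y => ?_, fun y => ?_⟩
    · rw [h0]; simpa using hasDerivAt_const y (1 : ℝ)
    · simp only [zero_add]
      rw [h1, h0]; simpa using (hasDerivAt_id y).const_mul (2 : ℝ)
  | succ n ih =>
    refine ⟨fun y => ?_, fun y => ?_⟩
    · simpa using ih.2 y
    · have h2 : hermitePolyR (n + 2) = fun y => 2 * y * hermitePolyR (n + 1) y
          - 2 * (n + 1) * hermitePolyR n y := by ext y; simp [hermitePolyR]
      have := (((hasDerivAt_id y).const_mul (2 : ℝ)).mul (ih.2 y)).sub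
        ((ih.1 y).const_mul (2 * ((n : ℝ) + 1)))
      have e : n + 1 + 1 = n + 2 := rfl
      rw [e, h2]
      refine this.congr_deriv ?_
      rcases n with _ | n
      · simp [hermitePolyR]; ring
      · simp only [hermitePolyR, id, Nat.add_sub_cancel]; push_cast; ring

noncomputable def sw (E : ℝ) (n : ℕ) : ℝ := Real.sqrt (2 * E * n)

lemma sw_zero (E : ℝ) : sw E 0 = 0 := by simp [sw]
lemma sw_nonneg (E : ℝ) (n : ℕ) : 0 ≤ sw E n := Real.sqrt_nonneg _
lemma sw_sq {E : ℝ} (hE : 0 < E) (n : ℕ) : sw E n ^ 2 = 2 * E * n :=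
  Real.sq_sqrt (by positivity)

lemma fac_step (n : ℕ) : (Real.sqrt (2 ^ (n + 1) * (n + 1).factorial))⁻¹ * Real.sqrt (2 * (n + 1)) =
    (Real.sqrt (2 ^ n * n.factorial))⁻¹ := by
  have : (2 : ℝ) ^ (n + 1) * (n + 1).factorial = (2 ^ n * n.factorial) * (2 * (n + 1)) := by
    rw [Nat.factorial_succ]; push_cast; ring
  rw [this, Real.sqrt_mul (by positivity)]
  have h : Real.sqrt (2 * ((n : ℝ) + 1)) ≠ 0 := by positivity
  have h' : Real.sqrt ((2 : ℝ) ^ n * n.factorial) ≠ 0 := by positivity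
  field_simp

lemma sw_succ {E : ℝ} (hE : 0 < E) (n : ℕ) : sw E (n + 1) = Real.sqrt E * Real.sqrt (2 * (n + 1)) := by
  rw [sw, ← Real.sqrt_mul hE.le]; push_cast; ring_nf

lemma sq_step (n : ℕ) : Real.sqrt (2 * ((n : ℝ) + 1)) * Real.sqrt (2 * (n + 1)) = 2 * (n + 1) :=
  Real.mul_self_sqrt (by positivity)

lemma hfn_rec {E : ℝ} (hE : 0 < E) (n : ℕ) (q : ℝ) :
    sw E (n + 1) * hermiteFn E (n + 1) q = 2 * E * q * hermiteFn E n q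
      - sw E n * hermiteFn E (n - 1) q := by
  have hsE : Real.sqrt E * Real.sqrt E = E := Real.mul_self_sqrt hE.le
  rcases n with _ | n
  · rw [sw_zero, sw_succ hE]
    have := fac_step 0
    simp only [hermiteFn, hermitePolyR, ← this]
    linear_combination (2 * (E / Real.pi) ^ ((1 : ℝ) / 4) * (Real.sqrt (2 ^ (0 + 1) * (0 + 1).factorial))⁻¹ *
      Real.sqrt (2 * ((0 : ℕ) + 1)) * Real.exp (-(E * q ^ 2) / 2) * q) * hsE
  · rw [sw_succ hE, sw_succ hE]
    have h1 := fac_step n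
    have h2 := fac_step (n + 1)
    have h3 := sq_step n
    simp only [hermiteFn, hermitePolyR, Nat.add_sub_cancel]
    rw [← h1, ← h2]
    push_cast at *
    set A := (Real.sqrt (2 ^ (n + 1 + 1) * (n + 1 + 1).factorial))⁻¹
    set S1 := Real.sqrt (2 * ((n : ℝ) + 1))
    set S2 := Real.sqrt (2 * ((n : ℝ) + 1 + 1))
    set P := (E / Real.pi) ^ ((1 : ℝ) / 4)
    set X := Real.exp (-(E * q ^ 2) / 2)
    set H1 := hermitePolyR (n + 1) (Real.sqrt E * q)
    set H0 := hermitePolyR n (Real.sqrt E * q)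
    linear_combination (P * A * X * S2 * 2 * q * H1) * hsE + (Real.sqrt E * P * A * X * S2 * H0) * h3

lemma hfn_deriv {E : ℝ} (hE : 0 < E) (n : ℕ) (q : ℝ) :
    HasDerivAt (hermiteFn E n) (sw E n * hermiteFn E (n - 1) q - E * q * hermiteFn E n q) q := by
  have h1 : HasDerivAt (fun q : ℝ => Real.exp (-(E * q ^ 2) / 2))
      (Real.exp (-(E * q ^ 2) / 2) * (-E * q)) q := by
    have : HasDerivAt (fun q : ℝ => -(E * q ^ 2) / 2) (-E * q) q := by
      have := ((hasDerivAt_pow 2 q).const_mul (E)).neg.div_const 2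
      refine this.congr_deriv ?_
      norm_num; ring
    exact this.exp
  have h2 : HasDerivAt (fun q : ℝ => hermitePolyR n (Real.sqrt E * q))
      (2 * n * hermitePolyR (n - 1) (Real.sqrt E * q) * Real.sqrt E) q := by
    have := ((hpoly_deriv n).1 (Real.sqrt E * q)).comp q ((hasDerivAt_id q).const_mul (Real.sqrt E))
    simpa [Function.comp_def] using this
  have h3 := ((h1.const_mul ((E / Real.pi) ^ ((1 : ℝ) / 4) * (Real.sqrt (2 ^ n * n.factorial))⁻¹)).mul h2)
  unfold hermiteFn
  refine h3.congr_deriv ?_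
  rcases n with _ | n
  · simp [sw_zero]; ring
  · rw [sw_succ hE]
    have h1 := fac_step n
    have hs := sq_step n
    simp only [Nat.add_sub_cancel]
    rw [← h1]
    push_cast at *
    set A := (Real.sqrt (2 ^ (n + 1) * (n + 1).factorial))⁻¹
    set S1 := Real.sqrt (2 * ((n : ℝ) + 1))
    set P := (E / Real.pi) ^ ((1 : ℝ) / 4)
    set X := Real.exp (-(E * q ^ 2) / 2)
    set H0 := hermitePolyR n (Real.sqrt E * q)
    linear_combination (-Real.sqrt E * P * A * X * H0) * hs

/-! ### The Gaussian as a Schwartz function -/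

lemma pow_gauss_bdd {E : ℝ} (hE : 0 < E) (k : ℕ) :
    ∃ C, ∀ x : ℝ, |x| ^ k * Real.exp (-(E * x ^ 2) / 2) ≤ C := by
  refine ⟨1 + k.factorial * (2 / E) ^ k, fun x => ?_⟩
  have h := Real.pow_div_factorial_le_exp (E * x ^ 2 / 2) (by positivity) k
  have h1 : |x| ^ k ≤ 1 + (x ^ 2) ^ k := by
    rcases le_total (|x|) 1 with h | h
    · have := pow_le_one₀ (n := k) (abs_nonneg x) h
      have : 0 ≤ (x ^ 2) ^ k := by positivity
      linarith
    · rw [← sq_abs, ← pow_mul]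
      have := pow_le_pow_right₀ h (show k ≤ 2 * k by omega)
      linarith
  have e : Real.exp (-(E * x ^ 2) / 2) = (Real.exp (E * x ^ 2 / 2))⁻¹ := by
    rw [← Real.exp_neg]; ring_nf
  rw [e, ← div_eq_mul_inv, div_le_iff₀ (Real.exp_pos _)]
  have h2 : (x ^ 2) ^ k ≤ k.factorial * (2 / E) ^ k * Real.exp (E * x ^ 2 / 2) := by
    rw [div_le_iff₀ (by positivity)] at h
    calc (x ^ 2) ^ k = (2 / E) ^ k * (E * x ^ 2 / 2) ^ k := by
          rw [← mul_pow]; congr 1; field_simp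
      _ ≤ (2 / E) ^ k * (Real.exp (E * x ^ 2 / 2) * k.factorial) := by gcongr
      _ = _ := by ring
  have h3 : 1 ≤ Real.exp (E * x ^ 2 / 2) := Real.one_le_exp (by positivity)
  nlinarith

lemma poly_gauss_bdd {E : ℝ} (hE : 0 < E) (p : Polynomial ℝ) (k : ℕ) :
    ∃ C, ∀ x : ℝ, |x| ^ k * |p.eval x * Real.exp (-(E * x ^ 2) / 2)| ≤ C := by
  induction p using Polynomial.induction_on' with
  | add p q hp hq =>
    obtain ⟨C, hC⟩ := hp
    obtain ⟨C', hC'⟩ := hq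
    refine ⟨C + C', fun x => ?_⟩
    refine le_trans ?_ (add_le_add (hC x) (hC' x))
    rw [← mul_add, Polynomial.eval_add, add_mul]
    gcongr
    exact abs_add_le _ _
  | monomial n a =>
    obtain ⟨C, hC⟩ := pow_gauss_bdd hE (k + n)
    refine ⟨|a| * C, fun x => ?_⟩
    refine le_trans (le_of_eq ?_) (mul_le_mul_of_nonneg_left (hC x) (abs_nonneg a))
    rw [Polynomial.eval_monomial, abs_mul, abs_mul, abs_pow, abs_of_pos (Real.exp_pos _)]; ring

lemma iter_gauss {E : ℝ} (n : ℕ) : ∃ p : Polynomial ℝ,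
    iteratedDeriv n (fun x : ℝ => ((Real.exp (-(E * x ^ 2) / 2) : ℝ) : ℂ)) =
      fun x => ((p.eval x * Real.exp (-(E * x ^ 2) / 2) : ℝ) : ℂ) := by
  induction n with
  | zero => exact ⟨1, by simp⟩
  | succ n ih =>
    obtain ⟨p, hp⟩ := ih
    refine ⟨p.derivative - Polynomial.C E * Polynomial.X * p, ?_⟩
    rw [iteratedDeriv_succ, hp]
    ext x
    have h1 : HasDerivAt (fun q : ℝ => Real.exp (-(E * q ^ 2) / 2))
        (Real.exp (-(E * x ^ 2) / 2) * (-E * x)) x := by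
      have : HasDerivAt (fun q : ℝ => -(E * q ^ 2) / 2) (-E * x) x := by
        have := ((hasDerivAt_pow 2 x).const_mul (E)).neg.div_const 2
        refine this.congr_deriv ?_
        norm_num; ring
      exact this.exp
    have h2 := ((p.hasDerivAt x).mul h1).ofReal_comp
    refine (h2.congr_deriv ?_).deriv
    simp; ring

noncomputable def gaussS (E : ℝ) (hE : 0 < E) : 𝓢(ℝ, ℂ) where
  toFun x := ((Real.exp (-(E * x ^ 2) / 2) : ℝ) : ℂ)
  smooth' := by
    have : ContDiff ℝ ∞ (fun x : ℝ => Real.exp (-(E * x ^ 2) / 2)) := by fun_prop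
    exact Complex.ofRealCLM.contDiff.comp this
  decay' k n := by
    obtain ⟨p, hp⟩ := iter_gauss (E := E) n
    obtain ⟨C, hC⟩ := poly_gauss_bdd hE p k
    refine ⟨C, fun x => ?_⟩
    rw [norm_iteratedFDeriv_eq_norm_iteratedDeriv, hp]
    simp only [Complex.norm_real, Real.norm_eq_abs]
    exact hC x

lemma hpoly_temperate (n : ℕ) : (hermitePolyR n).HasTemperateGrowth ∧
    (hermitePolyR (n + 1)).HasTemperateGrowth := by
  induction n with
  | zero =>
    have h0 : hermitePolyR 0 = fun _ => 1 := by ext y; simp [hermitePolyR]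
    have h1 : hermitePolyR 1 = fun y => 2 * y := by ext y; simp [hermitePolyR]
    rw [h0, zero_add, h1]
    exact ⟨by fun_prop, by fun_prop⟩
  | succ n ih =>
    refine ⟨ih.2, ?_⟩
    have h2 : hermitePolyR (n + 1 + 1) = fun y => 2 * y * hermitePolyR (n + 1) y
          - 2 * (n + 1) * hermitePolyR n y := by ext y; simp [hermitePolyR]
    rw [h2]
    have h3 := ih.1
    have h4 := ih.2
    fun_prop

lemma hcoef_temperate (E : ℝ) (n : ℕ) : (fun q : ℝ => (((E / Real.pi) ^ ((1 : ℝ) / 4) *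
    (Real.sqrt (2 ^ n * n.factorial))⁻¹ * hermitePolyR n (Real.sqrt E * q) : ℝ) : ℂ)).HasTemperateGrowth := by
  have h := (hpoly_temperate n).1
  have h1 : (fun q : ℝ => Real.sqrt E * q).HasTemperateGrowth := by fun_prop
  have h2 := h.comp h1
  have h3 : (fun q : ℝ => ((E / Real.pi) ^ ((1 : ℝ) / 4) *
    (Real.sqrt (2 ^ n * n.factorial))⁻¹ * hermitePolyR n (Real.sqrt E * q) : ℝ)).HasTemperateGrowth :=
    (Function.HasTemperateGrowth.const _).mul h2
  exact Function.Complex.hasTemperateGrowth_ofReal.comp h3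

noncomputable def psiS (E : ℝ) (hE : 0 < E) (n : ℕ) : 𝓢(ℝ, ℂ) :=
  SchwartzMap.smulLeftCLM ℂ (fun q : ℝ => (((E / Real.pi) ^ ((1 : ℝ) / 4) *
    (Real.sqrt (2 ^ n * n.factorial))⁻¹ * hermitePolyR n (Real.sqrt E * q) : ℝ) : ℂ)) (gaussS E hE)

lemma psiS_apply {E : ℝ} (hE : 0 < E) (n : ℕ) (q : ℝ) : psiS E hE n q = (hermiteFn E n q : ℂ) := by
  rw [psiS, SchwartzMap.smulLeftCLM_apply_apply (hcoef_temperate E n)]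
  change _ • ((Real.exp (-(E * q ^ 2) / 2) : ℝ) : ℂ) = _
  simp [hermiteFn]; ring

noncomputable def XS : 𝓢(ℝ, ℂ) →L[ℂ] 𝓢(ℝ, ℂ) := SchwartzMap.smulLeftCLM ℂ (fun x : ℝ => (x : ℂ))
noncomputable def DS : 𝓢(ℝ, ℂ) →L[ℂ] 𝓢(ℝ, ℂ) := SchwartzMap.derivCLM ℂ ℂ

lemma XS_apply (f : 𝓢(ℝ, ℂ)) (x : ℝ) : XS f x = x * f x := by
  rw [XS, SchwartzMap.smulLeftCLM_apply_apply Function.Complex.hasTemperateGrowth_ofReal]; simp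
lemma DS_apply (f : 𝓢(ℝ, ℂ)) (x : ℝ) : DS f x = deriv f x := rfl

/-- Hermite coefficient. -/
noncomputable def cf (E : ℝ) (n : ℕ) (f : ℝ → ℂ) : ℂ := ∫ q : ℝ, ((hermiteFn E n q : ℝ) : ℂ) * f q

lemma int_mul (f g : 𝓢(ℝ, ℂ)) : Integrable (fun x => f x * g x) := by
  have := (SchwartzMap.pairing (ContinuousLinearMap.mul ℂ ℂ) f g).integrable (μ := volume)
  exact this

lemma cf_int {E : ℝ} (hE : 0 < E) (n : ℕ) (f : 𝓢(ℝ, ℂ)) :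
    Integrable (fun q : ℝ => ((hermiteFn E n q : ℝ) : ℂ) * f q) := by
  simpa only [psiS_apply] using int_mul (psiS E hE n) f

lemma psiS_deriv {E : ℝ} (hE : 0 < E) (n : ℕ) (q : ℝ) :
    deriv (psiS E hE n) q = sw E n * hermiteFn E (n - 1) q - E * q * hermiteFn E n q := by
  have h : (psiS E hE n : ℝ → ℂ) = fun q => (hermiteFn E n q : ℂ) := by
    ext q; exact psiS_apply hE n q
  rw [h, ((hfn_deriv hE n q).ofReal_comp).deriv]
  push_cast; rfl

lemma cf_D {E : ℝ} (hE : 0 < E) (n : ℕ) (f : 𝓢(ℝ, ℂ)) :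
    2 * cf E n (DS f) = sw E (n + 1) * cf E (n + 1) f - sw E n * cf E (n - 1) f := by
  have h := SchwartzMap.integral_mul_deriv_eq_neg_deriv_mul (𝕜 := ℂ) (psiS E hE n) f
  have h1 : cf E n (DS f) = ∫ x, psiS E hE n x * deriv f x := by
    simp only [cf, psiS_apply, DS_apply]
  rw [h1, h]
  simp only [cf, ← integral_const_mul, ← integral_neg]
  rw [← integral_sub ((cf_int hE _ f).const_mul _) ((cf_int hE _ f).const_mul _)]
  congr 1
  ext q
  rw [psiS_deriv]
  have := hfn_rec hE n q
  have h2 : (sw E (n + 1) : ℂ) * hermiteFn E (n + 1) q = 2 * E * q * hermiteFn E n q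
      - sw E n * hermiteFn E (n - 1) q := by exact_mod_cast this
  linear_combination (- f q) * h2

lemma cf_X {E : ℝ} (hE : 0 < E) (n : ℕ) (f : 𝓢(ℝ, ℂ)) :
    2 * E * cf E n (XS f) = sw E (n + 1) * cf E (n + 1) f + sw E n * cf E (n - 1) f := by
  simp only [cf, ← integral_const_mul]
  rw [← integral_add ((cf_int hE _ f).const_mul _) ((cf_int hE _ f).const_mul _)]
  congr 1
  ext q
  have := hfn_rec hE n q
  have h2 : (sw E (n + 1) : ℂ) * hermiteFn E (n + 1) q = 2 * E * q * hermiteFn E n q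
      - sw E n * hermiteFn E (n - 1) q := by exact_mod_cast this
  rw [XS_apply]
  linear_combination (- f q) * h2

lemma cf_add {E : ℝ} (hE : 0 < E) (n : ℕ) (f g : 𝓢(ℝ, ℂ)) : cf E n (f + g : 𝓢(ℝ, ℂ)) = cf E n f + cf E n g := by
  simp only [cf]
  rw [← integral_add (cf_int hE _ f) (cf_int hE _ g)]
  congr 1; ext q; simp [mul_add]

lemma cf_smul {E : ℝ} (n : ℕ) (c : ℂ) (f : 𝓢(ℝ, ℂ)) : cf E n (c • f : 𝓢(ℝ, ℂ)) = c * cf E n f := by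
  simp only [cf, ← integral_const_mul]
  congr 1; ext q; simp; ring

noncomputable def AS (E : ℝ) (f : 𝓢(ℝ, ℂ)) : 𝓢(ℝ, ℂ) := (E : ℂ) • XS f + DS f

lemma cf_A {E : ℝ} (hE : 0 < E) (n : ℕ) (f : 𝓢(ℝ, ℂ)) :
    cf E n (AS E f) = sw E (n + 1) * cf E (n + 1) f := by
  rw [AS, cf_add hE, cf_smul]
  linear_combination (1 / 2) * cf_X hE n f + (1 / 2) * cf_D hE n f

/-! ### Orthonormality -/

lemma AS_psi {E : ℝ} (hE : 0 < E) (m : ℕ) :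
    AS E (psiS E hE m) = (sw E m : ℂ) • psiS E hE (m - 1) := by
  ext q
  simp only [AS, add_apply, smul_apply, XS_apply, DS_apply, psiS_deriv,
    psiS_apply, smul_eq_mul]
  ring

lemma cf_symm {E : ℝ} (hE : 0 < E) (n m : ℕ) : cf E n (psiS E hE m) = cf E m (psiS E hE n) := by
  simp only [cf, psiS_apply, mul_comm]

lemma sw_pos {E : ℝ} (hE : 0 < E) (n : ℕ) : 0 < sw E (n + 1) := by
  unfold sw; apply Real.sqrt_pos.2; push_cast; positivity

lemma cf_psi_step {E : ℝ} (hE : 0 < E) (n m : ℕ) :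
    sw E (n + 1) * cf E (n + 1) (psiS E hE m) = sw E m * cf E n (psiS E hE (m - 1)) := by
  rw [← cf_A hE, AS_psi, cf_smul]

lemma cf_zero_zero {E : ℝ} (hE : 0 < E) : cf E 0 (psiS E hE 0) = 1 := by
  have h : ∀ q : ℝ, ((hermiteFn E 0 q : ℝ) : ℂ) * psiS E hE 0 q =
      ((Real.sqrt (E / Real.pi) * Real.exp (-E * q ^ 2) : ℝ) : ℂ) := by
    intro q
    rw [psiS_apply, ← Complex.ofReal_mul]
    congr 1
    have e1 : (E / Real.pi) ^ ((1 : ℝ) / 4) * (E / Real.pi) ^ ((1 : ℝ) / 4) = Real.sqrt (E / Real.pi) := by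
      rw [← Real.rpow_add (by positivity), Real.sqrt_eq_rpow]; norm_num
    have e2 : Real.exp (-(E * q ^ 2) / 2) * Real.exp (-(E * q ^ 2) / 2) = Real.exp (-E * q ^ 2) := by
      rw [← Real.exp_add]; ring_nf
    simp only [hermiteFn, hermitePolyR, ← e1, ← e2]
    simp
    ring
  unfold cf
  simp_rw [h]
  rw [integral_complex_ofReal, integral_const_mul, integral_gaussian, ← Real.sqrt_mul (by positivity)]
  have : E / Real.pi * (Real.pi / E) = 1 := by field_simp
  rw [this]; simp

lemma cf_psi {E : ℝ} (hE : 0 < E) (n m : ℕ) :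
    cf E n (psiS E hE m) = if n = m then 1 else 0 := by
  have key : ∀ k, cf E (k + 1) (psiS E hE 0) = 0 := by
    intro k
    have := cf_psi_step hE k 0
    rw [sw_zero] at this
    have h := sw_pos hE k
    have h' : (sw E (k + 1) : ℂ) ≠ 0 := by exact_mod_cast h.ne'
    simpa [h'] using this
  induction n generalizing m with
  | zero =>
    rcases m with _ | m
    · simpa using cf_zero_zero hE
    · rw [cf_symm, key]; simp
  | succ n ih =>
    rcases m with _ | m
    · simpa using key n
    · have := cf_psi_step hE n (m + 1)
      have h := sw_pos hE n
      have h' : (sw E (n + 1) : ℂ) ≠ 0 := by exact_mod_cast h.ne'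
      rw [Nat.add_sub_cancel, ih] at this
      by_cases e : n = m
      · subst e
        simp only [if_true] at this ⊢
        exact mul_left_cancel₀ h' this
      · simp [e, h'] at this ⊢
        exact this

lemma hfn_mul_int {E : ℝ} (hE : 0 < E) (n m : ℕ) :
    Integrable (fun q => hermiteFn E n q * hermiteFn E m q) := by
  have := (cf_int hE n (psiS E hE m)).re
  refine this.congr (ae_of_all _ fun q => ?_)
  simp [psiS_apply]

lemma hfn_sq_int {E : ℝ} (hE : 0 < E) (n : ℕ) : Integrable (fun q => hermiteFn E n q ^ 2) := by
  simpa only [sq] using hfn_mul_int hE n n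

lemma hfn_sq_integral {E : ℝ} (hE : 0 < E) (n : ℕ) : ∫ q, hermiteFn E n q ^ 2 = 1 := by
  have h := cf_psi hE n n
  simp only [if_true, cf, psiS_apply, ← Complex.ofReal_mul] at h
  rw [integral_complex_ofReal] at h
  simp only [sq]
  exact_mod_cast h

lemma hfn_continuous {E : ℝ} (hE : 0 < E) (n : ℕ) : Continuous (hermiteFn E n) :=
  continuous_iff_continuousAt.2 fun q => (hfn_deriv hE n q).continuousAt

lemma hfn_bound {E : ℝ} (hE : 0 < E) (n : ℕ) (x : ℝ) :
    |hermiteFn E n x| ≤ (1 + 2 * E) * (n + 1) := by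
  set d : ℝ → ℝ := fun q => sw E n * hermiteFn E (n - 1) q - E * q * hermiteFn E n q with hd
  have hd2 : ∀ q, d q = (sw E n * hermiteFn E (n - 1) q - sw E (n + 1) * hermiteFn E (n + 1) q) / 2 := by
    intro q
    have := hfn_rec hE n q
    simp only [hd]; linarith
  have hder : ∀ q, HasDerivAt (fun q => hermiteFn E n q ^ 2) (2 * hermiteFn E n q * d q) q := by
    intro q
    have := (hfn_deriv hE n q).fun_pow 2
    simpa [hd] using this
  set G : ℝ → ℝ := fun q => hermiteFn E n q ^ 2 + (sw E n ^ 2 / 2) * hermiteFn E (n - 1) q ^ 2 +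
    (sw E (n + 1) ^ 2 / 2) * hermiteFn E (n + 1) q ^ 2 with hG
  have hGint : Integrable G :=
    ((hfn_sq_int hE n).add ((hfn_sq_int hE (n - 1)).const_mul _)).add ((hfn_sq_int hE (n + 1)).const_mul _)
  have hGval : ∫ q, G q = 1 + E * (2 * n + 1) := by
    have hA : Integrable (fun q => hermiteFn E n q ^ 2 + (sw E n ^ 2 / 2) * hermiteFn E (n - 1) q ^ 2) :=
      (hfn_sq_int hE n).add ((hfn_sq_int hE (n - 1)).const_mul _)
    simp only [hG]
    rw [integral_add hA
      ((hfn_sq_int hE (n + 1)).const_mul _), integral_add (hfn_sq_int hE n)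
      ((hfn_sq_int hE (n - 1)).const_mul _), integral_const_mul, integral_const_mul,
      hfn_sq_integral hE, hfn_sq_integral hE, hfn_sq_integral hE, sw_sq hE, sw_sq hE]
    push_cast; ring
  have hle : ∀ q, |2 * hermiteFn E n q * d q| ≤ G q := by
    intro q
    have h1 : |2 * hermiteFn E n q * d q| ≤ hermiteFn E n q ^ 2 + d q ^ 2 := by
      rw [abs_le]; constructor <;> nlinarith [sq_nonneg (hermiteFn E n q + d q), sq_nonneg (hermiteFn E n q - d q)]
    have h2 : d q ^ 2 ≤ (sw E n ^ 2 / 2) * hermiteFn E (n - 1) q ^ 2 +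
        (sw E (n + 1) ^ 2 / 2) * hermiteFn E (n + 1) q ^ 2 := by
      rw [hd2]
      nlinarith [sq_nonneg (sw E n * hermiteFn E (n - 1) q + sw E (n + 1) * hermiteFn E (n + 1) q),
        sq_nonneg (sw E n * hermiteFn E (n - 1) q), sq_nonneg (sw E (n + 1) * hermiteFn E (n + 1) q)]
    simp only [hG]; linarith
  have hGnn : ∀ q, 0 ≤ G q := fun q => (abs_nonneg _).trans (hle q)
  have hcd : Continuous (fun q => 2 * hermiteFn E n q * d q) := by
    have := hfn_continuous hE n
    have := hfn_continuous hE (n - 1)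
    simp only [hd]; fun_prop
  have hdint : Integrable (fun q => 2 * hermiteFn E n q * d q) :=
    hGint.mono' hcd.aestronglyMeasurable (ae_of_all _ fun q => hle q)
  have hlim : Tendsto (fun q => hermiteFn E n q ^ 2) atBot (nhds 0) :=
    tendsto_zero_of_hasDerivAt_of_integrableOn_Iic (a := x) (fun q _ => hder q) hdint.integrableOn
      (hfn_sq_int hE n).integrableOn
  have h1 := integral_Iic_of_hasDerivAt_of_tendsto' (a := x) (fun q _ => hder q) hdint.integrableOn hlim
  have h2 : hermiteFn E n x ^ 2 ≤ 1 + E * (2 * n + 1) := by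
    rw [sub_zero] at h1
    rw [← h1, ← hGval]
    calc ∫ q in Set.Iic x, 2 * hermiteFn E n q * d q ≤ ∫ q in Set.Iic x, G q :=
          integral_mono hdint.integrableOn hGint.integrableOn fun q => (le_abs_self _).trans (hle q)
      _ ≤ ∫ q, G q := setIntegral_le_integral hGint (ae_of_all _ hGnn)
  refine abs_le_of_sq_le_sq (h2.trans ?_) (by positivity)
  have hn : (0 : ℝ) ≤ n := Nat.cast_nonneg n
  nlinarith [mul_nonneg hE.le hn, mul_nonneg hn hn, mul_nonneg (mul_nonneg hE.le hn) hn, mul_nonneg hE.le hE.le,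
    mul_nonneg (mul_nonneg hE.le hE.le) hn, mul_nonneg (mul_nonneg (mul_nonneg hE.le hE.le) hn) hn]

/-! ### Completeness -/

lemma int_mul_bdd (g : 𝓢(ℝ, ℂ)) {f : ℝ → ℂ} (hf : Continuous f) {B : ℝ} (hB : ∀ x, ‖f x‖ ≤ B) :
    Integrable (fun x => g x * f x) :=
  g.integrable.mul_bdd (c := B) hf.aestronglyMeasurable (ae_of_all _ hB)

lemma XS_pow_apply (f : 𝓢(ℝ, ℂ)) (k : ℕ) (x : ℝ) : (XS^[k] f) x = (x : ℂ) ^ k * f x := by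
  induction k with
  | zero => simp
  | succ k ih => rw [Function.iterate_succ_apply', XS_apply, ih]; ring

lemma moments_zero {E : ℝ} (hE : 0 < E) {f : ℝ → ℂ} (hf : Continuous f) {B : ℝ} (hB : ∀ x, ‖f x‖ ≤ B)
    (h0 : ∀ n, cf E n f = 0) (k n : ℕ) :
    ∫ q : ℝ, (q : ℂ) ^ k * hermiteFn E n q * f q = 0 := by
  have hIntg : ∀ k n, Integrable (fun q : ℝ => (q : ℂ) ^ k * hermiteFn E n q * f q) := by
    intro k n
    simpa only [XS_pow_apply, psiS_apply] using int_mul_bdd (XS^[k] (psiS E hE n)) hf hB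
  induction k generalizing n with
  | zero => simpa [cf] using h0 n
  | succ k ih =>
    have e : ∀ q : ℝ, (q : ℂ) ^ (k + 1) * hermiteFn E n q * f q =
        (sw E (n + 1) / (2 * E) : ℂ) * ((q : ℂ) ^ k * hermiteFn E (n + 1) q * f q) +
        (sw E n / (2 * E) : ℂ) * ((q : ℂ) ^ k * hermiteFn E (n - 1) q * f q) := by
      intro q
      have := hfn_rec hE n q
      have h2 : (sw E (n + 1) : ℂ) * hermiteFn E (n + 1) q = 2 * E * q * hermiteFn E n q
        - sw E n * hermiteFn E (n - 1) q := by exact_mod_cast this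
      have hE' : (E : ℂ) ≠ 0 := by exact_mod_cast hE.ne'
      field_simp
      linear_combination (- (q : ℂ) ^ k * f q) * h2
    simp_rw [e]
    rw [integral_add ((hIntg _ _).const_mul _) ((hIntg _ _).const_mul _), integral_const_mul,
      integral_const_mul, ih, ih]
    simp

lemma exp_gauss_int {E : ℝ} (hE : 0 < E) (a : ℝ) :
    Integrable (fun x : ℝ => Real.exp |a * x| * hermiteFn E 0 x) := by
  have hc := hfn_continuous hE 0
  have h := (integrable_exp_neg_mul_sq (b := E / 4) (by positivity)).const_mul
    (Real.exp (a ^ 2 / E) * (E / Real.pi) ^ ((1 : ℝ) / 4))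
  refine h.mono' (by fun_prop) (ae_of_all _ fun x => ?_)
  have e : Real.exp |a * x| * hermiteFn E 0 x = (E / Real.pi) ^ ((1 : ℝ) / 4) *
      Real.exp (|a * x| + -(E * x ^ 2) / 2) := by
    rw [Real.exp_add]; simp [hermiteFn, hermitePolyR]; ring
  rw [e, Real.norm_eq_abs, abs_of_nonneg (by positivity), mul_comm (Real.exp (a ^ 2 / E)), mul_assoc,
    ← Real.exp_add]
  refine mul_le_mul_of_nonneg_left (Real.exp_le_exp.2 ?_) (by positivity)
  have h1 : |a * x| ≤ a ^ 2 / E + E * x ^ 2 / 4 := by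
    rw [abs_mul]
    have : a ^ 2 / E + E * x ^ 2 / 4 - |a| * |x| = (|a| - E * |x| / 2) ^ 2 / E := by
      rw [← sq_abs a, ← sq_abs x]; field_simp; ring
    have h2 : 0 ≤ (|a| - E * |x| / 2) ^ 2 / E := by positivity
    linarith
  linarith

open scoped FourierTransform in
lemma complete {E : ℝ} (hE : 0 < E) {f : ℝ → ℂ} (hf : Continuous f) {B : ℝ} (hB : ∀ x, ‖f x‖ ≤ B)
    (h0 : ∀ n, cf E n f = 0) (x : ℝ) : f x = 0 := by
  set F : ℝ → ℂ := fun q => hermiteFn E 0 q * f q with hF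
  have hc := hfn_continuous hE 0
  have hFc : Continuous F := by
    exact (Complex.continuous_ofReal.comp hc).mul hf
  have hpos : ∀ q, 0 < hermiteFn E 0 q := by
    intro q; simp only [hermiteFn, hermitePolyR]; simp; positivity
  have hFi : Integrable F := by
    simpa only [psiS_apply] using int_mul_bdd (psiS E hE 0) hf hB
  have hB0 : 0 ≤ B := (norm_nonneg _).trans (hB 0)
  have hFT : 𝓕 F = 0 := by
    ext ξ
    rw [Real.fourier_real_eq_integral_exp_smul]
    have hs := hasSum_integral_of_dominated_convergence (μ := (volume : Measure ℝ))
      (F := fun (k : ℕ) (v : ℝ) => ((-2 * Real.pi * ξ * I : ℂ) ^ k / k.factorial) * ((v : ℂ) ^ k * hermiteFn E 0 v * f v))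
      (f := fun v => Complex.exp ((↑(-2 * Real.pi * v * ξ) : ℂ) * I) • F v)
      (fun k v => |(2 * Real.pi * ξ) * v| ^ k / k.factorial * (hermiteFn E 0 v * B))
      ?_ ?_ ?_ ?_ ?_
    · have hz : ∀ k : ℕ, ∫ v : ℝ, ((-2 * Real.pi * ξ * I : ℂ) ^ k / k.factorial) * ((v : ℂ) ^ k * hermiteFn E 0 v * f v) = 0 := by
        intro k
        rw [integral_const_mul, moments_zero hE hf hB h0, mul_zero]
      simp only [hz] at hs
      exact hs.unique hasSum_zero
    · intro k
      apply Continuous.aestronglyMeasurable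
      fun_prop
    · intro k
      refine ae_of_all _ fun v => ?_
      simp only [norm_mul, norm_div, norm_pow, Complex.norm_real, Complex.norm_I, abs_mul,
        Real.norm_eq_abs, norm_neg, Complex.norm_natCast, Complex.norm_ofNat, mul_one]
      rw [abs_of_pos (hpos v)]
      have : |(2 : ℝ)| = 2 := by norm_num
      rw [this, mul_pow (2 * |Real.pi| * |ξ|)]
      calc _ = (2 * |Real.pi| * |ξ|) ^ k * |v| ^ k / k.factorial * (hermiteFn E 0 v * ‖f v‖) := by ring
        _ ≤ _ := by
          have := (hpos v).le
          gcongr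
          exact hB v
    · refine ae_of_all _ fun v => ?_
      exact (Real.summable_pow_div_factorial _).mul_right _
    · have e : ∀ v : ℝ, ∑' k : ℕ, |(2 * Real.pi * ξ) * v| ^ k / k.factorial * (hermiteFn E 0 v * B) =
          (Real.exp |(2 * Real.pi * ξ) * v| * hermiteFn E 0 v) * B := by
        intro v
        rw [tsum_mul_right, Real.exp_eq_exp_ℝ, NormedSpace.exp_eq_tsum_div]
        ring
      simp_rw [e]
      exact (exp_gauss_int hE _).mul_const B
    · refine ae_of_all _ fun v => ?_
      have h1 := NormedSpace.expSeries_div_hasSum_exp ((↑(-2 * Real.pi * v * ξ) : ℂ) * I)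
      rw [← Complex.exp_eq_exp_ℂ] at h1
      have h2 := h1.mul_right (F v)
      rw [smul_eq_mul]
      refine HasSum.congr_fun h2 fun k => ?_
      simp only [hF]
      push_cast
      have : (-2 * (Real.pi : ℂ) * v * ξ * I) ^ k = (-2 * (Real.pi : ℂ) * ξ * I) ^ k * (v : ℂ) ^ k := by
        rw [← mul_pow]; ring
      rw [this]; ring
  have hinv := hFc.fourierInv_fourier_eq hFi (by rw [hFT]; exact integrable_zero _ _ _)
  have : F x = 0 := by
    rw [← hinv, hFT]
    rw [Real.fourierInv_eq]; simp only [Pi.zero_apply, smul_zero, integral_zero]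
  have h3 := hpos x
  simp only [hF, mul_eq_zero, Complex.ofReal_eq_zero] at this
  exact this.resolve_left h3.ne'

/-! ### Sup bound from coefficient bounds -/

lemma sup_bound {E : ℝ} (hE : 0 < E) : ∃ C > (0 : ℝ), ∀ (f : 𝓢(ℝ, ℂ)) (T : ℝ), 0 ≤ T →
    (∀ n : ℕ, ((n : ℝ) + 1) ^ 6 * ‖cf E n f‖ ^ 2 ≤ T ^ 2) → ∀ x, ‖f x‖ ≤ C * T := by
  have hsum : Summable (fun n : ℕ => (1 : ℝ) / ((n : ℝ) + 1) ^ 2) := by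
    have := (summable_nat_add_iff 1).2 (Real.summable_one_div_nat_pow.2 (by norm_num : 1 < 2))
    simpa using this
  set Z := ∑' n : ℕ, (1 : ℝ) / ((n : ℝ) + 1) ^ 2 with hZ
  have hZnn : 0 ≤ Z := tsum_nonneg fun n => by positivity
  refine ⟨(1 + 2 * E) * Z + 1, by positivity, fun f T hT hf x => ?_⟩
  have hc : ∀ n : ℕ, ‖cf E n f‖ ≤ T / ((n : ℝ) + 1) ^ 3 := by
    intro n
    rw [le_div_iff₀ (by positivity)]
    refine le_of_sq_le_sq ?_ hT
    calc _ = ((n : ℝ) + 1) ^ 6 * ‖cf E n f‖ ^ 2 := by ring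
      _ ≤ _ := hf n
  have hterm : ∀ (n : ℕ) (x : ℝ), ‖cf E n f * hermiteFn E n x‖ ≤ ((1 + 2 * E) * T) * (1 / ((n : ℝ) + 1) ^ 2) := by
    intro n x
    rw [norm_mul, Complex.norm_real, Real.norm_eq_abs]
    calc _ ≤ (T / ((n : ℝ) + 1) ^ 3) * ((1 + 2 * E) * (n + 1)) := by
          gcongr
          · exact hc n
          · exact hfn_bound hE n x
      _ = _ := by field_simp
  have hsum' := hsum.mul_left ((1 + 2 * E) * T)
  set g : ℝ → ℂ := fun x => ∑' n, cf E n f * hermiteFn E n x with hg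
  have hgc : Continuous g := by
    refine continuous_tsum (fun n => ?_) hsum' hterm
    have := hfn_continuous hE n
    fun_prop
  have hgb : ∀ x, ‖g x‖ ≤ (1 + 2 * E) * T * Z := by
    intro x
    have := tsum_of_norm_bounded hsum'.hasSum (fun n => hterm n x)
    rwa [tsum_mul_left] at this
  have hcg : ∀ n, cf E n g = cf E n f := by
    intro n
    have hi : ∀ m, Integrable (fun q : ℝ => (hermiteFn E n q : ℂ) * (cf E m f * hermiteFn E m q)) := by
      intro m
      have := (cf_int hE n (psiS E hE m)).const_mul (cf E m f)
      refine this.congr (ae_of_all _ fun q => ?_)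
      simp only [psiS_apply]; ring
    have hn : ∀ m, ∫ q : ℝ, ‖(hermiteFn E n q : ℂ) * (cf E m f * hermiteFn E m q)‖ ≤ T * (1 / ((m : ℝ) + 1) ^ 2) := by
      intro m
      have h1 : ∫ q : ℝ, ‖(hermiteFn E n q : ℂ) * (cf E m f * hermiteFn E m q)‖ ≤
          ∫ q : ℝ, ‖cf E m f‖ * (1 / 2) * (hermiteFn E n q ^ 2 + hermiteFn E m q ^ 2) := by
        refine integral_mono (hi m).norm (((hfn_sq_int hE n).add (hfn_sq_int hE m)).const_mul _) fun q => ?_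
        simp only [norm_mul, Complex.norm_real, Real.norm_eq_abs]
        rw [← sq_abs (hermiteFn E n q), ← sq_abs (hermiteFn E m q)]
        have := sq_nonneg (|hermiteFn E n q| - |hermiteFn E m q|)
        nlinarith [norm_nonneg (cf E m f), mul_nonneg (norm_nonneg (cf E m f)) this]
      refine h1.trans ?_
      rw [integral_const_mul, integral_add (hfn_sq_int hE n) (hfn_sq_int hE m), hfn_sq_integral hE,
        hfn_sq_integral hE]
      have h2 := hc m
      have h3 : T / ((m : ℝ) + 1) ^ 3 ≤ T * (1 / ((m : ℝ) + 1) ^ 2) := by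
        rw [mul_one_div]
        apply div_le_div_of_nonneg_left hT (by positivity)
        exact pow_le_pow_right₀ (by linarith [Nat.cast_nonneg (α := ℝ) m]) (by norm_num)
      linarith
    have hs := hasSum_integral_of_summable_integral_norm hi
      (Summable.of_nonneg_of_le (fun m => integral_nonneg fun q => norm_nonneg _) hn (hsum.mul_left T))
    have hv : ∀ m, ∫ q : ℝ, (hermiteFn E n q : ℂ) * (cf E m f * hermiteFn E m q) = if m = n then cf E n f else 0 := by
      intro m
      have := cf_psi hE n m
      simp only [cf, psiS_apply] at this
      have e : ∀ q : ℝ, (hermiteFn E n q : ℂ) * (cf E m f * hermiteFn E m q) =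
        cf E m f * ((hermiteFn E n q : ℂ) * hermiteFn E m q) := fun q => by ring
      simp_rw [e]
      rw [integral_const_mul, this]
      by_cases h : m = n
      · subst h; simp
      · rw [if_neg h, if_neg (Ne.symm h), mul_zero]
    simp only [hv] at hs
    have := hs.unique (hasSum_ite_eq n (cf E n f))
    rw [← this]
    unfold cf
    congr 1; ext q
    simp only [hg, cf, tsum_mul_left]
  obtain ⟨B, hB⟩ : ∃ B, ∀ x, ‖f x‖ ≤ B := by
    obtain ⟨C, hC⟩ := f.decay 0 0
    exact ⟨C, fun x => by simpa using hC.2 x⟩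
  have hzero := complete hE (f := fun x => f x - g x) (f.continuous.sub hgc)
    (B := B + (1 + 2 * E) * T * Z) (fun x => (norm_sub_le _ _).trans (add_le_add (hB x) (hgb x))) (fun n => by
      have h1 := hcg n
      simp only [cf, mul_sub] at h1 ⊢
      have hgi : Integrable (fun q : ℝ => (hermiteFn E n q : ℂ) * g q) := by
        simpa only [psiS_apply] using int_mul_bdd (psiS E hE n) hgc hgb
      rw [integral_sub (cf_int hE n f) hgi, sub_eq_zero]
      exact h1.symm) x
  rw [sub_eq_zero.1 hzero]
  refine (hgb x).trans ?_
  nlinarith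

/-! ### The weights `m ^ (α m)` -/

noncomputable def w (α : ℝ) (a : ℕ) : ℝ := (a : ℝ) ^ (α * (a : ℝ))

lemma w_eq (α : ℝ) (a : ℕ) : w α a = Real.exp (α * (a * Real.log a)) := by
  unfold w
  rcases Nat.eq_zero_or_pos a with h | h
  · subst h; simp
  · rw [Real.rpow_def_of_pos (by exact_mod_cast h)]; ring_nf

lemma w_pos (α : ℝ) (a : ℕ) : 0 < w α a := by rw [w_eq]; exact Real.exp_pos _

lemma w_zero (α : ℝ) : w α 0 = 1 := by simp [w]

lemma xlog_add (a b : ℕ) : ((a + b : ℕ) : ℝ) * Real.log ((a + b : ℕ) : ℝ) ≤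
    ((a + b : ℕ) : ℝ) + (a * Real.log a + b * Real.log b) := by
  have key : ∀ a b : ℕ, (a : ℝ) * Real.log ((a + b : ℕ) : ℝ) ≤ a * Real.log a + b := by
    intro a b
    rcases Nat.eq_zero_or_pos a with h | h
    · subst h; simp
    · have ha : (0 : ℝ) < a := by exact_mod_cast h
      have hab : (0 : ℝ) < (a + b : ℕ) := by push_cast; positivity
      have h1 := Real.log_le_sub_one_of_pos (div_pos hab ha)
      rw [Real.log_div hab.ne' ha.ne'] at h1
      have h2 := mul_le_mul_of_nonneg_left h1 ha.le
      have h3 : (a : ℝ) * (((a + b : ℕ) : ℝ) / a - 1) = b := by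
        push_cast; field_simp; ring
      rw [h3] at h2
      linarith
  have h1 := key a b
  have h2 := key b a
  rw [add_comm b a] at h2
  have e : ((a + b : ℕ) : ℝ) * Real.log ((a + b : ℕ) : ℝ) =
    a * Real.log ((a + b : ℕ) : ℝ) + b * Real.log ((a + b : ℕ) : ℝ) := by push_cast; ring
  rw [e]
  have : ((a + b : ℕ) : ℝ) = a + b := by push_cast; ring
  linarith

lemma w_add {α : ℝ} (hα : 0 ≤ α) (a b : ℕ) :
    w α (a + b) ≤ Real.exp α ^ (a + b) * (w α a * w α b) := by
  rw [w_eq, w_eq, w_eq, ← Real.exp_nat_mul, ← Real.exp_add, ← Real.exp_add]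
  apply Real.exp_le_exp.2
  have := mul_le_mul_of_nonneg_left (xlog_add a b) hα
  linarith

lemma w_le_pow {α : ℝ} (hα : 0 ≤ α) {a N : ℕ} (h : a ≤ N) : w α a ≤ ((N : ℝ) ^ α) ^ a := by
  rw [← Real.rpow_natCast, ← Real.rpow_mul (by positivity)]
  exact Real.rpow_le_rpow (by positivity) (by exact_mod_cast h) (by positivity)

lemma w_self (α : ℝ) (N : ℕ) : w α N = ((N : ℝ) ^ α) ^ N := by
  rw [← Real.rpow_natCast, ← Real.rpow_mul (by positivity)]; rfl

lemma le_R_sq {α : ℝ} (hα : 1 / 2 ≤ α) {N : ℕ} (hN : 1 ≤ N) : (N : ℝ) ≤ ((N : ℝ) ^ α) ^ 2 := by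
  rw [← Real.rpow_natCast, ← Real.rpow_mul (by positivity)]
  calc (N : ℝ) = (N : ℝ) ^ (1 : ℝ) := by simp
    _ ≤ _ := Real.rpow_le_rpow_of_exponent_le (by exact_mod_cast hN) (by push_cast; linarith)

lemma pow_self_le {α : ℝ} (hα : 1 / 2 ≤ α) (k : ℕ) : (k : ℝ) ^ k ≤ w α k ^ 2 := by
  rcases Nat.eq_zero_or_pos k with h | h
  · subst h; simp [w_zero]
  · rw [w_self, ← pow_mul, mul_comm, pow_mul]
    exact pow_le_pow_left₀ (by positivity) (le_R_sq hα h) _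

/-! ### Iterated operators -/

lemma DS_iter (g : 𝓢(ℝ, ℂ)) (b : ℕ) : ((DS^[b] g : 𝓢(ℝ, ℂ)) : ℝ → ℂ) = iteratedDeriv b g := by
  induction b with
  | zero => simp
  | succ b ih =>
    rw [Function.iterate_succ_apply', iteratedDeriv_succ, ← ih]
    ext x; exact DS_apply _ x

lemma DS_XS (g : 𝓢(ℝ, ℂ)) : DS (XS g) = XS (DS g) + g := by
  ext x
  rw [DS_apply, add_apply, XS_apply, DS_apply]
  have h : (XS g : ℝ → ℂ) = fun x : ℝ => (x : ℂ) * g x := by ext x; exact XS_apply g x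
  rw [h]
  have := (Complex.ofRealCLM.hasDerivAt (x := x)).mul (g.hasDerivAt x)
  refine (this.congr_deriv ?_).deriv
  simp; ring

lemma DS_iter_XS (g : 𝓢(ℝ, ℂ)) (b : ℕ) :
    DS^[b] (XS g) = XS (DS^[b] g) + (b : ℂ) • DS^[b - 1] g := by
  induction b with
  | zero => simp
  | succ b ih =>
    rw [Function.iterate_succ_apply', ih, map_add, DS_XS, map_smul, Function.iterate_succ_apply',
      Nat.add_sub_cancel]
    rcases b with _ | b
    · simp
    · rw [Nat.add_sub_cancel, ← Function.iterate_succ_apply' DS b g]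
      push_cast
      module

lemma DS_iter_AS (E : ℝ) (g : 𝓢(ℝ, ℂ)) (a b : ℕ) (x : ℝ) :
    (x : ℂ) ^ a * (DS^[b] (AS E g)) x = E * ((x : ℂ) ^ (a + 1) * (DS^[b] g) x)
      + E * (b * ((x : ℂ) ^ a * (DS^[b - 1] g) x)) + (x : ℂ) ^ a * (DS^[b + 1] g) x := by
  have e : DS^[b] (AS E g) = (E : ℂ) • (XS (DS^[b] g) + (b : ℂ) • DS^[b - 1] g) + DS^[b + 1] g := by
    rw [AS, iterate_map_add, ← DS_iter_XS]
    congr 1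
    exact (Function.Commute.iterate_left (fun y => by simp : Function.Commute DS ((E : ℂ) • ·)) b (XS g))
  rw [e]
  simp only [add_apply, smul_apply, XS_apply, smul_eq_mul]
  ring

lemma A_bound {α E : ℝ} (hα : 1 / 2 ≤ α) (hE : 0 < E) (φ : 𝓢(ℝ, ℂ)) {C M : ℝ} (hC : 0 < C) (hM : 1 ≤ M)
    (h : ∀ n m : ℕ, ∀ x : ℝ, ‖((x : ℂ)) ^ m * iteratedDeriv n φ x‖ ≤ C * M ^ (n + m) * w α n * w α m)
    {N : ℕ} (hN : 1 ≤ N) (k : ℕ) : ∀ a b : ℕ, a + b + k ≤ N → ∀ x : ℝ,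
    ‖(x : ℂ) ^ a * (DS^[b] ((AS E)^[k] φ)) x‖ ≤
      C * M ^ (a + b + k) * (1 + 2 * E) ^ k * ((N : ℝ) ^ α) ^ (a + b + k) := by
  have hα0 : 0 ≤ α := by linarith
  set R := (N : ℝ) ^ α with hR
  have hR0 : 0 < R := by positivity
  induction k with
  | zero =>
    intro a b hab x
    simp only [Function.iterate_zero, id, DS_iter, add_zero, pow_zero, mul_one]
    refine (h b a x).trans ?_
    have h1 := w_le_pow hα0 (show b ≤ N by omega)
    have h2 := w_le_pow hα0 (show a ≤ N by omega)
    calc _ ≤ C * M ^ (b + a) * R ^ b * R ^ a := by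
          have := w_pos α a
          gcongr
      _ = _ := by rw [add_comm b a, pow_add R]; ring
  | succ k ih =>
    intro a b hab x
    rw [Function.iterate_succ_apply', DS_iter_AS]
    set g := (AS E)^[k] φ with hg
    set Q := C * M ^ (a + b + (k + 1)) * (1 + 2 * E) ^ k * R ^ (a + b + (k + 1)) with hQ
    have hE1 : ‖(E : ℂ)‖ = E := by rw [Complex.norm_real, Real.norm_eq_abs, abs_of_pos hE]
    have h1 : ‖(x : ℂ) ^ (a + 1) * (DS^[b] g) x‖ ≤ Q := by
      have := ih (a + 1) b (by omega) x
      rwa [show a + 1 + b + k = a + b + (k + 1) by ring] at this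
    have h3 : ‖(x : ℂ) ^ a * (DS^[b + 1] g) x‖ ≤ Q := by
      have := ih a (b + 1) (by omega) x
      rwa [show a + (b + 1) + k = a + b + (k + 1) by ring] at this
    have h2 : ‖(b : ℂ) * ((x : ℂ) ^ a * (DS^[b - 1] g) x)‖ ≤ Q := by
      rcases b with _ | b
      · simp; positivity
      · have := ih a b (by omega) x
        rw [norm_mul, Nat.add_sub_cancel, Complex.norm_natCast]
        have hb : ((b + 1 : ℕ) : ℝ) ≤ R ^ 2 :=
          le_trans (by exact_mod_cast (by omega)) (le_R_sq hα hN)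
        calc _ ≤ R ^ 2 * (C * M ^ (a + b + k) * (1 + 2 * E) ^ k * R ^ (a + b + k)) := by
              gcongr
          _ ≤ R ^ 2 * (C * M ^ (a + (b + 1) + (k + 1)) * (1 + 2 * E) ^ k * R ^ (a + b + k)) := by
              gcongr <;> omega
          _ = _ := by rw [hQ, show a + (b + 1) + (k + 1) = a + b + k + 2 by ring]; ring
    calc _ ≤ E * Q + E * Q + Q := by
          refine (norm_add_le _ _).trans (add_le_add ((norm_add_le _ _).trans (add_le_add ?_ ?_)) h3)
          · rw [norm_mul, hE1]; gcongr
          · rw [norm_mul, hE1]; gcongr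
      _ = _ := by rw [hQ]; ring

lemma cf_le {E : ℝ} (hE : 0 < E) (n : ℕ) (f : 𝓢(ℝ, ℂ)) {S : ℝ} (hS : 0 < S)
    (h : ∀ x : ℝ, (1 + x ^ 2) * ‖f x‖ ≤ S) : ‖cf E n f‖ ≤ 3 * S := by
  have hI : Integrable (fun x : ℝ => (S / 2) * (hermiteFn E n x ^ 2 + (1 + x ^ 2)⁻¹)) :=
    ((hfn_sq_int hE n).add integrable_inv_one_add_sq).const_mul _
  have h1 : ‖cf E n f‖ ≤ ∫ x : ℝ, (S / 2) * (hermiteFn E n x ^ 2 + (1 + x ^ 2)⁻¹) := by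
    refine norm_integral_le_of_norm_le hI (ae_of_all _ fun x => ?_)
    rw [norm_mul, Complex.norm_real, Real.norm_eq_abs]
    have hx : 0 < 1 + x ^ 2 := by positivity
    have h2 : ‖f x‖ ≤ S * (1 + x ^ 2)⁻¹ := by
      rw [← div_eq_mul_inv, le_div_iff₀ hx]; linarith [h x]
    set y := (1 + x ^ 2)⁻¹ with hy
    have hy0 : 0 < y := by positivity
    have hy1 : y ≤ 1 := inv_le_one_of_one_le₀ (by nlinarith [sq_nonneg x])
    rw [← sq_abs (hermiteFn E n x)]
    set v := |hermiteFn E n x|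
    have hv : 0 ≤ v := abs_nonneg _
    calc v * ‖f x‖ ≤ v * (S * y) := by gcongr
      _ = S * (v * y) := by ring
      _ ≤ S * ((v ^ 2 + y) / 2) := by
          gcongr
          nlinarith [sq_nonneg (v - y)]
      _ = _ := by ring
  refine h1.trans ?_
  rw [integral_const_mul, integral_add (hfn_sq_int hE n) integrable_inv_one_add_sq,
    hfn_sq_integral hE, integral_univ_inv_one_add_sq]
  nlinarith [Real.pi_lt_four]

lemma cf_A_iter {E : ℝ} (hE : 0 < E) (k n : ℕ) (f : 𝓢(ℝ, ℂ)) :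
    ‖cf E n ((AS E)^[k] f)‖ ^ 2 = (2 * E) ^ k * ((n + k).descFactorial k : ℝ) * ‖cf E (n + k) f‖ ^ 2 := by
  induction k generalizing f with
  | zero => simp
  | succ k ih =>
    rw [Function.iterate_succ_apply, ih, cf_A hE, norm_mul, Complex.norm_real,
      Real.norm_eq_abs, mul_pow |_|, sq_abs, sw_sq hE, ← add_assoc, Nat.succ_descFactorial_succ]
    push_cast; ring

/-- The intermediate condition on the coefficients. -/
def CoefBound (α E : ℝ) (φ : 𝓢(ℝ, ℂ)) : Prop :=
  ∃ C > (0 : ℝ), ∃ K > (0 : ℝ), ∀ k n : ℕ, (n : ℝ) ^ k * ‖cf E n φ‖ ^ 2 ≤ C * K ^ k * w α k ^ 2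

lemma coef_of_GS {α E : ℝ} (hα : 1 / 2 ≤ α) (hE : 0 < E) (φ : 𝓢(ℝ, ℂ))
    (hG : GelfandShilov α (fun q => φ q)) : CoefBound α E φ := by
  have hα0 : 0 ≤ α := by linarith
  obtain ⟨-, C, hC, M', hM', h'⟩ := hG
  set M := max M' 1 with hMdef
  have hM : 1 ≤ M := le_max_right _ _
  have h : ∀ n m : ℕ, ∀ x : ℝ, ‖((x : ℂ)) ^ m * iteratedDeriv n φ x‖ ≤ C * M ^ (n + m) * w α n * w α m := by
    intro n m x
    refine (h' n m x).trans ?_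
    change C * M' ^ (n + m) * w α n * w α m ≤ _
    have h1 := w_pos α n
    have h2 := w_pos α m
    gcongr
    exact le_max_left _ _
  set L := Real.exp α with hL
  have hL0 : 0 < L := Real.exp_pos _
  set C1 := 2 * C * M ^ 2 * L ^ 2 * w α 2 with hC1
  have hw2 := w_pos α 2
  have hC1p : 0 < C1 := by positivity
  set K1 := M * (1 + 2 * E) * L with hK1
  have hK1p : 0 < K1 := by positivity
  have hS : ∀ (k : ℕ) (x : ℝ), (1 + x ^ 2) * ‖((AS E)^[k] φ) x‖ ≤ C1 * K1 ^ k * w α k := by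
    intro k x
    have a0 := A_bound hα hE φ hC hM h (N := k + 2) (by omega) k 0 0 (by omega) x
    have a2 := A_bound hα hE φ hC hM h (N := k + 2) (by omega) k 2 0 (by omega) x
    set R := ((k + 2 : ℕ) : ℝ) ^ α with hR
    have hR1 : 1 ≤ R := Real.one_le_rpow (by push_cast; linarith [Nat.cast_nonneg (α := ℝ) k]) hα0
    have hRw : R ^ (k + 2) ≤ L ^ (k + 2) * (w α k * w α 2) := by
      rw [hR, ← w_self]; exact w_add hα0 k 2
    simp only [Function.iterate_zero, id, pow_zero, one_mul, norm_mul, norm_pow, Complex.norm_real,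
      Real.norm_eq_abs, sq_abs, zero_add, add_zero] at a0 a2
    rw [add_comm 2 k] at a2
    have a0' : C * M ^ k * (1 + 2 * E) ^ k * R ^ k ≤ C * M ^ (k + 2) * (1 + 2 * E) ^ k * R ^ (k + 2) := by
      gcongr <;> omega
    calc (1 + x ^ 2) * ‖((AS E)^[k] φ) x‖ ≤ 2 * (C * M ^ (k + 2) * (1 + 2 * E) ^ k * R ^ (k + 2)) := by
          linarith
      _ ≤ 2 * (C * M ^ (k + 2) * (1 + 2 * E) ^ k * (L ^ (k + 2) * (w α k * w α 2))) := by gcongr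
      _ = _ := by rw [hC1, hK1, mul_pow, mul_pow]; ring
  have hcf : ∀ k n : ℕ, ‖cf E n ((AS E)^[k] φ)‖ ≤ 3 * (C1 * K1 ^ k * w α k) := fun k n =>
    cf_le hE n _ (by have := w_pos α k; positivity) (hS k)
  refine ⟨9 * C1 ^ 2, by positivity, K1 ^ 2 / E + 2, by positivity, fun k n => ?_⟩
  have hwk := w_pos α k
  by_cases hkn : 2 * k ≤ n
  · have h1 := cf_A_iter hE k (n - k) φ
    rw [Nat.sub_add_cancel (by omega)] at h1
    have h2 : ‖cf E (n - k) ((AS E)^[k] φ)‖ ^ 2 ≤ (3 * (C1 * K1 ^ k * w α k)) ^ 2 := by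
      gcongr; exact hcf k _
    rw [h1] at h2
    have h3 : (n : ℝ) ^ k ≤ 2 ^ k * (n.descFactorial k : ℝ) := by
      have e1 : n ^ k ≤ 2 ^ k * n.descFactorial k := by
        calc n ^ k ≤ (2 * (n + 1 - k)) ^ k := Nat.pow_le_pow_left (by omega) k
          _ = 2 ^ k * (n + 1 - k) ^ k := mul_pow _ _ _
          _ ≤ _ := Nat.mul_le_mul_left _ (Nat.pow_sub_le_descFactorial n k)
      exact_mod_cast e1
    calc (n : ℝ) ^ k * ‖cf E n φ‖ ^ 2 ≤ (2 ^ k * (n.descFactorial k : ℝ)) * ‖cf E n φ‖ ^ 2 := by gcongr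
      _ = (1 / E) ^ k * ((2 * E) ^ k * (n.descFactorial k : ℝ) * ‖cf E n φ‖ ^ 2) := by
          rw [mul_pow 2 E, one_div, inv_pow]; field_simp
      _ ≤ (1 / E) ^ k * (3 * (C1 * K1 ^ k * w α k)) ^ 2 := by gcongr
      _ = 9 * C1 ^ 2 * (K1 ^ 2 / E) ^ k * w α k ^ 2 := by
          rw [one_div, inv_pow, div_pow, ← pow_mul, mul_comm 2 k, pow_mul]; field_simp; ring
      _ ≤ _ := by
          gcongr
          linarith
  · have h1 : ‖cf E n φ‖ ≤ 3 * C1 := by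
      have := hcf 0 n
      simpa [w_zero] using this
    have h2 : (n : ℝ) ≤ 2 * k := by
      have : n ≤ 2 * k := by omega
      exact_mod_cast this
    calc (n : ℝ) ^ k * ‖cf E n φ‖ ^ 2 ≤ (2 * k) ^ k * (3 * C1) ^ 2 := by gcongr
      _ = 9 * C1 ^ 2 * 2 ^ k * (k : ℝ) ^ k := by rw [mul_pow 2]; ring
      _ ≤ 9 * C1 ^ 2 * (K1 ^ 2 / E + 2) ^ k * w α k ^ 2 := by
          gcongr
          · have : 0 < K1 ^ 2 / E := by positivity
            linarith
          · exact pow_self_le hα k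


/-! ### From coefficient bounds to function bounds -/

/-- Operators which act like a first-order tridiagonal matrix on coefficients. -/
def OpB (E κ : ℝ) (O : 𝓢(ℝ, ℂ) → 𝓢(ℝ, ℂ)) : Prop :=
  ∀ (f : 𝓢(ℝ, ℂ)) (n : ℕ), ‖cf E n (O f)‖ ^ 2 ≤
    κ * (((n : ℝ) + 1) * ‖cf E (n + 1) f‖ ^ 2 + n * ‖cf E (n - 1) f‖ ^ 2)

lemma sq_aux {E : ℝ} (hE : 0 < E) (n : ℕ) (u v z : ℂ)
    (h : ‖z‖ ≤ ‖(sw E (n + 1) : ℂ) * u‖ + ‖(sw E n : ℂ) * v‖) :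
    ‖z‖ ^ 2 ≤ 4 * E * (((n : ℝ) + 1) * ‖u‖ ^ 2 + n * ‖v‖ ^ 2) := by
  rw [norm_mul, norm_mul, Complex.norm_real, Complex.norm_real, Real.norm_eq_abs, Real.norm_eq_abs,
    abs_of_nonneg (sw_nonneg _ _), abs_of_nonneg (sw_nonneg _ _)] at h
  have h1 := sw_sq hE n
  have h2 := sw_sq hE (n + 1)
  push_cast at h2
  calc ‖z‖ ^ 2 ≤ (sw E (n + 1) * ‖u‖ + sw E n * ‖v‖) ^ 2 := by gcongr
    _ ≤ 2 * (sw E (n + 1) ^ 2 * ‖u‖ ^ 2 + sw E n ^ 2 * ‖v‖ ^ 2) := by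
        nlinarith [sq_nonneg (sw E (n + 1) * ‖u‖ - sw E n * ‖v‖)]
    _ = _ := by rw [h1, h2]; ring

lemma opB_X {E : ℝ} (hE : 0 < E) : OpB E (1 / E + E) (fun f => XS f) := by
  intro f n
  have h := sq_aux hE n (cf E (n + 1) f) (cf E (n - 1) f) (2 * E * cf E n (XS f))
    (by rw [cf_X hE]; exact norm_add_le _ _)
  set P := ((n : ℝ) + 1) * ‖cf E (n + 1) f‖ ^ 2 + n * ‖cf E (n - 1) f‖ ^ 2 with hP
  have hP0 : 0 ≤ P := by positivity
  have e : ‖(2 * E * cf E n (XS f) : ℂ)‖ ^ 2 = 4 * E ^ 2 * ‖cf E n (XS f)‖ ^ 2 := by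
    rw [norm_mul, norm_mul, Complex.norm_real, Real.norm_eq_abs, abs_of_pos hE]
    norm_num; ring
  rw [e] at h
  have h2 : ‖cf E n (XS f)‖ ^ 2 ≤ 1 / E * P := by
    rw [div_mul_eq_mul_div, one_mul, le_div_iff₀ hE]
    have : 0 < 4 * E := by positivity
    refine le_of_mul_le_mul_left ?_ this
    linarith
  have : 0 ≤ E * P := by positivity
  calc _ ≤ _ := h2
    _ ≤ _ := by rw [add_mul]; linarith

lemma opB_D {E : ℝ} (hE : 0 < E) : OpB E (1 / E + E) (fun f => DS f) := by
  intro f n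
  have h := sq_aux hE n (cf E (n + 1) f) (cf E (n - 1) f) (2 * cf E n (DS f))
    (by rw [cf_D hE]; exact norm_sub_le _ _)
  set P := ((n : ℝ) + 1) * ‖cf E (n + 1) f‖ ^ 2 + n * ‖cf E (n - 1) f‖ ^ 2 with hP
  have hP0 : 0 ≤ P := by positivity
  have e : ‖(2 * cf E n (DS f) : ℂ)‖ ^ 2 = 4 * ‖cf E n (DS f)‖ ^ 2 := by
    rw [norm_mul]
    norm_num; ring
  rw [e] at h
  have : 0 ≤ 1 / E * P := by positivity
  calc _ ≤ E * P := by linarith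
    _ ≤ _ := by rw [add_mul]; linarith

lemma step {E κ : ℝ} (hκ : 0 ≤ κ) {O : 𝓢(ℝ, ℂ) → 𝓢(ℝ, ℂ)} (hO : OpB E κ O) (f : 𝓢(ℝ, ℂ))
    (s m : ℕ) (T : ℝ) (h : ∀ n : ℕ, ((n + (s + 1) : ℕ) : ℝ) ^ (m + 1) * ‖cf E n f‖ ^ 2 ≤ T) (n : ℕ) :
    ((n + s : ℕ) : ℝ) ^ m * ‖cf E n (O f)‖ ^ 2 ≤ (2 * κ + 1) * T := by
  have hT : 0 ≤ T := le_trans (by positivity) (h 0)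
  have h1 : ((n + s : ℕ) : ℝ) ^ m * (((n : ℝ) + 1) * ‖cf E (n + 1) f‖ ^ 2) ≤ T := by
    refine le_trans ?_ (h (n + 1))
    rw [← mul_assoc, pow_succ _ m]
    have hs := Nat.cast_nonneg (α := ℝ) s
    refine mul_le_mul_of_nonneg_right (mul_le_mul (pow_le_pow_left₀ (by positivity) ?_ m) ?_
      (by positivity) (by positivity)) (by positivity)
    · push_cast; linarith
    · push_cast; linarith
  have h2 : ((n + s : ℕ) : ℝ) ^ m * ((n : ℝ) * ‖cf E (n - 1) f‖ ^ 2) ≤ T := by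
    rcases n with _ | n
    · simpa using hT
    · refine le_trans ?_ (h n)
      rw [← mul_assoc, pow_succ _ m, Nat.add_sub_cancel]
      have hs := Nat.cast_nonneg (α := ℝ) s
      refine mul_le_mul_of_nonneg_right (mul_le_mul (pow_le_pow_left₀ (by positivity) ?_ m) ?_
        (by positivity) (by positivity)) (by positivity)
      · push_cast; linarith
      · push_cast; linarith
  calc _ ≤ ((n + s : ℕ) : ℝ) ^ m * (κ * (((n : ℝ) + 1) * ‖cf E (n + 1) f‖ ^ 2 + n * ‖cf E (n - 1) f‖ ^ 2)) := by
        gcongr; exact hO f n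
    _ = κ * (((n + s : ℕ) : ℝ) ^ m * (((n : ℝ) + 1) * ‖cf E (n + 1) f‖ ^ 2)
        + ((n + s : ℕ) : ℝ) ^ m * ((n : ℝ) * ‖cf E (n - 1) f‖ ^ 2)) := by ring
    _ ≤ κ * (T + T) := by gcongr
    _ ≤ _ := by linarith

lemma step_iter {E κ : ℝ} (hκ : 0 ≤ κ) {O : 𝓢(ℝ, ℂ) → 𝓢(ℝ, ℂ)} (hO : OpB E κ O) (b : ℕ) :
    ∀ (f : 𝓢(ℝ, ℂ)) (s m : ℕ) (T : ℝ),
    (∀ n : ℕ, ((n + (s + b) : ℕ) : ℝ) ^ (m + b) * ‖cf E n f‖ ^ 2 ≤ T) → ∀ n : ℕ,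
    ((n + s : ℕ) : ℝ) ^ m * ‖cf E n (O^[b] f)‖ ^ 2 ≤ (2 * κ + 1) ^ b * T := by
  induction b with
  | zero => intro f s m T h n; simpa using h n
  | succ b ih =>
    intro f s m T h n
    rw [Function.iterate_succ_apply]
    have := ih (O f) s m ((2 * κ + 1) * T) (step hκ hO f (s + b) (m + b) T h) n
    rwa [← mul_assoc, ← pow_succ] at this

lemma CoefBound.one_le {α E : ℝ} {φ : 𝓢(ℝ, ℂ)} (h : CoefBound α E φ) :
    ∃ C ≥ (1 : ℝ), ∃ K ≥ (1 : ℝ), ∀ k n : ℕ, (n : ℝ) ^ k * ‖cf E n φ‖ ^ 2 ≤ C * K ^ k * w α k ^ 2 := by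
  obtain ⟨C, hC, K, hK, h⟩ := h
  refine ⟨max C 1, le_max_right _ _, max K 1, le_max_right _ _, fun k n => (h k n).trans ?_⟩
  gcongr
  · exact le_max_left _ _
  · exact le_max_left _ _

lemma GS_of_coef {α E : ℝ} (hα : 1 / 2 ≤ α) (hE : 0 < E) (φ : 𝓢(ℝ, ℂ))
    (hc : CoefBound α E φ) : GelfandShilov α (fun q => φ q) := by
  have hα0 : 0 ≤ α := by linarith
  obtain ⟨C, hC, K, hK, h⟩ := hc.one_le
  obtain ⟨Cs, hCs, hsup⟩ := sup_bound hE
  set κ := 2 * (1 / E + E) + 1 with hκd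
  have hκ' : 0 ≤ 1 / E + E := by positivity
  have hκ : 1 ≤ κ := by linarith
  set L := Real.exp α with hL
  have hL0 : 0 < L := Real.exp_pos _
  have hw6 := w_pos α 6
  have main : ∀ P n : ℕ, ((n + P : ℕ) : ℝ) ^ P * ‖cf E n φ‖ ^ 2 ≤ (2 * C * (2 * K) ^ P * w α P) ^ 2 := by
    intro P n
    have hwP := w_pos α P
    have h0 : ‖cf E n φ‖ ^ 2 ≤ C := by simpa [w_zero] using h 0 n
    have e1 : ((n + P : ℕ) : ℝ) ^ P ≤ 2 ^ P * ((n : ℝ) ^ P + (P : ℝ) ^ P) := by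
      rcases le_total n P with hh | hh
      · have : ((n + P : ℕ) : ℝ) ≤ 2 * P := by exact_mod_cast (by omega : n + P ≤ 2 * P)
        calc ((n + P : ℕ) : ℝ) ^ P ≤ (2 * P) ^ P := by gcongr
          _ = 2 ^ P * (0 + (P : ℝ) ^ P) := by rw [mul_pow, zero_add]
          _ ≤ _ := by gcongr; positivity
      · have : ((n + P : ℕ) : ℝ) ≤ 2 * n := by exact_mod_cast (by omega : n + P ≤ 2 * n)
        calc ((n + P : ℕ) : ℝ) ^ P ≤ (2 * n) ^ P := by gcongr
          _ = 2 ^ P * ((n : ℝ) ^ P + 0) := by rw [mul_pow, add_zero]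
          _ ≤ _ := by gcongr; positivity
    have hKP : 1 ≤ K ^ P := one_le_pow₀ hK
    have e2 : (P : ℝ) ^ P * ‖cf E n φ‖ ^ 2 ≤ C * K ^ P * w α P ^ 2 := by
      calc (P : ℝ) ^ P * ‖cf E n φ‖ ^ 2 ≤ w α P ^ 2 * C := by
            gcongr; exact pow_self_le hα P
        _ = C * 1 * w α P ^ 2 := by ring
        _ ≤ _ := by gcongr
    have h2P : (1 : ℝ) ≤ 2 ^ P := one_le_pow₀ (by norm_num)
    calc _ ≤ 2 ^ P * ((n : ℝ) ^ P + (P : ℝ) ^ P) * ‖cf E n φ‖ ^ 2 := by gcongr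
      _ = 2 ^ P * ((n : ℝ) ^ P * ‖cf E n φ‖ ^ 2 + (P : ℝ) ^ P * ‖cf E n φ‖ ^ 2) := by ring
      _ ≤ 2 ^ P * (C * K ^ P * w α P ^ 2 + C * K ^ P * w α P ^ 2) := by
          exact mul_le_mul_of_nonneg_left (add_le_add (h P n) e2) (by positivity)
      _ = (2 * C * (2 ^ P * K ^ P)) * w α P ^ 2 := by ring
      _ ≤ (2 * C * (2 ^ P * K ^ P)) ^ 2 * w α P ^ 2 := by
          gcongr
          refine le_self_pow₀ ?_ (by norm_num)
          have : 1 ≤ 2 ^ P * K ^ P := one_le_mul_of_one_le_of_one_le h2P hKP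
          nlinarith
      _ = _ := by rw [mul_pow 2 K]; ring
  refine ⟨φ.smooth _, Cs * (2 * C * (2 * K) ^ 6 * L ^ 6 * w α 6), by positivity,
    κ * (2 * K) * L ^ 2, by positivity, fun b a x => ?_⟩
  change _ ≤ _ * _ * w α b * w α a
  have hwa := w_pos α a
  have hwb := w_pos α b
  set P := 6 + a + b with hP
  have hwP := w_pos α P
  set T := 2 * C * (2 * K) ^ P * w α P with hT
  have hT0 : 0 < T := by positivity
  have s1 : ∀ n : ℕ, ((n + (1 + a + b) : ℕ) : ℝ) ^ (6 + a + b) * ‖cf E n φ‖ ^ 2 ≤ T ^ 2 := by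
    intro n
    refine le_trans ?_ (main P n)
    gcongr
    omega
  have s2 := step_iter hκ' (opB_D hE) b φ (1 + a) (6 + a) _ s1
  have s3 := step_iter hκ' (opB_X hE) a _ 1 6 _ s2
  have s4 := hsup (XS^[a] (DS^[b] φ)) (κ ^ (a + b) * T) (by positivity) (by
    intro n
    have h1 := s3 n
    push_cast at h1
    refine h1.trans ?_
    calc κ ^ a * (κ ^ b * T ^ 2) = κ ^ (a + b) * T ^ 2 := by rw [pow_add]; ring
      _ ≤ (κ ^ (a + b)) ^ 2 * T ^ 2 := mul_le_mul_of_nonneg_right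
          (le_self_pow₀ (one_le_pow₀ hκ) (by norm_num)) (by positivity)
      _ = _ := by ring) x
  rw [XS_pow_apply, DS_iter] at s4
  refine s4.trans ?_
  have w1 : w α P ≤ L ^ (6 + (a + b)) * (w α 6 * (L ^ (a + b) * (w α a * w α b))) := by
    rw [hP, add_assoc]
    refine (w_add hα0 6 (a + b)).trans ?_
    gcongr
    exact w_add hα0 a b
  calc Cs * (κ ^ (a + b) * T) ≤ Cs * (κ ^ (a + b) * (2 * C * (2 * K) ^ P *
        (L ^ (6 + (a + b)) * (w α 6 * (L ^ (a + b) * (w α a * w α b)))))) := by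
        rw [hT]; gcongr
    _ = _ := by
        rw [hP, add_assoc 6, pow_add (2 * K), pow_add L 6, add_comm b a, mul_pow (κ * (2 * K)), mul_pow κ, ← pow_mul L 2,
          mul_comm 2 (a + b), pow_mul L]
        ring

/-! ### Coefficient bounds and the associated function -/

lemma t_eq (α y : ℝ) (m : ℕ) : y ^ m * (m : ℝ) ^ (-(α * (m : ℝ))) = y ^ m / w α m := by
  rw [Real.rpow_neg (by positivity), ← div_eq_mul_inv]; rfl

lemma Omega_bdd {α : ℝ} (hα : 0 < α) {y : ℝ} (hy : 0 ≤ y) :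
    BddAbove (Set.range fun m : ℕ => Real.log (y ^ m * (m : ℝ) ^ (-(α * (m : ℝ))))) := by
  obtain ⟨z, hz0, hyz⟩ : ∃ z : ℝ, 0 ≤ z ∧ y = z ^ α := ⟨y ^ (1 / α), by positivity, by
    rw [← Real.rpow_mul hy, one_div_mul_cancel hα.ne', Real.rpow_one]⟩
  refine ⟨α * z, ?_⟩
  rintro _ ⟨m, rfl⟩
  simp only
  rw [t_eq]
  have hw := w_pos α m
  rcases hy.eq_or_lt with h0 | h0
  · rw [← h0]
    rcases Nat.eq_zero_or_pos m with hm | hm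
    · subst hm; simp [w_zero]; positivity
    · rw [zero_pow hm.ne']; simp; positivity
  · rw [Real.log_le_iff_le_exp (by positivity), div_le_iff₀ hw, hyz, w_self,
      ← mul_comm z α, Real.exp_mul, ← Real.rpow_natCast, ← Real.rpow_natCast, ← Real.rpow_mul hz0,
      ← Real.rpow_mul (by positivity), mul_comm α, Real.rpow_mul hz0, Real.rpow_mul (by positivity),
      ← Real.mul_rpow (by positivity) (by positivity), Real.rpow_natCast, Real.rpow_natCast]
    refine Real.rpow_le_rpow (by positivity) ?_ hα.le
    have h1 := Real.pow_div_factorial_le_exp z hz0 m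
    rw [div_le_iff₀ (by positivity)] at h1
    refine h1.trans ?_
    gcongr
    exact_mod_cast Nat.factorial_le_pow m

lemma summable_of_coef {α E : ℝ} (hα : 1 / 2 ≤ α) (φ : 𝓢(ℝ, ℂ)) (hc : CoefBound α E φ) :
    ∃ κ > (0 : ℝ), Summable (fun n : ℕ => ‖cf E n φ‖ ^ 2 *
      Real.exp (2 * Omega α (κ * Real.sqrt (n : ℝ)))) := by
  have hα0 : 0 ≤ α := by linarith
  obtain ⟨C, hC, K, hK, h⟩ := hc
  set L := Real.exp α with hL
  have hL0 : 0 < L := Real.exp_pos _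
  have hw2 := w_pos α 2
  set κ := 1 / (Real.sqrt K * L) with hκ
  have hκ0 : 0 < κ := by positivity
  set D := C * K ^ 2 * L ^ 4 * w α 2 ^ 2 with hD
  have hD0 : 0 < D := by positivity
  refine ⟨κ, hκ0, ?_⟩
  rw [← summable_nat_add_iff 1]
  have hs : Summable (fun n : ℕ => D * (1 / ((n + 1 : ℕ) : ℝ) ^ 2)) := by
    refine Summable.mul_left _ ?_
    exact (summable_nat_add_iff 1).2 (Real.summable_one_div_nat_pow.2 (by norm_num : 1 < 2))
  refine Summable.of_nonneg_of_le (fun n => by positivity) (fun n => ?_) hs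
  set N := n + 1 with hN
  have hN0 : (0 : ℝ) < (N : ℝ) := by positivity
  rcases (norm_nonneg (cf E N φ)).eq_or_lt with h0 | h0
  · rw [← h0]; simp; positivity
  · set c := ‖cf E N φ‖ with hcdef
    have key : Omega α (κ * Real.sqrt (N : ℝ)) ≤ Real.log (D / (N ^ 2 * c ^ 2)) / 2 := by
      refine ciSup_le fun m => ?_
      rw [t_eq]
      have hwm := w_pos α m
      have hs0 : 0 < Real.sqrt (N : ℝ) := Real.sqrt_pos.2 hN0
      rw [le_div_iff₀ (by norm_num), mul_comm, ← Nat.cast_ofNat, ← Real.log_pow]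
      refine Real.log_le_log (by positivity) ?_
      rw [div_pow, ← pow_mul, mul_comm m 2, pow_mul, mul_pow, Real.sq_sqrt hN0.le, hκ, div_pow, mul_pow (√K),
        Real.sq_sqrt hK.le, div_le_div_iff₀ (by positivity) (by positivity), one_pow]
      have h1 := h (m + 2) N
      have h2 : w α (m + 2) ^ 2 ≤ (L ^ (m + 2) * (w α m * w α 2)) ^ 2 := by
        have := w_pos α (m + 2)
        gcongr
        exact w_add hα0 m 2
      have h3 : (N : ℝ) ^ (m + 2) * c ^ 2 ≤ C * K ^ (m + 2) * (L ^ (m + 2) * (w α m * w α 2)) ^ 2 :=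
        h1.trans (by gcongr)
      calc (1 / (K * L ^ 2) * N) ^ m * (N ^ 2 * c ^ 2)
          = (1 / (K * L ^ 2)) ^ m * ((N : ℝ) ^ (m + 2) * c ^ 2) := by rw [mul_pow]; ring
        _ ≤ (1 / (K * L ^ 2)) ^ m * (C * K ^ (m + 2) * (L ^ (m + 2) * (w α m * w α 2)) ^ 2) := by gcongr
        _ = D * w α m ^ 2 := by
            rw [hD, one_div, inv_pow, mul_pow K, ← pow_mul L 2]
            field_simp
            ring
    calc c ^ 2 * Real.exp (2 * Omega α (κ * Real.sqrt (N : ℝ)))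
        ≤ c ^ 2 * Real.exp (Real.log (D / (N ^ 2 * c ^ 2))) := by gcongr; linarith
      _ = D * (1 / (N : ℝ) ^ 2) := by
          rw [Real.exp_log (by positivity)]; field_simp

lemma coef_of_summable {α E κ : ℝ} (hα : 1 / 2 ≤ α) (hκ : 0 < κ) (φ : 𝓢(ℝ, ℂ))
    (h : Summable (fun n : ℕ => ‖cf E n φ‖ ^ 2 *
      Real.exp (2 * Omega α (κ * Real.sqrt (n : ℝ))))) : CoefBound α E φ := by
  set S := ∑' n : ℕ, ‖cf E n φ‖ ^ 2 * Real.exp (2 * Omega α (κ * Real.sqrt (n : ℝ))) with hS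
  have hS0 : 0 ≤ S := tsum_nonneg fun n => by positivity
  refine ⟨S + 1, by positivity, (κ ^ 2)⁻¹, by positivity, fun m n => ?_⟩
  have hwm := w_pos α m
  have h1 : ‖cf E n φ‖ ^ 2 * Real.exp (2 * Omega α (κ * Real.sqrt (n : ℝ))) ≤ S :=
    h.le_tsum n (fun j _ => by positivity)
  have hy : 0 ≤ κ * Real.sqrt (n : ℝ) := by positivity
  have h2 : (κ * Real.sqrt (n : ℝ)) ^ m / w α m ≤ Real.exp (Omega α (κ * Real.sqrt (n : ℝ))) := by
    have hb := le_ciSup (Omega_bdd (by linarith : 0 < α) hy) m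
    rw [t_eq] at hb
    rcases (show 0 ≤ (κ * Real.sqrt (n : ℝ)) ^ m / w α m by positivity).eq_or_lt with h0 | h0
    · rw [← h0]; exact (Real.exp_pos _).le
    · exact (Real.log_le_iff_le_exp h0).1 hb
  rw [div_le_iff₀ hwm] at h2
  have h3 : ((κ ^ 2) * n) ^ m ≤ Real.exp (2 * Omega α (κ * Real.sqrt (n : ℝ))) * w α m ^ 2 := by
    calc ((κ ^ 2) * n) ^ m = ((κ * Real.sqrt (n : ℝ)) ^ m) ^ 2 := by
          rw [← pow_mul, mul_comm m 2, pow_mul, mul_pow κ, Real.sq_sqrt (by positivity)]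
      _ ≤ (Real.exp (Omega α (κ * Real.sqrt (n : ℝ))) * w α m) ^ 2 := by gcongr
      _ = _ := by rw [mul_pow, ← Real.exp_nat_mul]; push_cast; rfl
  calc (n : ℝ) ^ m * ‖cf E n φ‖ ^ 2 = ((κ ^ 2)⁻¹) ^ m * (((κ ^ 2) * n) ^ m * ‖cf E n φ‖ ^ 2) := by
        rw [mul_pow (κ ^ 2), inv_pow]; field_simp
    _ ≤ ((κ ^ 2)⁻¹) ^ m * ((Real.exp (2 * Omega α (κ * Real.sqrt (n : ℝ))) * w α m ^ 2) * ‖cf E n φ‖ ^ 2) := by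
        gcongr
    _ = (‖cf E n φ‖ ^ 2 * Real.exp (2 * Omega α (κ * Real.sqrt (n : ℝ)))) * ((κ ^ 2)⁻¹) ^ m * w α m ^ 2 := by ring
    _ ≤ (S + 1) * ((κ ^ 2)⁻¹) ^ m * w α m ^ 2 := by
        gcongr; linarith

end GS

/-- a Schwartz function belongs to `S^α_α(ℝ)` iff its Hermite
coefficients have ultrafast falloff:
`∃ κ > 0, Σ_n |a_n|² e^{2Ω(κ√n)} < ∞`. -/
theorem gelfandShilov_iff_ultrafast (α E' : ℝ) (hα : 1 / 2 ≤ α) (hE' : 0 < E')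
    (φ : SchwartzMap ℝ ℂ) :
    GelfandShilov α (fun q => φ q) ↔
      ∃ κ > (0 : ℝ), Summable (fun n : ℕ =>
        ‖∫ q : ℝ, ((hermiteFn E' n q : ℝ) : ℂ) * φ q‖ ^ 2 *
          Real.exp (2 * Omega α (κ * Real.sqrt (n : ℝ)))) := by
  constructor
  · intro h
    exact GS.summable_of_coef hα φ (GS.coef_of_GS hα hE' φ h)
  · rintro ⟨κ, hκ, h⟩
    exact GS.GS_of_coef hα hE' φ (GS.coef_of_summable hα hκ φ h)
end
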